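/- arXiv:1809.04888 — 4 statements merged into one kernel-verified Lean document; each statement's English description precedes it below -/
import Mathlib

section
/- Let A be a subset of the prime numbers whose natural density in the primes exists and equals θ ∈ (0,1]. Then the limit as N → ∞ of the ratio (∑_{n ≥ 1 : every prime factor of n is ≤ N and lies in A} 1/n) / (∑_{squarefree n with 1 ≤ n ≤ N : every prime factor of n lies in A} 1/φ(n)) equals e^{γθ} · Γ(θ+1). -/
open Filter
open scoped Classical

/-- The sum of `1/n` over positive integers `n` all of whose prime factors lie in the
set described by the predicate `P`. -/
noncomputable def harmSum (P : ℕ → Prop) : ℝ :=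
  ∑' n : {n : ℕ // 0 < n ∧ ∀ p : ℕ, p.Prime → p ∣ n → P p}, (1 : ℝ) / ((n : ℕ) : ℝ)

/-!
Put `s = 1 / log N`. Up to the cutoff `n ≤ N`, that is `s * log n ≤ 1`, the denominator is the
series `∑ n ^ (-s) / φ n` over the squarefree `n` with prime factors in `A`, which is an Euler
product, while the numerator is the Mertens product `∏ (1 - 1 / p)⁻¹` over `p ∈ A`, `p ≤ N`.

Karamata's Tauberian argument removes the cutoff. Give the point `n ^ (-s)` the mass
`n ^ (-s) / φ n`, divided by the Mertens product. The `k`-th moment of this measure on `[0, 1]` is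
the Euler product at `(k + 1) * s` divided by the Mertens product. The logarithm of this quotient
is, up to `o(1)`, the sum of `(p ^ (-(k + 1) * s) - 1_{p ≤ N}) / p` over `p ∈ A`, which by the same
argument tends to `θ` times a universal constant. Running it with the positive integers in place of
the `log p` identifies the constant as `-(γ + log (k + 1))`, by `H_N - log N → γ`. So the moments
tend to `e ^ (-γ θ) * (k + 1) ^ (-θ)`, which are those of a multiple of the law of `e ^ (-u)` for
`u` of Gamma law of shape `θ`, and integrating `1 / x` over `x ≥ 1 / e` gives
`e ^ (-γ θ) / Γ (θ + 1)`.

The density of `A` enters only through `s * ∑ log p / p ^ (1 + s) → θ` over `p ∈ A`. This follows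
from the natural density by partial summation and the pole of `ζ` at `1`; the prime number theorem
is not needed.
-/

section

open MeasureTheory Topology Set

section MethodOfMoments

theorem integrable_of_continuousOn_Icc {μ : Measure ℝ} [IsFiniteMeasure μ] {a b : ℝ}
    (hμ : ∀ᵐ x ∂μ, x ∈ Icc a b) {f : ℝ → ℝ} (hf : ContinuousOn f (Icc a b)) :
    Integrable f μ := by
  simpa only [IntegrableOn, Measure.restrict_eq_self_of_ae_mem hμ] using
    hf.integrableOn_compact (μ := μ) isCompact_Icc

theorem abs_integral_sub_integral_le {μ : Measure ℝ} [IsFiniteMeasure μ] {a b : ℝ}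
    (hμ : ∀ᵐ x ∂μ, x ∈ Icc a b) {f g : ℝ → ℝ} (hf : ContinuousOn f (Icc a b))
    (hg : ContinuousOn g (Icc a b)) {ε : ℝ} (h : ∀ x ∈ Icc a b, |f x - g x| ≤ ε) :
    |∫ x, f x ∂μ - ∫ x, g x ∂μ| ≤ ε * μ.real univ := by
  rw [← integral_sub (integrable_of_continuousOn_Icc hμ hf)
    (integrable_of_continuousOn_Icc hμ hg)]
  exact norm_integral_le_of_norm_le_const (f := fun x => f x - g x) (hμ.mono h)

variable {α : Type*} {l : Filter α} {μ : α → Measure ℝ} {ν : Measure ℝ} [IsFiniteMeasure ν]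
  {a b : ℝ}

theorem tendsto_integral_polynomial_of_tendsto_moments
    (hμ : ∀ᶠ i in l, IsFiniteMeasure (μ i) ∧ ∀ᵐ x ∂μ i, x ∈ Icc a b)
    (hν : ∀ᵐ x ∂ν, x ∈ Icc a b)
    (h : ∀ k : ℕ, Tendsto (fun i => ∫ x, x ^ k ∂μ i) l (𝓝 (∫ x, x ^ k ∂ν)))
    (p : Polynomial ℝ) :
    Tendsto (fun i => ∫ x, p.eval x ∂μ i) l (𝓝 (∫ x, p.eval x ∂ν)) := by
  have integral_eval {m : Measure ℝ} [IsFiniteMeasure m] (hm : ∀ᵐ x ∂m, x ∈ Icc a b) :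
      ∫ x, p.eval x ∂m = ∑ k ∈ Finset.range (p.natDegree + 1), p.coeff k * ∫ x, x ^ k ∂m := by
    simp only [Polynomial.eval_eq_sum_range, ← integral_const_mul]
    exact integral_finsetSum _ fun k _ => integrable_of_continuousOn_Icc hm (by fun_prop)
  rw [integral_eval hν]
  refine (tendsto_finsetSum _ fun k _ => (h k).const_mul (p.coeff k)).congr' ?_
  filter_upwards [hμ] with i ⟨_, hi⟩
  exact (integral_eval hi).symm

theorem tendsto_integral_of_tendsto_moments
    (hμ : ∀ᶠ i in l, IsFiniteMeasure (μ i) ∧ ∀ᵐ x ∂μ i, x ∈ Icc a b)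
    (hν : ∀ᵐ x ∂ν, x ∈ Icc a b)
    (h : ∀ k : ℕ, Tendsto (fun i => ∫ x, x ^ k ∂μ i) l (𝓝 (∫ x, x ^ k ∂ν)))
    {f : ℝ → ℝ} (hf : ContinuousOn f (Icc a b)) :
    Tendsto (fun i => ∫ x, f x ∂μ i) l (𝓝 (∫ x, f x ∂ν)) := by
  have mass : Tendsto (fun i => (μ i).real univ) l (𝓝 (ν.real univ)) := by
    simpa [measureReal_def] using h 0
  refine Metric.tendsto_nhds.2 fun ε hε => ?_
  set R : ℝ := ν.real univ + 1
  have hR : 0 < R := by positivity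
  obtain ⟨p, hp⟩ := exists_polynomial_near_of_continuousOn a b f hf (ε / (3 * R)) (by positivity)
  have near {m : Measure ℝ} [IsFiniteMeasure m] (hm : ∀ᵐ x ∂m, x ∈ Icc a b)
      (hmR : m.real univ < R) : |∫ x, p.eval x ∂m - ∫ x, f x ∂m| ≤ ε / 3 :=
    calc _ ≤ ε / (3 * R) * m.real univ :=
          abs_integral_sub_integral_le hm p.continuousOn hf fun x hx => (hp x hx).le
      _ ≤ ε / (3 * R) * R := by gcongr
      _ = ε / 3 := by field_simp
  filter_upwards [hμ, mass.eventually_lt_const (lt_add_one _), Metric.tendsto_nhds.1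
    (tendsto_integral_polynomial_of_tendsto_moments hμ hν h p) (ε / 3) (by positivity)]
    with i ⟨_, hi⟩ hiR hip
  have h₁ := abs_le.1 (near hi hiR)
  have h₂ := abs_le.1 (near hν (lt_add_one _))
  rw [Real.dist_eq, abs_lt] at hip ⊢
  constructor <;> linarith

end MethodOfMoments

section Portmanteau

open scoped BoundedContinuousFunction

variable {Ω α : Type*} [MeasurableSpace Ω] [PseudoEMetricSpace Ω] [OpensMeasurableSpace Ω]
  {l : Filter α} {μ : α → Measure Ω} {ν : Measure Ω} [IsFiniteMeasure ν]

theorem eventually_measureReal_lt_of_isClosed (hμ : ∀ᶠ i in l, IsFiniteMeasure (μ i))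
    (h : ∀ f : Ω →ᵇ ℝ, Tendsto (fun i => ∫ x, f x ∂μ i) l (𝓝 (∫ x, f x ∂ν)))
    {F : Set Ω} (hF : IsClosed F) {r : ℝ} (hr : ν.real F < r) :
    ∀ᶠ i in l, (μ i).real F < r := by
  let δ : ℕ → ℝ := fun n => 1 / (n + 1)
  have hδ (n) : 0 < δ n := Nat.one_div_pos_of_nat
  obtain ⟨n, hn⟩ := ((tendsto_integral_thickenedIndicator_of_isClosed ν hF hδ
    tendsto_one_div_add_atTop_nhds_zero_nat).eventually_lt_const hr).exists
  let φ : Ω →ᵇ ℝ := (thickenedIndicator (hδ n) F).comp _ NNReal.isometry_coe.lipschitz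
  filter_upwards [hμ, (h φ).eventually_lt_const hn] with i _ hi
  refine lt_of_le_of_lt ?_ hi
  rw [← integral_indicator_one hF.measurableSet]
  refine integral_mono ((integrable_const _).indicator hF.measurableSet)
    (integrable_thickenedIndicator F (hδ n)) fun x => ?_
  refine indicator_apply_le' (fun hx => ?_) fun _ => NNReal.coe_nonneg _
  exact_mod_cast (thickenedIndicator_one (hδ n) F hx).ge

theorem tendsto_measureReal_of_null_frontier (hμ : ∀ᶠ i in l, IsFiniteMeasure (μ i))
    (h : ∀ f : Ω →ᵇ ℝ, Tendsto (fun i => ∫ x, f x ∂μ i) l (𝓝 (∫ x, f x ∂ν)))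
    {E : Set Ω} (hE : ν (frontier E) = 0) :
    Tendsto (fun i => (μ i).real E) l (𝓝 (ν.real E)) := by
  have mass : Tendsto (fun i => (μ i).real univ) l (𝓝 (ν.real univ)) := by
    simpa using h (.const Ω 1)
  have closure_eq : ν.real (closure E) = ν.real E := by
    rw [measureReal_def, measureReal_def, measure_closure_of_null_frontier hE]
  have interior_eq : ν.real (interior E) = ν.real E := by
    rw [measureReal_def, measureReal_def, measure_interior_of_null_frontier hE]
  have compl_interior_eq (m : Measure Ω) [IsFiniteMeasure m] :
      m.real (interior E)ᶜ = m.real univ - m.real (interior E) :=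
    measureReal_compl isOpen_interior.measurableSet
  refine tendsto_order.2 ⟨fun r hr => ?_, fun r hr => ?_⟩
  · obtain ⟨ε, hε, hεr⟩ : ∃ ε > 0, r + ε < ν.real E :=
      ⟨(ν.real E - r) / 2, by linarith, by linarith⟩
    filter_upwards [hμ, mass.eventually_const_lt (sub_lt_self _ hε),
      eventually_measureReal_lt_of_isClosed hμ h isOpen_interior.isClosed_compl
        (r := ν.real univ - ε - r) (by rw [compl_interior_eq, interior_eq]; linarith)]
      with i _ hi hi'
    rw [compl_interior_eq] at hi'
    linarith [measureReal_mono (μ := μ i) (interior_subset (s := E))]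
  · filter_upwards [hμ, eventually_measureReal_lt_of_isClosed hμ h isClosed_closure
      (closure_eq.trans_lt hr)] with i _ hi
    exact (measureReal_mono subset_closure).trans_lt hi

end Portmanteau

section PiecewiseContinuous

theorem ite_le_eq_max_add_min (f g : ℝ → ℝ) (c x : ℝ) :
    (if c ≤ x then f x else g x) =
      f (max x c) + g (min x c) - f c + (f c - g c) * (Ici c).indicator 1 x := by
  split_ifs with h
  · simp [h]
  · simp [h, (not_le.1 h).le]

theorem integral_ite_le {m : Measure ℝ} [IsFiniteMeasure m] {a b c : ℝ}
    (hm : ∀ᵐ x ∂m, x ∈ Icc a b) {f g : ℝ → ℝ}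
    (hF : ContinuousOn (fun x => f (max x c) + g (min x c) - f c) (Icc a b)) :
    ∫ x, (if c ≤ x then f x else g x) ∂m =
      ∫ x, (f (max x c) + g (min x c) - f c) ∂m + (f c - g c) * m.real (Ici c) := by
  have indicator : Integrable ((Ici c).indicator (1 : ℝ → ℝ)) m :=
    (integrable_const 1).indicator measurableSet_Ici
  simp only [ite_le_eq_max_add_min f g c]
  rw [integral_add (integrable_of_continuousOn_Icc hm hF) (indicator.const_mul _),
    integral_const_mul,
    integral_indicator_one measurableSet_Ici]

/-- The two continuous branches are glued at `c` up to a multiple of the indicator of `[c, ∞)`,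
whose integrals converge by the portmanteau theorem. -/
theorem tendsto_integral_ite_le_of_tendsto_moments {α : Type*} {l : Filter α}
    {μ : α → Measure ℝ} {ν : Measure ℝ} [IsFiniteMeasure ν] {a b c : ℝ} (hc : c ∈ Icc a b)
    (hμ : ∀ᶠ i in l, IsFiniteMeasure (μ i) ∧ ∀ᵐ x ∂μ i, x ∈ Icc a b)
    (hν : ∀ᵐ x ∂ν, x ∈ Icc a b) (hνc : ν {c} = 0)
    (h : ∀ k : ℕ, Tendsto (fun i => ∫ x, x ^ k ∂μ i) l (𝓝 (∫ x, x ^ k ∂ν)))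
    {f g : ℝ → ℝ} (hf : ContinuousOn f (Icc c b)) (hg : ContinuousOn g (Icc a c)) :
    Tendsto (fun i => ∫ x, (if c ≤ x then f x else g x) ∂μ i) l
      (𝓝 (∫ x, (if c ≤ x then f x else g x) ∂ν)) := by
  have glued : ContinuousOn (fun x => f (max x c) + g (min x c) - f c) (Icc a b) := by
    refine ((hf.comp (by fun_prop) fun x hx => ?_).add
      (hg.comp (by fun_prop) fun x hx => ?_)).sub continuousOn_const
    · exact ⟨le_max_right _ _, max_le hx.2 hc.2⟩
    · exact ⟨le_min hx.1 hc.1, min_le_right _ _⟩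
  have upper : Tendsto (fun i => (μ i).real (Ici c)) l (𝓝 (ν.real (Ici c))) :=
    tendsto_measureReal_of_null_frontier (hμ.mono fun i hi => hi.1)
      (fun φ => tendsto_integral_of_tendsto_moments hμ hν h φ.continuous.continuousOn)
      (by rwa [frontier_Ici])
  rw [integral_ite_le hν glued]
  refine ((tendsto_integral_of_tendsto_moments hμ hν h glued).add
    (upper.const_mul (f c - g c))).congr' ?_
  filter_upwards [hμ] with i ⟨_, hi⟩
  exact (integral_ite_le hi glued).symm

end PiecewiseContinuous

section PointMasses

/-- The measure `∑ W i δ_{y i}`; a negative weight counts as `0`. -/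
noncomputable def pointMasses {ι : Type*} (W y : ι → ℝ) : Measure ℝ :=
  Measure.sum fun i => ENNReal.ofReal (W i) • Measure.dirac (y i)

variable {ι : Type*} {W : ι → ℝ} (y : ι → ℝ)

theorem isFiniteMeasure_pointMasses (hW : ∀ i, 0 ≤ W i) (hs : Summable W) :
    IsFiniteMeasure (pointMasses W y) := by
  refine ⟨?_⟩
  simp only [pointMasses, Measure.sum_apply _ MeasurableSet.univ, Measure.smul_apply,
    measure_univ, smul_eq_mul, mul_one]
  exact (ENNReal.ofReal_tsum_of_nonneg hW hs).symm ▸ ENNReal.ofReal_lt_top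

variable [Countable ι]

theorem ae_pointMasses {y : ι → ℝ} {p : ℝ → Prop} (hp : ∀ i, p (y i)) :
    ∀ᵐ x ∂pointMasses W y, p x :=
  Measure.ae_sum_iff.2 fun i => Measure.ae_smul_measure (by simpa [ae_dirac_eq] using hp i) _

theorem integral_pointMasses (hW : ∀ i, 0 ≤ W i) (f : ℝ → ℝ) :
    ∫ x, f x ∂pointMasses W y = ∑' i, W i * f (y i) := by
  rw [pointMasses, integral_sum_dirac fun i => ENNReal.ofReal_ne_top]
  exact tsum_congr fun i => by rw [ENNReal.toReal_ofReal (hW i), smul_eq_mul]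

end PointMasses

section ExpNegGamma

open ProbabilityTheory

/-- The law of `exp (-u)` for `u` distributed according to the Gamma law of shape `θ`. Mathlib's
`gammaMeasure` needs a positive shape; for `θ = 0` the limiting law is the point mass at `1`. -/
noncomputable def expNegGamma (θ : ℝ) : Measure ℝ :=
  if θ = 0 then Measure.dirac 1 else (gammaMeasure θ 1).map fun u => Real.exp (-u)

theorem expNegGamma_zero : expNegGamma 0 = Measure.dirac 1 := if_pos rfl

theorem expNegGamma_of_pos {θ : ℝ} (hθ : 0 < θ) :
    expNegGamma θ = (gammaMeasure θ 1).map fun u => Real.exp (-u) := if_neg hθ.ne'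

theorem integral_gammaMeasure_one {θ : ℝ} (hθ : 0 < θ) (f : ℝ → ℝ) :
    ∫ u, f u ∂gammaMeasure θ 1 =
      (Real.Gamma θ)⁻¹ * ∫ u in Ioi 0, u ^ (θ - 1) * Real.exp (-u) * f u := by
  rw [gammaMeasure, integral_withDensity_eq_integral_toReal_smul
    (by unfold gammaPDF; fun_prop) (ae_of_all _ fun x => by simp [gammaPDF]),
    ← integral_const_mul, ← integral_Ici_eq_integral_Ioi, ← integral_indicator measurableSet_Ici]
  refine integral_congr_ae (ae_of_all _ fun u => ?_)
  simp only [gammaPDF]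
  rw [ENNReal.toReal_ofReal (gammaPDFReal_nonneg hθ one_pos u)]
  simp only [gammaPDFReal, smul_eq_mul, indicator, mem_Ici, Real.one_rpow, one_mul]
  split_ifs <;> ring

theorem integral_expNegGamma {θ : ℝ} (hθ : 0 < θ) {f : ℝ → ℝ} (hf : Measurable f) :
    ∫ x, f x ∂expNegGamma θ =
      (Real.Gamma θ)⁻¹ * ∫ u in Ioi 0, u ^ (θ - 1) * Real.exp (-u) * f (Real.exp (-u)) := by
  rw [expNegGamma_of_pos hθ, integral_map (by fun_prop) hf.aestronglyMeasurable,
    integral_gammaMeasure_one hθ]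

variable {θ : ℝ} (hθ : 0 ≤ θ)

include hθ in
theorem isProbabilityMeasure_expNegGamma : IsProbabilityMeasure (expNegGamma θ) := by
  rcases hθ.eq_or_lt with rfl | hθ
  · rw [expNegGamma_zero]
    infer_instance
  · rw [expNegGamma_of_pos hθ]
    have := isProbabilityMeasure_gammaMeasure hθ one_pos
    exact Measure.isProbabilityMeasure_map (by fun_prop)

include hθ in
theorem ae_expNegGamma_mem_Icc : ∀ᵐ x ∂expNegGamma θ, x ∈ Icc (0 : ℝ) 1 := by
  rcases hθ.eq_or_lt with rfl | hθ
  · simp [expNegGamma_zero, ae_dirac_eq]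
  rw [expNegGamma_of_pos hθ,
    ae_map_iff (p := (· ∈ Icc (0 : ℝ) 1)) (by fun_prop) measurableSet_Icc, gammaMeasure,
    ae_withDensity_iff (by unfold gammaPDF; fun_prop)]
  refine ae_of_all _ fun u hu => ⟨(Real.exp_pos _).le, ?_⟩
  contrapose! hu
  exact gammaPDF_of_neg (by simpa using hu)

include hθ in
theorem expNegGamma_singleton {c : ℝ} (hc : c ≠ 1) : expNegGamma θ {c} = 0 := by
  rcases hθ.eq_or_lt with rfl | hθ
  · simp [expNegGamma_zero, hc.symm]
  rw [expNegGamma_of_pos hθ, Measure.map_apply (by fun_prop) (measurableSet_singleton c)]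
  refine withDensity_absolutelyContinuous _ _ (Subsingleton.measure_zero (fun u hu v hv => ?_) _)
  simpa using Real.exp_injective (hu.trans hv.symm)

include hθ in
theorem integral_pow_expNegGamma (k : ℕ) :
    ∫ x, x ^ k ∂expNegGamma θ = ((k : ℝ) + 1) ^ (-θ) := by
  rcases hθ.eq_or_lt with rfl | hθ
  · simp [expNegGamma_zero]
  have exp_mul_pow (u : ℝ) : u ^ (θ - 1) * Real.exp (-u) * Real.exp (-u) ^ k =
      u ^ (θ - 1) * Real.exp (-((k + 1) * u)) := by
    rw [← Real.exp_nat_mul, mul_assoc, ← Real.exp_add]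
    ring_nf
  rw [integral_expNegGamma hθ (by fun_prop)]
  simp only [exp_mul_pow]
  rw [Real.integral_rpow_mul_exp_neg_mul_Ioi hθ (by positivity), Real.rpow_neg (by positivity),
    one_div, Real.inv_rpow (by positivity)]
  field_simp [(Real.Gamma_pos_of_pos hθ).ne']

include hθ in
theorem integral_inv_expNegGamma :
    ∫ x, (if Real.exp (-1) ≤ x then x⁻¹ else 0) ∂expNegGamma θ = (Real.Gamma (θ + 1))⁻¹ := by
  rcases hθ.eq_or_lt with rfl | hθ
  · simp [expNegGamma_zero]
  have integrand (u : ℝ) : u ^ (θ - 1) * Real.exp (-u) *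
      (if Real.exp (-1) ≤ Real.exp (-u) then (Real.exp (-u))⁻¹ else 0) =
      (Iic 1).indicator (fun u : ℝ => u ^ (θ - 1)) u := by
    by_cases h : u ≤ 1 <;> simp [h]
  rw [integral_expNegGamma hθ
    (Measurable.ite measurableSet_Ici measurable_inv measurable_const)]
  simp only [integrand]
  rw [setIntegral_indicator measurableSet_Iic, Ioi_inter_Iic,
    ← intervalIntegral.integral_of_le zero_le_one, integral_rpow (Or.inl (by linarith)),
    Real.Gamma_add_one hθ.ne', sub_add_cancel, Real.one_rpow, Real.zero_rpow hθ.ne', sub_zero,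
    one_div, mul_inv, mul_comm]

end ExpNegGamma

/-- Karamata's Tauberian argument: exponential moments are power moments of `exp (-u)`. -/
theorem tendsto_tsum_ite_le_of_tendsto_exp_moments {α ι : Type*} [Countable ι] {l : Filter α}
    {W u : α → ι → ℝ} (hW : ∀ᶠ a in l, Summable (W a) ∧ ∀ i, 0 ≤ W a i ∧ 0 ≤ u a i)
    {C θ : ℝ} (hC : 0 ≤ C) (hθ : 0 ≤ θ)
    (hm : ∀ k : ℕ, Tendsto (fun a => ∑' i, W a i * Real.exp (-(k * u a i))) l
      (𝓝 (C * ((k : ℝ) + 1) ^ (-θ))))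
    {f g : ℝ → ℝ} (hf : ContinuousOn f (Icc (Real.exp (-1)) 1))
    (hg : ContinuousOn g (Icc 0 (Real.exp (-1)))) :
    Tendsto (fun a => ∑' i, W a i *
        (if u a i ≤ 1 then f (Real.exp (-u a i)) else g (Real.exp (-u a i)))) l
      (𝓝 (C * ∫ x, (if Real.exp (-1) ≤ x then f x else g x) ∂expNegGamma θ)) := by
  have := isProbabilityMeasure_expNegGamma hθ
  have exp_mem {t : ℝ} (ht : 0 ≤ t) : Real.exp (-t) ∈ Icc (0 : ℝ) 1 :=
    ⟨(Real.exp_pos _).le, by simpa using ht⟩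
  have exp_ne_one : Real.exp (-1) ≠ 1 := by simp
  let μ (a : α) : Measure ℝ := pointMasses (W a) fun i => Real.exp (-u a i)
  let ν : Measure ℝ := ENNReal.ofReal C • expNegGamma θ
  have : IsFiniteMeasure ν := Measure.smul_finite _ ENNReal.ofReal_ne_top
  have integral_ν (φ : ℝ → ℝ) : ∫ x, φ x ∂ν = C * ∫ x, φ x ∂expNegGamma θ := by
    rw [integral_smul_measure, ENNReal.toReal_ofReal hC, smul_eq_mul]
  rw [← integral_ν]
  refine (tendsto_integral_ite_le_of_tendsto_moments (μ := μ) (exp_mem zero_le_one) ?_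
    (Measure.ae_smul_measure (ae_expNegGamma_mem_Icc hθ) _)
    (by simp [expNegGamma_singleton hθ exp_ne_one]) (fun k => ?_) hf hg).congr' ?_
  · filter_upwards [hW] with a ⟨hs, ha⟩
    exact ⟨isFiniteMeasure_pointMasses _ (fun i => (ha i).1) hs,
      ae_pointMasses fun i => exp_mem (ha i).2⟩
  · rw [integral_ν, integral_pow_expNegGamma hθ]
    refine (hm k).congr' ?_
    filter_upwards [hW] with a ⟨_, ha⟩
    rw [integral_pointMasses _ fun i => (ha i).1]
    simp only [← Real.exp_nat_mul, mul_neg]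
  · filter_upwards [hW] with a ⟨_, ha⟩
    rw [integral_pointMasses _ fun i => (ha i).1]
    simp only [Real.exp_le_exp, neg_le_neg_iff]

section Cutoff

/-- For `u > 0` and `x = exp (-u)`, the product `x * cutoffGap k x` is the difference
`(exp (-(k + 1) u) - 1_{u ≤ 1}) / u` between a smooth and the sharp cutoff at `u = 1`. The junk
value `(log 0)⁻¹ = 0` is the limit at `x = 0`. -/
noncomputable def cutoffGap (k : ℕ) (x : ℝ) : ℝ :=
  if Real.exp (-1) ≤ x then dslope (fun u => Real.exp (-((k + 1) * u))) 0 (-Real.log x) / x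
  else x ^ k * (-Real.log x)⁻¹

theorem continuousOn_cutoffGap_upper (k : ℕ) :
    ContinuousOn (fun x => dslope (fun u => Real.exp (-((k + 1) * u))) 0 (-Real.log x) / x)
      (Icc (Real.exp (-1)) 1) := by
  have ne_zero {x : ℝ} (hx : x ∈ Icc (Real.exp (-1)) 1) : x ≠ 0 :=
    ((Real.exp_pos _).trans_le hx.1).ne'
  have dslope_continuous : Continuous (dslope (fun u => Real.exp (-((k + 1) * u))) 0) :=
    continuousOn_univ.1 <| (continuousOn_dslope univ_mem).2
      ⟨by fun_prop, by fun_prop⟩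
  exact (dslope_continuous.comp_continuousOn
    (Real.continuousOn_log.mono fun x hx => ne_zero hx).neg).div continuousOn_id fun x => ne_zero

theorem continuousOn_cutoffGap_lower (k : ℕ) :
    ContinuousOn (fun x => x ^ k * (-Real.log x)⁻¹) (Icc 0 (Real.exp (-1))) := by
  refine (continuous_pow k).continuousOn.mul fun x hx => ContinuousAt.continuousWithinAt ?_
  have hx1 : x < 1 := hx.2.trans_lt (by simp)
  rcases hx.1.eq_or_lt with rfl | hx0
  · rw [continuousAt_iff_punctured_nhds]
    simpa using Real.tendsto_log_nhdsNE_zero.inv_tendsto_atBot.neg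
  · exact (Real.continuousAt_log hx0.ne').neg.inv₀ (neg_ne_zero.2 (Real.log_neg hx0 hx1).ne)

theorem exp_neg_mul_cutoffGap (k : ℕ) {u : ℝ} (hu : 0 < u) :
    Real.exp (-u) * cutoffGap k (Real.exp (-u)) =
      (Real.exp (-((k + 1) * u)) - if u ≤ 1 then 1 else 0) / u := by
  simp only [cutoffGap, Real.exp_le_exp, neg_le_neg_iff, Real.log_exp, neg_neg]
  split_ifs
  · rw [dslope_of_ne _ hu.ne', slope_def_field, mul_div_cancel₀ _ (Real.exp_pos _).ne']
    simp
  · rw [← mul_assoc, ← pow_succ', ← Real.exp_nat_mul, sub_zero, div_eq_mul_inv]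
    push_cast
    ring_nf

theorem tendsto_mul_nhdsGT_zero {c : ℝ} (hc : 0 < c) :
    Tendsto (fun s : ℝ => c * s) (𝓝[>] 0) (𝓝[>] 0) := by
  refine tendsto_nhdsWithin_iff.2 ⟨?_, ?_⟩
  · simpa using ((continuous_const_mul c).tendsto 0).mono_left nhdsWithin_le_nhds
  · filter_upwards [self_mem_nhdsWithin] with s hs using mul_pos hc hs

theorem nonneg_of_tendsto_abel_mean {ι : Type*} {a v : ι → ℝ} {θ : ℝ} (ha : ∀ i, 0 ≤ a i)
    (h : Tendsto (fun s : ℝ => s * ∑' i, a i * Real.exp (-(s * v i))) (𝓝[>] 0) (𝓝 θ)) :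
    0 ≤ θ := by
  refine ge_of_tendsto h ?_
  filter_upwards [self_mem_nhdsWithin] with s (hs : 0 < s)
  exact mul_nonneg hs.le (tsum_nonneg fun i => mul_nonneg (ha i) (Real.exp_pos _).le)

theorem tendsto_tsum_exp_sub_cutoff_integral {ι : Type*} [Countable ι] {a v : ι → ℝ} {θ : ℝ}
    (ha : ∀ i, 0 ≤ a i) (hv : ∀ i, 0 < v i)
    (hsum : ∀ s : ℝ, 0 < s → Summable fun i => a i * Real.exp (-(s * v i)))
    (h : Tendsto (fun s : ℝ => s * ∑' i, a i * Real.exp (-(s * v i))) (𝓝[>] 0) (𝓝 θ))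
    (k : ℕ) :
    Tendsto (fun s : ℝ => ∑' i, a i / v i *
      (Real.exp (-((k + 1) * (s * v i))) - if s * v i ≤ 1 then 1 else 0)) (𝓝[>] 0)
      (𝓝 (θ * ∫ x, cutoffGap k x ∂expNegGamma 1)) := by
  let W (s : ℝ) (i : ι) : ℝ := s * (a i * Real.exp (-(s * v i)))
  have hW : ∀ᶠ s : ℝ in 𝓝[>] 0, Summable (W s) ∧ ∀ i, 0 ≤ W s i ∧ 0 ≤ s * v i := by
    filter_upwards [self_mem_nhdsWithin] with s (hs : 0 < s)
    refine ⟨(hsum s hs).mul_left s, fun i => ⟨?_, (mul_pos hs (hv i)).le⟩⟩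
    exact mul_nonneg hs.le (mul_nonneg (ha i) (Real.exp_pos _).le)
  have moments (j : ℕ) : Tendsto (fun s : ℝ => ∑' i, W s i * Real.exp (-(j * (s * v i))))
      (𝓝[>] 0) (𝓝 (θ * ((j : ℝ) + 1) ^ (-1 : ℝ))) := by
    refine ((h.comp (tendsto_mul_nhdsGT_zero j.cast_add_one_pos)).mul_const _).congr fun s => ?_
    simp only [Function.comp, W]
    rw [Real.rpow_neg_one, ← tsum_mul_left, ← tsum_mul_right]
    refine tsum_congr fun i => ?_
    rw [show -((j + 1) * s * v i) = -(s * v i) + -(j * (s * v i)) by ring, Real.exp_add]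
    field_simp
  refine (tendsto_tsum_ite_le_of_tendsto_exp_moments hW (nonneg_of_tendsto_abel_mean ha h)
    zero_le_one moments (continuousOn_cutoffGap_upper k)
    (continuousOn_cutoffGap_lower k)).congr' ?_
  filter_upwards [self_mem_nhdsWithin] with s (hs : 0 < s)
  refine tsum_congr fun i => ?_
  have gap := exp_neg_mul_cutoffGap k (mul_pos hs (hv i))
  simp only [cutoffGap, Real.exp_le_exp, neg_le_neg_iff] at gap
  rw [mul_assoc, mul_assoc, gap]
  field_simp [(hv i).ne']

theorem tendsto_exp_sub_one_div : Tendsto (fun x : ℝ => (Real.exp x - 1) / x) (𝓝[≠] 0) (𝓝 1) := by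
  simpa [slope_fun_def_field] using (Real.hasDerivAt_exp 0).tendsto_slope

theorem hasSum_exp_neg_mul_add_one {s : ℝ} (hs : 0 < s) :
    HasSum (fun i : ℕ => Real.exp (-(s * (i + 1)))) (Real.exp s - 1)⁻¹ := by
  have := (hasSum_geometric_of_lt_one (Real.exp_pos (-s)).le (by simpa using hs)).mul_left
    (Real.exp (-s))
  rw [← inv_inv (Real.exp (-s)), ← Real.exp_neg, neg_neg, ← mul_inv, mul_sub, mul_one,
    ← Real.exp_neg, ← Real.exp_add, add_neg_cancel, Real.exp_zero] at this
  refine this.congr_fun fun i => ?_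
  rw [← Real.exp_nat_mul, ← Real.exp_add]
  ring_nf

theorem tendsto_abel_mean_one :
    Tendsto (fun s : ℝ => s * ∑' i : ℕ, 1 * Real.exp (-(s * (i + 1)))) (𝓝[>] 0) (𝓝 1) := by
  have := (tendsto_exp_sub_one_div.mono_left (nhdsGT_le_nhdsNE 0)).inv₀ one_ne_zero
  rw [inv_one] at this
  refine this.congr' ?_
  filter_upwards [self_mem_nhdsWithin] with s (hs : 0 < s)
  simp only [one_mul]
  rw [(hasSum_exp_neg_mul_add_one hs).tsum_eq, inv_div, div_eq_mul_inv]

theorem hasSum_ite_lt_inv_add_one (N : ℕ) :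
    HasSum (fun i : ℕ => if i < N then ((i : ℝ) + 1)⁻¹ else 0) (harmonic N) := by
  have := hasSum_sum_of_ne_finset_zero (L := .unconditional ℕ) (s := Finset.range N)
    (f := fun i : ℕ => if i < N then ((i : ℝ) + 1)⁻¹ else 0) (by simp +contextual)
  convert this using 1
  push_cast [harmonic]
  exact Finset.sum_congr rfl fun i hi => (if_pos (Finset.mem_range.1 hi)).symm

theorem tsum_exp_sub_cutoff_add_one (k : ℕ) {N : ℕ} (hN : 0 < N) :
    ∑' i : ℕ, 1 / ((i : ℝ) + 1) * (Real.exp (-((k + 1) * ((N : ℝ)⁻¹ * (i + 1)))) -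
      if (N : ℝ)⁻¹ * (i + 1) ≤ 1 then 1 else 0) =
      -Real.log (1 - Real.exp (-((k + 1) * (N : ℝ)⁻¹))) - harmonic N := by
  have hN0 : (0 : ℝ) < N := Nat.cast_pos.2 hN
  have exp_lt : |Real.exp (-((k + 1) * (N : ℝ)⁻¹))| < 1 := by
    rw [abs_of_pos (Real.exp_pos _), Real.exp_lt_one_iff, neg_lt_zero]
    positivity
  rw [← ((Real.hasSum_pow_div_log_of_abs_lt_one exp_lt).sub (hasSum_ite_lt_inv_add_one N)).tsum_eq]
  refine tsum_congr fun i => ?_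
  have le_iff : (N : ℝ)⁻¹ * (i + 1) ≤ 1 ↔ i < N := by
    rw [inv_mul_le_iff₀ hN0, mul_one]
    exact_mod_cast Nat.succ_le_iff
  rw [← Real.exp_nat_mul, show ((i + 1 : ℕ) : ℝ) * -((k + 1) * (N : ℝ)⁻¹) =
    -((k + 1) * ((N : ℝ)⁻¹ * (i + 1))) by push_cast; ring]
  simp only [le_iff]
  split_ifs <;> ring

/-- The integral is a universal constant, read off from the weights `1` at the positive integers,
where it is a comparison of `log N` with the harmonic numbers. -/
theorem integral_cutoffGap_expNegGamma_one (k : ℕ) :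
    ∫ x, cutoffGap k x ∂expNegGamma 1 = -(Real.eulerMascheroniConstant + Real.log (k + 1)) := by
  have hk : (0 : ℝ) < k + 1 := k.cast_add_one_pos
  have inv_tendsto : Tendsto (fun N : ℕ => (N : ℝ)⁻¹) atTop (𝓝[>] 0) :=
    tendsto_inv_atTop_nhdsGT_zero.comp tendsto_natCast_atTop_atTop
  have gap := (tendsto_tsum_exp_sub_cutoff_integral (a := fun _ : ℕ => 1)
    (v := fun i : ℕ => (i : ℝ) + 1) (fun _ => zero_le_one) (fun i => i.cast_add_one_pos)
    (fun s hs => by simpa using (hasSum_exp_neg_mul_add_one hs).summable)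
    tendsto_abel_mean_one k).comp inv_tendsto
  rw [one_mul] at gap
  refine tendsto_nhds_unique gap ?_
  have log_tendsto : Tendsto (fun N : ℕ => Real.log
      ((Real.exp (-((k + 1) * (N : ℝ)⁻¹)) - 1) / -((k + 1) * (N : ℝ)⁻¹))) atTop (𝓝 0) := by
    have := (tendsto_neg_nhdsGT.mono_right (nhdsLT_le_nhdsNE _)).comp
      ((tendsto_mul_nhdsGT_zero hk).comp inv_tendsto)
    rw [neg_zero] at this
    exact Real.log_one ▸ (Real.continuousAt_log one_ne_zero).tendsto.comp
      (tendsto_exp_sub_one_div.comp this)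
  have harmonic_tendsto := ((Real.tendsto_harmonic_sub_log.add_const (Real.log (k + 1))).add
    log_tendsto).neg
  rw [add_zero] at harmonic_tendsto
  refine harmonic_tendsto.congr' ?_
  filter_upwards [eventually_gt_atTop 0] with N hN
  have hx : 0 < (k + 1) * (N : ℝ)⁻¹ := by positivity
  have hlt : Real.exp (-((k + 1) * (N : ℝ)⁻¹)) < 1 := by simpa using hx
  rw [Function.comp_apply, tsum_exp_sub_cutoff_add_one k hN, ← neg_div_neg_eq, neg_neg, neg_sub,
    Real.log_div (by linarith) hx.ne', Real.log_mul hk.ne' (by positivity), Real.log_inv]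
  ring

theorem tendsto_tsum_exp_sub_cutoff {ι : Type*} [Countable ι] {a v : ι → ℝ} {θ : ℝ}
    (ha : ∀ i, 0 ≤ a i) (hv : ∀ i, 0 < v i)
    (hsum : ∀ s : ℝ, 0 < s → Summable fun i => a i * Real.exp (-(s * v i)))
    (h : Tendsto (fun s : ℝ => s * ∑' i, a i * Real.exp (-(s * v i))) (𝓝[>] 0) (𝓝 θ))
    (k : ℕ) :
    Tendsto (fun s : ℝ => ∑' i, a i / v i *
      (Real.exp (-((k + 1) * (s * v i))) - if s * v i ≤ 1 then 1 else 0)) (𝓝[>] 0)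
      (𝓝 (-(θ * (Real.eulerMascheroniConstant + Real.log (k + 1))))) := by
  rw [← mul_neg, ← integral_cutoffGap_expNegGamma_one]
  exact tendsto_tsum_exp_sub_cutoff_integral ha hv hsum h k

end Cutoff

section AbelDensity

/-- The term `log n / n ^ (1 + s)` of a Dirichlet series, in the exponential form in which the
method of moments uses it. -/
noncomputable def logKernel (s : ℝ) (n : ℕ) : ℝ :=
  Real.log n / n * Real.exp (-(s * Real.log n))

theorem logKernel_nonneg (s : ℝ) (n : ℕ) : 0 ≤ logKernel s n :=
  mul_nonneg (div_nonneg (Real.log_natCast_nonneg n) n.cast_nonneg) (Real.exp_pos _).le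

theorem logKernel_le {s : ℝ} (hs : 0 ≤ s) (n : ℕ) : logKernel s n ≤ Real.log n / n := by
  have h := Real.log_natCast_nonneg n
  refine mul_le_of_le_one_right (div_nonneg h n.cast_nonneg) (Real.exp_le_one_iff.2 ?_)
  exact neg_nonpos.2 (mul_nonneg hs h)

theorem logKernel_eq_log_div_rpow (s : ℝ) (n : ℕ) :
    logKernel s n = Real.log n / (n : ℝ) ^ (1 + s) := by
  rcases n.eq_zero_or_pos with rfl | hn
  · simp [logKernel]
  have h : (0 : ℝ) < n := by positivity
  rw [logKernel, Real.rpow_add h, Real.rpow_one, Real.exp_neg, mul_comm s, Real.exp_mul,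
    Real.exp_log h]
  field_simp

theorem antitoneOn_logKernel {s : ℝ} (hs : 0 ≤ s) : AntitoneOn (logKernel s) (Ici 3) := by
  intro m hm n _ hmn
  have hmn' : (m : ℝ) ≤ n := by exact_mod_cast hmn
  have he : Real.exp 1 ≤ m :=
    Real.exp_one_lt_three.le.trans (by exact_mod_cast show 3 ≤ m from hm)
  have hlog : Real.log m ≤ Real.log n := Real.log_le_log ((Real.exp_pos 1).trans_le he) hmn'
  unfold logKernel
  refine mul_le_mul (Real.log_div_self_antitoneOn he (he.trans hmn') hmn') (by gcongr)
    (Real.exp_pos _).le (div_nonneg (Real.log_natCast_nonneg m) m.cast_nonneg)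

theorem summable_logKernel {s : ℝ} (hs : 0 < s) : Summable (logKernel s) := by
  have hmaj : Summable fun n : ℕ => (n : ℝ) ^ (-(1 + s / 2)) / (s / 2) :=
    (Real.summable_nat_rpow.2 (by linarith)).div_const _
  refine hmaj.of_nonneg_of_le (logKernel_nonneg s) fun n => ?_
  rcases n.eq_zero_or_pos with rfl | hn
  · simp only [logKernel, Nat.cast_zero, Real.log_zero, zero_div, zero_mul]
    positivity
  have h : (0 : ℝ) < n := by positivity
  calc logKernel s n = Real.log n / (n : ℝ) ^ (1 + s) := logKernel_eq_log_div_rpow s n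
    _ ≤ (n : ℝ) ^ (s / 2) / (s / 2) / (n : ℝ) ^ (1 + s) := by
        gcongr
        exact Real.log_le_rpow_div h.le (half_pos hs)
    _ = (n : ℝ) ^ (s / 2 - (1 + s)) / (s / 2) := by
        rw [div_right_comm, ← Real.rpow_sub h]
    _ = (n : ℝ) ^ (-(1 + s / 2)) / (s / 2) := by ring_nf

/-- The density of a set of primes measured by Abel means: the weight of `p` is the term
`log p / p ^ (1 + s)` of `-ζ'/ζ`, and the mean over `A` is compared with `1 / s`, its size for
the set of all primes, as `s` decreases to `0`. -/
def HasAbelDensity (A : Set ℕ) (θ : ℝ) : Prop :=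
  Tendsto (fun s => s * ∑' p : A, logKernel s p) (𝓝[>] 0) (𝓝 θ)

theorem HasAbelDensity.nonneg {A : Set ℕ} {θ : ℝ} (h : HasAbelDensity A θ) : 0 ≤ θ :=
  nonneg_of_tendsto_abel_mean
    (fun p : A => div_nonneg (Real.log_natCast_nonneg p) p.1.cast_nonneg) h

theorem LSeries_ofReal_eq_tsum (f : ℕ → ℝ) {x : ℝ} (hx : x ≠ 0) :
    LSeries (fun n => (f n : ℂ)) x = ((∑' n, f n / (n : ℝ) ^ x : ℝ) : ℂ) := by
  rw [LSeries, Complex.ofReal_tsum]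
  refine tsum_congr fun n => ?_
  rcases eq_or_ne n 0 with rfl | hn
  · simp [hx]
  · simp [LSeries.term_of_ne_zero hn, Complex.ofReal_cpow]

section ResidueClass

open ArithmeticFunction.vonMangoldt

variable {q : ℕ} (a : ZMod q)

theorem summable_residueClass_div_rpow {x : ℝ} (hx : 1 < x) :
    Summable fun n : ℕ => residueClass a n / (n : ℝ) ^ x := by
  refine LSeries.summable_real_of_abscissaOfAbsConv_lt ?_
  exact (abscissaOfAbsConv_residueClass_le_one a).trans_lt (by exact_mod_cast hx)

theorem indicator_logKernel_eq_residueClass (s : ℝ) (n : ℕ) :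
    {p : ℕ | p.Prime ∧ (p : ZMod q) = a}.indicator (logKernel s) n =
      (if n.Prime then residueClass a n else 0) / (n : ℝ) ^ (1 + s) := by
  by_cases hn : n.Prime <;> by_cases hna : (n : ZMod q) = a <;>
    simp [hn, hna, residueClass, logKernel_eq_log_div_rpow,
      ArithmeticFunction.vonMangoldt_apply_prime]

variable {a} [NeZero q]

theorem tendsto_mul_tsum_residueClass (ha : IsUnit a) :
    Tendsto (fun s : ℝ => s * ∑' n : ℕ, residueClass a n / (n : ℝ) ^ (1 + s))
      (𝓝[>] 0) (𝓝 (q.totient : ℝ)⁻¹) := by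
  let aux (s : ℝ) : ℂ := LFunctionResidueClassAux a ((1 + s : ℝ) : ℂ)
  have haux : ContinuousOn aux (Ici 0) :=
    (continuousOn_LFunctionResidueClassAux a).comp
      (f := fun s : ℝ => ((1 + s : ℝ) : ℂ)) (by fun_prop) fun s hs => by simpa using hs
  have hcont : ContinuousOn (fun s : ℝ => (s : ℂ) * aux s + (q.totient : ℂ)⁻¹) (Ici 0) :=
    (Complex.continuous_ofReal.continuousOn.mul haux).add continuousOn_const
  have hlim := (Complex.continuous_re.comp_continuousOn hcont 0 self_mem_Ici).mono
    Ioi_subset_Ici_self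
  have hzero : ((0 : ℝ) * aux 0 + (q.totient : ℂ)⁻¹).re = (q.totient : ℝ)⁻¹ := by
    rw [Complex.ofReal_zero, zero_mul, zero_add, ← Complex.ofReal_natCast, ← Complex.ofReal_inv,
      Complex.ofReal_re]
  rw [← hzero]
  refine hlim.tendsto.congr' ?_
  filter_upwards [self_mem_nhdsWithin] with s (hs : 0 < s)
  have hs' : (s : ℂ) ≠ 0 := Complex.ofReal_ne_zero.2 hs.ne'
  have hL := eqOn_LFunctionResidueClassAux ha (show ((1 + s : ℝ) : ℂ) ∈ {z | 1 < z.re} by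
    simpa using hs)
  have hpole : ((1 + s : ℝ) : ℂ) - 1 = s := by
    push_cast
    ring
  simp only [LSeries_ofReal_eq_tsum _ (show 1 + s ≠ 0 by linarith), hpole] at hL
  simp only [Function.comp_apply, aux, hL]
  rw [mul_sub, mul_div_cancel₀ _ hs', sub_add_cancel, ← Complex.ofReal_mul, Complex.ofReal_re]

/-- The prime powers with exponent at least two contribute only `O(1)`, which the factor `s`
removes. -/
theorem hasAbelDensity_setOf_prime_and_eq (ha : IsUnit a) :
    HasAbelDensity {p : ℕ | p.Prime ∧ (p : ZMod q) = a} (q.totient : ℝ)⁻¹ := by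
  have hpow := summable_residueClass_non_primes_div a
  set K := ∑' n : ℕ, (if n.Prime then 0 else residueClass a n) / (n : ℝ)
  have hid : Tendsto (fun s : ℝ => s) (𝓝[>] 0) (𝓝 0) :=
    tendsto_nhdsWithin_of_tendsto_nhds tendsto_id
  have hlow := (tendsto_mul_tsum_residueClass ha).sub (hid.mul_const K)
  rw [zero_mul, sub_zero] at hlow
  refine tendsto_of_tendsto_of_tendsto_of_le_of_le' hlow (tendsto_mul_tsum_residueClass ha)
    ?_ ?_ <;> filter_upwards [self_mem_nhdsWithin] with s (hs : 0 < s)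
  all_goals
    have hres := summable_residueClass_div_rpow a (x := 1 + s) (by linarith)
    have hprime := (summable_logKernel hs).indicator {p : ℕ | p.Prime ∧ (p : ZMod q) = a}
    rw [tsum_subtype]
  · rw [← mul_sub]
    gcongr
    rw [sub_le_iff_le_add, ← hprime.tsum_add hpow]
    refine hres.tsum_le_tsum (fun n => ?_) (hprime.add hpow)
    rw [indicator_logKernel_eq_residueClass]
    split_ifs with hn
    · simp
    · rcases n.eq_zero_or_pos with rfl | hpos
      · simp
      rw [zero_div, zero_add]
      gcongr
      · exact residueClass_nonneg a n
      · exact Real.self_le_rpow_of_one_le (by exact_mod_cast hpos) (by linarith)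
  · refine mul_le_mul_of_nonneg_left (hprime.tsum_le_tsum (fun n => ?_) hres) hs.le
    rw [indicator_logKernel_eq_residueClass]
    gcongr
    split_ifs
    exacts [le_rfl, residueClass_nonneg a n]

end ResidueClass

theorem hasAbelDensity_setOf_prime : HasAbelDensity {p : ℕ | p.Prime} 1 := by
  simpa [Subsingleton.elim (_ : ZMod 1) 1] using
    hasAbelDensity_setOf_prime_and_eq (isUnit_one : IsUnit (1 : ZMod 1))

theorem sum_range_sub_le_sum_range_of_antitoneOn {c k : ℕ → ℝ} {n₀ M : ℕ}
    (hc : ∀ m, n₀ ≤ m → 0 ≤ ∑ i ∈ Finset.range m, c i) (hk₀ : ∀ m, 0 ≤ k m)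
    (hk : AntitoneOn k (Ici n₀)) (hM : n₀ ≤ M) :
    ∑ i ∈ Finset.range n₀, c i * k i - (∑ i ∈ Finset.range n₀, c i) * k n₀ ≤
      ∑ i ∈ Finset.range M, c i * k i := by
  suffices hstrong :
      ∑ i ∈ Finset.range n₀, c i * k i - (∑ i ∈ Finset.range n₀, c i) * k n₀ +
        (∑ i ∈ Finset.range M, c i) * k M ≤ ∑ i ∈ Finset.range M, c i * k i by
    linarith [mul_nonneg (hc M hM) (hk₀ M)]
  induction M, hM using Nat.le_induction with
  | base => linarith
  | succ M hM ih =>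
    have hstep := mul_le_mul_of_nonneg_left
      (hk (mem_Ici.2 hM) (mem_Ici.2 (hM.trans M.le_succ)) M.le_succ) (hc (M + 1) (by omega))
    rw [Finset.sum_range_succ] at hstep ⊢
    rw [Finset.sum_range_succ (fun i => c i * k i)]
    linarith

theorem exists_forall_le_tsum_mul_logKernel {c : ℕ → ℝ}
    (hc : ∀ᶠ m in atTop, 0 ≤ ∑ i ∈ Finset.range m, c i)
    (hsum : ∀ s : ℝ, 0 < s → Summable fun n => c n * logKernel s n) :
    ∃ K : ℝ, ∀ s : ℝ, 0 < s → K ≤ ∑' n, c n * logKernel s n := by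
  obtain ⟨n₀, hc₀, hn₀⟩ :=
    ((eventually_forall_ge_atTop.2 hc).and (eventually_ge_atTop 3)).exists
  refine ⟨∑ i ∈ Finset.range n₀, -(|c i| * (Real.log i / i)) -
    (∑ i ∈ Finset.range n₀, c i) * (Real.log n₀ / n₀), fun s hs => ?_⟩
  refine ge_of_tendsto (hsum s hs).hasSum.tendsto_sum_nat ?_
  filter_upwards [eventually_ge_atTop n₀] with M hM
  refine le_trans ?_ (sum_range_sub_le_sum_range_of_antitoneOn hc₀ (logKernel_nonneg s)
    ((antitoneOn_logKernel hs.le).mono (Ici_subset_Ici.2 hn₀)) hM)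
  have hterm (i : ℕ) : -(|c i| * (Real.log i / i)) ≤ c i * logKernel s i :=
    calc -(|c i| * (Real.log i / i)) ≤ -(|c i| * logKernel s i) :=
          neg_le_neg (mul_le_mul_of_nonneg_left (logKernel_le hs.le i) (abs_nonneg _))
      _ = -|c i| * logKernel s i := by ring
      _ ≤ c i * logKernel s i :=
          mul_le_mul_of_nonneg_right (neg_abs_le _) (logKernel_nonneg s i)
  have hlast := mul_le_mul_of_nonneg_left (logKernel_le hs.le n₀) (hc₀ n₀ le_rfl)
  linarith [Finset.sum_le_sum fun i (_ : i ∈ Finset.range n₀) => hterm i]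

section Comparison

variable {x y : ℕ → ℝ} {L : ℝ}

theorem eventually_lt_mul_tsum_logKernel
    (hx : ∀ s : ℝ, 0 < s → Summable fun n => x n * logKernel s n)
    (hy : ∀ s : ℝ, 0 < s → Summable fun n => y n * logKernel s n)
    (hL : Tendsto (fun s => s * ∑' n, y n * logKernel s n) (𝓝[>] 0) (𝓝 L)) {r b : ℝ}
    (hr : ∀ᶠ m in atTop, r * ∑ i ∈ Finset.range m, y i ≤ ∑ i ∈ Finset.range m, x i)
    (hb : b < r * L) : ∀ᶠ s in 𝓝[>] 0, b < s * ∑' n, x n * logKernel s n := by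
  have hterm (s : ℝ) (n : ℕ) : (x n - r * y n) * logKernel s n =
      x n * logKernel s n - r * (y n * logKernel s n) := by ring
  obtain ⟨K, hK⟩ := exists_forall_le_tsum_mul_logKernel (c := fun n => x n - r * y n)
    (hr.mono fun m hm => by simpa [← Finset.mul_sum] using hm) fun s hs => by
      simpa only [hterm] using (hx s hs).sub ((hy s hs).mul_left r)
  have hid : Tendsto (fun s : ℝ => s) (𝓝[>] 0) (𝓝 0) :=
    tendsto_nhdsWithin_of_tendsto_nhds tendsto_id
  have hlow := (hL.const_mul r).add (hid.mul_const K)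
  rw [zero_mul, add_zero] at hlow
  filter_upwards [hlow.eventually_const_lt hb, self_mem_nhdsWithin] with s hbs (hs : 0 < s)
  have hKs := hK s hs
  simp only [hterm] at hKs
  rw [(hx s hs).tsum_sub ((hy s hs).mul_left r), tsum_mul_left] at hKs
  linarith [mul_le_mul_of_nonneg_left hKs hs.le]

theorem tendsto_mul_tsum_logKernel_of_tendsto_sum_div {θ : ℝ}
    (hx : ∀ s : ℝ, 0 < s → Summable fun n => x n * logKernel s n)
    (hy : ∀ s : ℝ, 0 < s → Summable fun n => y n * logKernel s n)
    (hL : Tendsto (fun s => s * ∑' n, y n * logKernel s n) (𝓝[>] 0) (𝓝 L))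
    (hpos : ∀ᶠ m in atTop, 0 < ∑ i ∈ Finset.range m, y i)
    (h : Tendsto (fun m => (∑ i ∈ Finset.range m, x i) / ∑ i ∈ Finset.range m, y i) atTop
      (𝓝 θ)) :
    Tendsto (fun s => s * ∑' n, x n * logKernel s n) (𝓝[>] 0) (𝓝 (θ * L)) := by
  have hcont : Tendsto (fun r => r * L) (𝓝 θ) (𝓝 (θ * L)) :=
    (continuous_mul_const L).tendsto θ
  refine tendsto_order.2 ⟨fun b hb => ?_, fun b hb => ?_⟩
  · obtain ⟨r, hrθ, hbr⟩ := (hcont.eventually_const_lt hb).exists_lt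
    refine eventually_lt_mul_tsum_logKernel hx hy hL ?_ hbr
    filter_upwards [hpos, h.eventually_const_lt hrθ] with m hm hr
    exact ((lt_div_iff₀ hm).1 hr).le
  · obtain ⟨r, hrθ, hbr⟩ := (hcont.eventually_lt_const hb).exists_gt
    have hneg : ∀ᶠ s in 𝓝[>] 0, -b < s * ∑' n, -x n * logKernel s n := by
      refine eventually_lt_mul_tsum_logKernel (r := -r) (fun s hs => ?_) hy hL ?_ (by linarith)
      · simpa only [neg_mul] using (hx s hs).neg
      · filter_upwards [hpos, h.eventually_lt_const hrθ] with m hm hr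
        rw [Finset.sum_neg_distrib, neg_mul]
        exact neg_le_neg ((div_lt_iff₀ hm).1 hr).le
    filter_upwards [hneg] with s hs
    simp only [neg_mul, tsum_neg, mul_neg] at hs
    linarith

end Comparison

theorem ncard_inter_Icc_one_eq_sum_indicator {A : Set ℕ} (hA : 0 ∉ A) (N : ℕ) :
    ((A ∩ Icc 1 N).ncard : ℝ) = ∑ i ∈ Finset.range (N + 1), A.indicator 1 i := by
  have hcoe : A ∩ Icc 1 N = ↑((Finset.range (N + 1)).filter (· ∈ A)) := by
    ext i
    have : i ∈ A → 1 ≤ i := fun hi => Nat.one_le_iff_ne_zero.2 fun h0 => hA (h0 ▸ hi)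
    simp only [mem_inter_iff, mem_Icc, Finset.coe_filter, Finset.mem_range, mem_ofPred_eq]
    grind
  rw [hcoe, ncard_coe_finset, Finset.card_filter, Nat.cast_sum]
  simp [indicator_apply]

theorem hasAbelDensity_of_tendsto_ncard_div {A : Set ℕ} (hA : 0 ∉ A) {θ : ℝ}
    (h : Tendsto (fun N : ℕ => ((A ∩ Icc 1 N).ncard : ℝ) /
      (({p : ℕ | p.Prime} ∩ Icc 1 N).ncard : ℝ)) atTop (𝓝 θ)) : HasAbelDensity A θ := by
  have hind (B : Set ℕ) (s : ℝ) :
      (fun n => B.indicator 1 n * logKernel s n) = B.indicator (logKernel s) := by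
    funext n
    by_cases hn : n ∈ B <;> simp [hn]
  have hsum (B : Set ℕ) (s : ℝ) (hs : 0 < s) :
      Summable fun n => B.indicator 1 n * logKernel s n := by
    rw [hind]
    exact (summable_logKernel hs).indicator B
  have hprime := hasAbelDensity_setOf_prime
  simp only [HasAbelDensity, tsum_subtype] at hprime ⊢
  simp only [← hind] at hprime ⊢
  simp only [ncard_inter_Icc_one_eq_sum_indicator hA,
    ncard_inter_Icc_one_eq_sum_indicator (A := {p : ℕ | p.Prime}) Nat.not_prime_zero] at h
  rw [← mul_one θ]
  refine tendsto_mul_tsum_logKernel_of_tendsto_sum_div (hsum A) (hsum _) hprime ?_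
    ((tendsto_add_atTop_iff_nat 1).1 h)
  filter_upwards [eventually_ge_atTop 3] with m hm
  refine Finset.sum_pos' (fun i _ => indicator_nonneg (fun _ _ => zero_le_one) i)
    ⟨2, Finset.mem_range.2 hm, ?_⟩
  simp [Nat.prime_two]

end AbelDensity

section Products

/-- The value `p ^ (-s) / φ p` at a prime `p` of the summand of `∑ n ^ (-s) / φ n`, written with
an exponential and with `p - 1` for `φ p`. -/
noncomputable def totientTerm (s : ℝ) (p : ℕ) : ℝ :=
  Real.exp (-(s * Real.log p)) / (p - 1)

/-- The logarithm of the Euler product `∏ (1 + p ^ (-s) / φ p)` over `p ∈ A`. -/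
noncomputable def logEulerProd (A : Set ℕ) (s : ℝ) : ℝ :=
  ∑' p : A, Real.log (1 + totientTerm s p)

/-- The logarithm of the Mertens product `∏ (1 - 1 / p)⁻¹` over `p ∈ A` with `s * log p ≤ 1`,
whose factors are written as `1 + 1 / φ p` in order to compare it with `logEulerProd`. -/
noncomputable def logMertensProd (A : Set ℕ) (s : ℝ) : ℝ :=
  ∑' p : A, if s * Real.log p ≤ 1 then Real.log (1 + totientTerm 0 p) else 0

/-- The difference between the logarithm of an Euler factor and its leading term
`p ^ (-s) / p`. -/
noncomputable def eulerFactorRemainder (s : ℝ) (p : ℕ) : ℝ :=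
  Real.log (1 + totientTerm s p) - Real.exp (-(s * Real.log p)) / p

theorem exp_neg_mul_log_mem_Ioc {s : ℝ} (hs : 0 ≤ s) (n : ℕ) :
    Real.exp (-(s * Real.log n)) ∈ Ioc (0 : ℝ) 1 :=
  ⟨Real.exp_pos _, Real.exp_le_one_iff.2 <|
    neg_nonpos.2 <| mul_nonneg hs (Real.log_natCast_nonneg n)⟩

theorem totientTerm_pos (s : ℝ) {p : ℕ} (hp : 2 ≤ p) : 0 < totientTerm s p := by
  have hp' : (2 : ℝ) ≤ p := by exact_mod_cast hp
  exact div_pos (Real.exp_pos _) (by linarith)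

theorem eulerFactorRemainder_nonneg {s : ℝ} (hs : 0 ≤ s) {p : ℕ} (hp : 2 ≤ p) :
    0 ≤ eulerFactorRemainder s p := by
  have hp' : (2 : ℝ) ≤ p := by exact_mod_cast hp
  have hpos : 0 < 1 + totientTerm s p := by linarith [totientTerm_pos s hp]
  obtain ⟨ht₀, ht₁⟩ := exp_neg_mul_log_mem_Ioc hs p
  set t := Real.exp (-(s * Real.log p)) with ht
  refine sub_nonneg.2 ?_
  calc t / p ≤ t / (p - 1 + t) :=
        div_le_div_of_nonneg_left ht₀.le (by linarith) (by linarith)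
    _ = 1 - (1 + totientTerm s p)⁻¹ := by
        have : (p : ℝ) - 1 + t ≠ 0 := by linarith
        have : (p : ℝ) - 1 ≠ 0 := by linarith
        rw [totientTerm, ← ht]
        field_simp
        ring
    _ ≤ Real.log (1 + totientTerm s p) := Real.one_sub_inv_le_log_of_pos hpos

theorem eulerFactorRemainder_le {s : ℝ} (hs : 0 ≤ s) {p : ℕ} (hp : 2 ≤ p) :
    eulerFactorRemainder s p ≤ 2 / (p : ℝ) ^ 2 := by
  have hp' : (2 : ℝ) ≤ p := by exact_mod_cast hp
  have hp₁ : (0 : ℝ) < p - 1 := by linarith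
  obtain ⟨ht₀, ht₁⟩ := exp_neg_mul_log_mem_Ioc hs p
  have hlog := Real.log_le_sub_one_of_pos
    (show 0 < 1 + totientTerm s p by linarith [totientTerm_pos s hp])
  rw [eulerFactorRemainder]
  rw [totientTerm] at hlog ⊢
  set t := Real.exp (-(s * Real.log p))
  calc Real.log (1 + t / (p - 1)) - t / p ≤ t / (p - 1) - t / p := by linarith
    _ = t / (p * (p - 1)) := by field_simp; ring
    _ ≤ 1 / (p * (p - 1)) := by gcongr
    _ ≤ 2 / (p : ℝ) ^ 2 := by
        rw [div_le_div_iff₀ (by positivity) (by positivity)]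
        nlinarith

theorem continuous_eulerFactorRemainder {p : ℕ} (hp : 2 ≤ p) :
    Continuous fun s => eulerFactorRemainder s p := by
  have hterm : Continuous fun s => totientTerm s p := by
    unfold totientTerm
    fun_prop
  have hne (s : ℝ) : 1 + totientTerm s p ≠ 0 := by linarith [totientTerm_pos s hp]
  exact ((continuous_const.add hterm).log hne).sub (by fun_prop)

theorem finite_setOf_mul_log_le {s : ℝ} (hs : 0 < s) :
    {n : ℕ | s * Real.log n ≤ 1}.Finite := by
  obtain ⟨M, hM⟩ := exists_nat_ge (Real.exp (1 / s))
  refine (Set.finite_le_nat M).subset fun n hn => ?_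
  rcases n.eq_zero_or_pos with rfl | hpos
  · exact M.zero_le
  · have hlog : Real.log n ≤ 1 / s := (le_div_iff₀' hs).2 hn
    exact_mod_cast ((Real.log_le_iff_le_exp (by positivity)).1 hlog).trans hM

theorem summable_ite_mul_log_le {s : ℝ} (hs : 0 < s) {A : Set ℕ} (f : ℕ → ℝ) :
    Summable fun p : A => if s * Real.log p ≤ 1 then f p else 0 :=
  summable_of_hasFiniteSupport <|
    ((finite_setOf_mul_log_le hs).preimage Subtype.val_injective.injOn).subset
      fun _ hp => by_contra fun h => hp (if_neg h)

theorem totientTerm_le_mul_logKernel (s : ℝ) {p : ℕ} (hp : 2 ≤ p) :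
    totientTerm s p ≤ 2 / Real.log 2 * logKernel s p := by
  have hp' : (2 : ℝ) ≤ p := by exact_mod_cast hp
  have hlog : Real.log 2 ≤ Real.log p := Real.log_le_log two_pos hp'
  have hp₁ : (0 : ℝ) < p - 1 := by linarith
  rw [totientTerm, logKernel]
  set t := Real.exp (-(s * Real.log p))
  have ht : 0 < t := Real.exp_pos _
  calc t / (p - 1) ≤ 2 * t / p := by
        rw [div_le_div_iff₀ hp₁ (by linarith)]
        nlinarith
    _ = 2 / Real.log 2 * (Real.log 2 / p * t) := by field_simp
    _ ≤ 2 / Real.log 2 * (Real.log p / p * t) := by gcongr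

theorem summable_two_div_sq (A : Set ℕ) : Summable fun p : A => 2 / (p : ℝ) ^ 2 :=
  ((Real.summable_nat_pow_inv.2 one_lt_two).mul_left 2).subtype A

section Comparison

variable {A : Set ℕ} (hA : ∀ p ∈ A, 2 ≤ p)

include hA

theorem summable_totientTerm {s : ℝ} (hs : 0 < s) : Summable fun p : A => totientTerm s p :=
  (((summable_logKernel hs).mul_left _).subtype A).of_nonneg_of_le
    (fun p => (totientTerm_pos s (hA p p.2)).le)
    fun p => totientTerm_le_mul_logKernel s (hA p p.2)

theorem summable_log_one_add_totientTerm {s : ℝ} (hs : 0 < s) :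
    Summable fun p : A => Real.log (1 + totientTerm s p) :=
  Real.summable_log_one_add_of_summable (summable_totientTerm hA hs)

theorem summable_eulerFactorRemainder {s : ℝ} (hs : 0 ≤ s) :
    Summable fun p : A => eulerFactorRemainder s p :=
  (summable_two_div_sq A).of_nonneg_of_le (fun p => eulerFactorRemainder_nonneg hs (hA p p.2))
    fun p => eulerFactorRemainder_le hs (hA p p.2)

/-- The remainders are dominated by `2 / p ^ 2` uniformly in `s`, and each difference vanishes
in the limit. -/
theorem tendsto_tsum_eulerFactorRemainder_sub_cutoff {c : ℝ} (hc : 0 ≤ c) :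
    Tendsto (fun s : ℝ => ∑' p : A, (eulerFactorRemainder (c * s) p -
      if s * Real.log p ≤ 1 then eulerFactorRemainder 0 p else 0)) (𝓝[>] 0) (𝓝 0) := by
  suffices h : Tendsto _ _ (𝓝 (∑' _ : A, (0 : ℝ))) by rwa [tsum_zero] at h
  refine tendsto_tsum_of_dominated_convergence (summable_two_div_sq A) (fun p => ?_) ?_
  · have hrem : Tendsto (fun s => eulerFactorRemainder (c * s) p - eulerFactorRemainder 0 p)
        (𝓝[>] 0) (𝓝 0) := by
      have hcont : Continuous fun s =>
          eulerFactorRemainder (c * s) p - eulerFactorRemainder 0 p :=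
        ((continuous_eulerFactorRemainder (hA p p.2)).comp (continuous_const_mul c)).sub
          continuous_const
      simpa using (hcont.tendsto 0).mono_left nhdsWithin_le_nhds
    have hlog : Tendsto (fun s => s * Real.log p) (𝓝[>] 0) (𝓝 0) := by
      simpa using ((continuous_mul_const (Real.log p)).tendsto 0).mono_left nhdsWithin_le_nhds
    refine hrem.congr' ?_
    filter_upwards [hlog.eventually_lt_const one_pos] with s hs
    rw [if_pos hs.le]
  · filter_upwards [self_mem_nhdsWithin] with s (hs : 0 < s) p
    have hcs : 0 ≤ c * s := by positivity
    refine abs_sub_le_of_nonneg_of_le (eulerFactorRemainder_nonneg hcs (hA p p.2))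
      (eulerFactorRemainder_le hcs (hA p p.2)) ?_ ?_ <;> split_ifs
    exacts [eulerFactorRemainder_nonneg le_rfl (hA p p.2), le_rfl,
      eulerFactorRemainder_le le_rfl (hA p p.2), by positivity]

theorem tendsto_logEulerProd_sub_logMertensProd {θ : ℝ} (h : HasAbelDensity A θ) (k : ℕ) :
    Tendsto (fun s => logEulerProd A ((k + 1) * s) - logMertensProd A s) (𝓝[>] 0)
      (𝓝 (-(θ * (Real.eulerMascheroniConstant + Real.log (k + 1))))) := by
  have hlog (p : A) : 0 < Real.log p :=
    Real.log_pos (by exact_mod_cast hA p p.2)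
  have hlead := tendsto_tsum_exp_sub_cutoff (a := fun p : A => Real.log p / p)
    (fun p => div_nonneg (hlog p).le p.1.cast_nonneg) hlog
    (fun s hs => (summable_logKernel hs).subtype A) h k
  have hrem := tendsto_tsum_eulerFactorRemainder_sub_cutoff hA (c := k + 1) (by positivity)
  have hadd := hrem.add hlead
  rw [zero_add] at hadd
  refine hadd.congr' ?_
  filter_upwards [self_mem_nhdsWithin] with s (hs : 0 < s)
  have hks : 0 < (k + 1) * s := by positivity
  have hsplit (p : A) : Real.log p / p / Real.log p *
      (Real.exp (-((k + 1) * (s * Real.log p))) - if s * Real.log p ≤ 1 then 1 else 0) =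
      (Real.log (1 + totientTerm ((k + 1) * s) p) -
        if s * Real.log p ≤ 1 then Real.log (1 + totientTerm 0 p) else 0) -
      (eulerFactorRemainder ((k + 1) * s) p -
        if s * Real.log p ≤ 1 then eulerFactorRemainder 0 p else 0) := by
    rw [div_right_comm, div_self (hlog p).ne']
    simp only [eulerFactorRemainder, zero_mul, neg_zero, Real.exp_zero, mul_assoc]
    split_ifs <;> ring
  have hlogs := summable_log_one_add_totientTerm hA hks
  have hcut := summable_ite_mul_log_le (A := A) hs fun p => Real.log (1 + totientTerm 0 p)
  have hrems := (summable_eulerFactorRemainder hA hks.le).sub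
    (summable_ite_mul_log_le hs (eulerFactorRemainder 0))
  rw [tsum_congr hsplit, (hlogs.sub hcut).tsum_sub hrems, add_sub_cancel, logEulerProd,
    logMertensProd, hlogs.tsum_sub hcut]

end Comparison

end Products

section SquarefreeExpansion

theorem hasSum_finsetProd_exp_tsum_log {ι : Type*} {f : ι → ℝ} (hf : ∀ i, 0 ≤ f i)
    (hsum : Summable f) :
    HasSum (fun S : Finset ι => ∏ i ∈ S, f i) (Real.exp (∑' i, Real.log (1 + f i))) := by
  have hprod := summable_finsetProd_of_summable_nonneg hf hsum
  rw [Real.rexp_tsum_eq_tprod (fun i => by linarith [hf i])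
    (Real.summable_log_one_add_of_summable hsum), tprod_one_add hprod]
  exact hprod.hasSum

/-- The squarefree numbers all of whose prime factors lie in `A`; the squarefree counterpart of
`Nat.factoredNumbers`, without finiteness of `A`. -/
def squarefreeFactoredNumbers (A : Set ℕ) : Set ℕ :=
  {n | Squarefree n ∧ ∀ p ∈ n.primeFactors, p ∈ A}

theorem mem_squarefreeFactoredNumbers_iff {A : Set ℕ} {n : ℕ} :
    n ∈ squarefreeFactoredNumbers A ↔
      (∀ p : ℕ, p.Prime → p ∣ n → p ∈ A) ∧ ∀ p : ℕ, p.Prime → ¬p ^ 2 ∣ n := by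
  simp only [squarefreeFactoredNumbers, mem_ofPred_eq, pow_two,
    ← Nat.squarefree_iff_prime_squarefree, and_comm (a := Squarefree n)]
  refine and_congr_left fun hn => ?_
  simp [Nat.mem_primeFactors, hn.ne_zero]

theorem totient_eq_prod_of_squarefree {n : ℕ} (hn : Squarefree n) :
    n.totient = ∏ p ∈ n.primeFactors, (p - 1) := by
  rw [Nat.totient_eq_div_primeFactors_mul, Nat.prod_primeFactors_of_squarefree hn,
    Nat.div_self (Nat.pos_of_ne_zero hn.ne_zero), one_mul]

variable {A : Set ℕ} (hA : ∀ p ∈ A, p.Prime)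

include hA

theorem primeFactors_prod_subtype (S : Finset A) :
    (∏ p ∈ S, (p : ℕ)).primeFactors = S.map (.subtype (· ∈ A)) := by
  rw [← Nat.primeFactors_prod (s := S.map (.subtype (· ∈ A))), Finset.prod_map]
  · rfl
  · simp only [Finset.mem_map, forall_exists_index, and_imp]
    rintro _ p - rfl
    exact hA p p.2

theorem injective_prod_subtype : Function.Injective fun S : Finset A => ∏ p ∈ S, (p : ℕ) := by
  intro S T hST
  have := congrArg Nat.primeFactors hST
  simpa only [primeFactors_prod_subtype hA, Finset.map_inj] using this

theorem squarefree_prod_subtype (S : Finset A) : Squarefree (∏ p ∈ S, (p : ℕ)) := by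
  refine Finset.squarefree_prod_of_pairwise_isCoprime (fun p _ q _ hpq => ?_)
    fun p _ => (hA p p.2).squarefree
  exact Nat.coprime_iff_isRelPrime.1 <|
    (Nat.coprime_primes (hA p p.2) (hA q q.2)).2 (Subtype.coe_injective.ne hpq)

theorem range_prod_subtype :
    (range fun S : Finset A => ∏ p ∈ S, (p : ℕ)) = squarefreeFactoredNumbers A := by
  ext n
  constructor
  · rintro ⟨S, rfl⟩
    refine ⟨squarefree_prod_subtype hA S, fun p hp => ?_⟩
    rw [primeFactors_prod_subtype hA, Finset.mem_map] at hp
    obtain ⟨q, -, rfl⟩ := hp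
    exact q.2
  · rintro ⟨hn, hnA⟩
    refine ⟨n.primeFactors.subtype (· ∈ A), ?_⟩
    simp only [Finset.prod_subtype_of_mem (fun p => p) hnA,
      Nat.prod_primeFactors_of_squarefree hn]

theorem prod_totientTerm (s : ℝ) (S : Finset A) :
    ∏ p ∈ S, totientTerm s p = Real.exp (-(s * Real.log (∏ p ∈ S, (p : ℕ) : ℕ))) /
      Nat.totient (∏ p ∈ S, (p : ℕ)) := by
  simp only [totientTerm, Finset.prod_div_distrib]
  congr 1
  · rw [Nat.cast_prod, Real.log_prod fun p _ => by exact_mod_cast (hA p p.2).ne_zero,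
      Finset.mul_sum, ← Finset.sum_neg_distrib, Real.exp_sum]
  · rw [totient_eq_prod_of_squarefree (squarefree_prod_subtype hA S),
      primeFactors_prod_subtype hA, Finset.prod_map, Nat.cast_prod]
    refine Finset.prod_congr rfl fun p _ => ?_
    simp [Nat.cast_sub (hA p p.2).one_le]

theorem hasSum_exp_neg_mul_log_div_totient {s : ℝ} (hs : 0 < s) :
    HasSum (fun n : squarefreeFactoredNumbers A =>
      Real.exp (-(s * Real.log n)) / Nat.totient n) (Real.exp (logEulerProd A s)) := by
  have hA₂ : ∀ p ∈ A, 2 ≤ p := fun p hp => (hA p hp).two_le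
  have h := hasSum_finsetProd_exp_tsum_log (fun p : A => (totientTerm_pos s (hA₂ p p.2)).le)
    (summable_totientTerm hA₂ hs)
  simp only [prod_totientTerm hA] at h
  rw [← range_prod_subtype hA]
  exact ((injective_prod_subtype hA).hasSum_range_iff
    (f := fun n : ℕ => Real.exp (-(s * Real.log n)) / Nat.totient n)).2 h

theorem tendsto_tsum_exp_moment_div_mertensProd {θ : ℝ} (h : HasAbelDensity A θ) (k : ℕ) :
    Tendsto (fun s => ∑' n : squarefreeFactoredNumbers A,
      Real.exp (-(s * Real.log n)) / Nat.totient n / Real.exp (logMertensProd A s) *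
        Real.exp (-(k * (s * Real.log n)))) (𝓝[>] 0)
      (𝓝 (Real.exp (-(Real.eulerMascheroniConstant * θ)) * ((k : ℝ) + 1) ^ (-θ))) := by
  have hprod :=
    (tendsto_logEulerProd_sub_logMertensProd (fun p hp => (hA p hp).two_le) h k).rexp
  have hlim : Real.exp (-(θ * (Real.eulerMascheroniConstant + Real.log (k + 1)))) =
      Real.exp (-(Real.eulerMascheroniConstant * θ)) * ((k : ℝ) + 1) ^ (-θ) := by
    rw [Real.rpow_def_of_pos (by positivity), ← Real.exp_add]
    ring_nf
  rw [← hlim]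
  refine hprod.congr' ?_
  filter_upwards [self_mem_nhdsWithin] with s (hs : 0 < s)
  rw [Real.exp_sub, ← ((hasSum_exp_neg_mul_log_div_totient hA
    (show 0 < (k + 1) * s by positivity)).div_const _).tsum_eq]
  refine tsum_congr fun n => ?_
  rw [show -((k + 1) * s * Real.log n) = -(s * Real.log n) + -(k * (s * Real.log n)) by ring,
    Real.exp_add]
  ring

theorem tendsto_tsum_cutoff_inv_totient_div_mertensProd {θ : ℝ} (h : HasAbelDensity A θ) :
    Tendsto (fun s => (∑' n : squarefreeFactoredNumbers A,
        if s * Real.log n ≤ 1 then (Nat.totient n : ℝ)⁻¹ else 0) /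
          Real.exp (logMertensProd A s)) (𝓝[>] 0)
      (𝓝 (Real.exp (-(Real.eulerMascheroniConstant * θ)) * (Real.Gamma (θ + 1))⁻¹)) := by
  have hweights : ∀ᶠ s : ℝ in 𝓝[>] 0, (Summable fun n : squarefreeFactoredNumbers A =>
      Real.exp (-(s * Real.log n)) / Nat.totient n / Real.exp (logMertensProd A s)) ∧
      ∀ n : squarefreeFactoredNumbers A,
        0 ≤ Real.exp (-(s * Real.log n)) / Nat.totient n / Real.exp (logMertensProd A s) ∧
          0 ≤ s * Real.log n := by
    filter_upwards [self_mem_nhdsWithin] with s (hs : 0 < s)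
    exact ⟨(hasSum_exp_neg_mul_log_div_totient hA hs).summable.div_const _, fun n =>
      ⟨by positivity, mul_nonneg hs.le (Real.log_natCast_nonneg n)⟩⟩
  have hlim := tendsto_tsum_ite_le_of_tendsto_exp_moments hweights (Real.exp_pos _).le h.nonneg
    (tendsto_tsum_exp_moment_div_mertensProd hA h) (f := fun x => x⁻¹) (g := fun _ => 0)
    (continuousOn_inv₀.mono fun x hx => ((Real.exp_pos _).trans_le hx.1).ne') continuousOn_const
  rw [integral_inv_expNegGamma h.nonneg] at hlim
  refine hlim.congr fun s => ?_
  rw [← tsum_div_const]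
  refine tsum_congr fun n => ?_
  split_ifs
  · have := (Real.exp_pos (-(s * Real.log n))).ne'
    field_simp
  · simp

end SquarefreeExpansion

section MertensProduct

theorem harmSum_mem_finset (S : Finset ℕ) :
    harmSum (· ∈ S) = ∏ p ∈ S with p.Prime, (1 - (p : ℝ)⁻¹)⁻¹ := by
  let inv : ℕ →* ℝ := (invMonoidWithZeroHom : ℝ →*₀ ℝ).toMonoidHom.comp
    (Nat.castRingHom ℝ).toMonoidHom
  have hinv (n : ℕ) : inv n = (n : ℝ)⁻¹ := rfl
  have hlt {p : ℕ} (hp : p.Prime) : ‖inv p‖ < 1 := by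
    rw [hinv, norm_inv, RCLike.norm_natCast]
    exact inv_lt_one_of_one_lt₀ (by exact_mod_cast hp.one_lt)
  have hgeom :=
    (EulerProduct.summable_and_hasSum_factoredNumbers_prod_filter_prime_geometric hlt S).2
  have hiff (n : ℕ) : (0 < n ∧ ∀ p : ℕ, p.Prime → p ∣ n → p ∈ S) ↔
      n ∈ Nat.factoredNumbers S := by
    grind [Nat.mem_factoredNumbers, Nat.mem_primeFactorsList]
  rw [harmSum, ← (Equiv.subtypeEquivRight hiff).symm.tsum_eq]
  simpa only [hinv, one_div] using! hgeom.tsum_eq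

theorem one_div_log_mul_log_le_one_iff {N n : ℕ} (hN : 2 ≤ N) (hn : 0 < n) :
    1 / Real.log N * Real.log n ≤ 1 ↔ n ≤ N := by
  have hN₁ : (1 : ℝ) < N := by exact_mod_cast hN
  rw [one_div_mul_eq_div, div_le_one (Real.log_pos hN₁),
    Real.log_le_log_iff (by positivity) (by linarith), Nat.cast_le]

theorem exp_log_one_add_totientTerm_zero {p : ℕ} (hp : 2 ≤ p) :
    Real.exp (Real.log (1 + totientTerm 0 p)) = (1 - (p : ℝ)⁻¹)⁻¹ := by
  have hp' : (2 : ℝ) ≤ p := by exact_mod_cast hp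
  have : (p : ℝ) - 1 ≠ 0 := by linarith
  rw [Real.exp_log (by linarith [totientTerm_pos 0 hp])]
  simp only [totientTerm, zero_mul, neg_zero, Real.exp_zero]
  field_simp
  ring

theorem harmSum_eq_exp_logMertensProd {A : Set ℕ} (hA : ∀ p ∈ A, p.Prime) {N : ℕ} (hN : 2 ≤ N) :
    harmSum (fun p => p ≤ N ∧ p ∈ A) = Real.exp (logMertensProd A (1 / Real.log N)) := by
  have hmem : (fun p => p ≤ N ∧ p ∈ A) = (· ∈ (Finset.range (N + 1)).filter (· ∈ A)) := by
    funext p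
    simp
  rw [hmem, harmSum_mem_finset, logMertensProd,
    tsum_subtype A fun p =>
      if 1 / Real.log N * Real.log p ≤ 1 then Real.log (1 + totientTerm 0 p) else 0,
    tsum_eq_sum (s := Finset.range (N + 1)), Real.exp_sum, Finset.filter_filter,
    Finset.prod_filter]
  · refine Finset.prod_congr rfl fun p hp => ?_
    by_cases hpA : p ∈ A
    · have hle : p ≤ N := Nat.lt_succ_iff.1 (Finset.mem_range.1 hp)
      rw [if_pos ⟨hpA, hA p hpA⟩, indicator_of_mem hpA,
        if_pos ((one_div_log_mul_log_le_one_iff hN (hA p hpA).pos).2 hle),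
        exp_log_one_add_totientTerm_zero (hA p hpA).two_le]
    · rw [if_neg fun h => hpA h.1, indicator_of_notMem hpA, Real.exp_zero]
  · intro p hp
    refine indicator_apply_eq_zero.2 fun hpA => if_neg fun h => hp ?_
    rw [one_div_log_mul_log_le_one_iff hN (hA p hpA).pos] at h
    exact Finset.mem_range.2 (Nat.lt_succ_iff.2 h)

theorem sum_Icc_squarefree_eq_tsum (A : Set ℕ) {N : ℕ} (hN : 2 ≤ N) :
    (∑ n ∈ Finset.Icc 1 N,
      if (∀ p : ℕ, p.Prime → p ∣ n → p ∈ A) ∧ (∀ p : ℕ, p.Prime → ¬p ^ 2 ∣ n) then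
        (1 : ℝ) / (Nat.totient n : ℝ)
      else 0) =
    ∑' n : squarefreeFactoredNumbers A,
      if 1 / Real.log N * Real.log n ≤ 1 then (Nat.totient n : ℝ)⁻¹ else 0 := by
  rw [tsum_subtype (squarefreeFactoredNumbers A)
      fun n => if 1 / Real.log N * Real.log n ≤ 1 then (Nat.totient n : ℝ)⁻¹ else 0,
    tsum_eq_sum (s := Finset.Icc 1 N)]
  · refine Finset.sum_congr rfl fun n hn => ?_
    obtain ⟨hn₁, hnN⟩ := Finset.mem_Icc.1 hn
    rw [indicator_apply, if_pos ((one_div_log_mul_log_le_one_iff hN hn₁).2 hnN), one_div]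
    simp only [mem_squarefreeFactoredNumbers_iff]
  · intro n hn
    refine indicator_apply_eq_zero.2 fun hnA => if_neg fun h => hn ?_
    have hpos := Nat.pos_of_ne_zero hnA.1.ne_zero
    exact Finset.mem_Icc.2 ⟨hpos, (one_div_log_mul_log_le_one_iff hN hpos).1 h⟩

end MertensProduct

theorem generalized_phi_mertens_squarefree_general {A : Set ℕ} (hA : ∀ p ∈ A, p.Prime) {θ : ℝ}
    (h : HasAbelDensity A θ) :
    Tendsto
      (fun N : ℕ =>
        harmSum (fun p => p ≤ N ∧ p ∈ A) /
        ∑ n ∈ Finset.Icc 1 N,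
          if (∀ p : ℕ, p.Prime → p ∣ n → p ∈ A) ∧ (∀ p : ℕ, p.Prime → ¬p ^ 2 ∣ n) then
            (1 : ℝ) / (Nat.totient n : ℝ)
          else 0)
      atTop
      (𝓝 (Real.exp (Real.eulerMascheroniConstant * θ) * Real.Gamma (θ + 1))) := by
  have hΓ := Real.Gamma_pos_of_pos (show 0 < θ + 1 by linarith [h.nonneg])
  have hcutoff : Tendsto (fun N : ℕ => 1 / Real.log N) atTop (𝓝[>] 0) := by
    simp only [one_div]
    exact tendsto_inv_atTop_nhdsGT_zero.comp
      (Real.tendsto_log_atTop.comp tendsto_natCast_atTop_atTop)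
  have hlim := ((tendsto_tsum_cutoff_inv_totient_div_mertensProd hA h).comp hcutoff).inv₀
    (by positivity)
  rw [mul_inv, inv_inv, ← Real.exp_neg, neg_neg] at hlim
  refine hlim.congr' ?_
  filter_upwards [eventually_ge_atTop 2] with N hN
  rw [Function.comp_apply, inv_div, sum_Icc_squarefree_eq_tsum A hN,
    harmSum_eq_exp_logMertensProd hA hN]

end

/-- **Theorem 3 for `k = 2`.** For a set `A` of primes with natural density `θ ∈ (0,1]` within
the primes, the ratio of the harmonic sum over integers whose prime factors are `≤ N` and lie
in `A` to the sum of `1/φ(n)` over squarefree `n ≤ N` with prime factors in `A` tends to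
`e^{γθ} Γ(θ+1)`. -/
theorem generalized_phi_mertens_squarefree
    (A : Set ℕ) (hA : ∀ p ∈ A, Nat.Prime p)
    (θ : ℝ) (hθ : θ ∈ Set.Ioc (0 : ℝ) 1)
    (hdens : Tendsto
      (fun N : ℕ => ((A ∩ Set.Icc 1 N).ncard : ℝ) / (({p : ℕ | Nat.Prime p} ∩ Set.Icc 1 N).ncard : ℝ))
      atTop (nhds θ)) :
    Tendsto
      (fun N : ℕ =>
        harmSum (fun p => p ≤ N ∧ p ∈ A) /
        ∑ n ∈ Finset.Icc 1 N,
          if (∀ p : ℕ, p.Prime → p ∣ n → p ∈ A) ∧ (∀ p : ℕ, p.Prime → ¬ p ^ 2 ∣ n) then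
            (1 : ℝ) / (Nat.totient n : ℝ)
          else 0)
      atTop
      (nhds (Real.exp (Real.eulerMascheroniConstant * θ) * Real.Gamma (θ + 1))) := by
  exact generalized_phi_mertens_squarefree_general hA <|
    hasAbelDensity_of_tendsto_ncard_div (fun h => Nat.not_prime_zero (hA 0 h)) hdens
end

section
/- Let k ≥ 2 and let A be a subset of the prime numbers whose natural density in the primes exists and equals θ ∈ (0,1]. Then, as N → ∞, ∑_{k-free n with 1 ≤ n ≤ N : every prime factor of n lies in A} 1/( n_{(k−1)-free} · φ(n_{(k−1)-power}) ) ∼ ∑_{1 ≤ n ≤ N : every prime factor of n lies in A} 1/n, i.e. the ratio of the two sides tends to 1. -/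
open Filter
open scoped Classical

/-- `n` is `k`-free: no `k`-th power of a prime divides `n`. -/
def KFree (k n : ℕ) : Prop := ∀ p : ℕ, p.Prime → ¬ p ^ k ∣ n

/-- The `m`-free part of `n`: each prime `p` appearing with exponent `e` in `n` contributes
`p ^ (e % m)`.  In particular the `1`-free part of any `n` is `1`. -/
def freePart (m n : ℕ) : ℕ := n.factorization.prod fun p e => p ^ (e % m)

/-- The `m`-power part of `n`: each prime `p` appearing with exponent `e` in `n` contributes
`p ^ (m * (e / m))`, so the result is a perfect `m`-th power, and
`n = freePart m n * powerPart m n`.  In particular the `1`-power part of `n` is `n` itself. -/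
def powerPart (m n : ℕ) : ℕ := n.factorization.prod fun p e => p ^ (m * (e / m))

/-!
Let `H(N)` be the sum on the right. Truncating the exponents of `v` at `k - 1` gives a `k`-free
divisor `n` of `v`, and the `v` with truncation `n` are the products `n * s`, where `s` runs over
the integers all of whose prime factors divide `P = n_{(k-1)-power}`. By the Euler product for
`P / φ(P) = ∑ 1 / s`, summing `1 / v` over this fibre gives the weight
`1 / (n_{(k-1)-free} φ(P))`. So the left-hand sum minus `H(N)` is the sum of `1 / (n * s)` over the
pairs with `n ≤ N < n * s`.

For fixed `s` the range `N / s < n ≤ N` contributes `o(H(N))`: either `H` is unbounded, while the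
range has bounded harmonic mass, or `H` converges. Moreover `rad s ∣ n`, so the contribution of `s`
is at most `H(N) / (s * rad s)`. As `∑ 1 / (s * rad s)` converges, dominated convergence concludes.
-/

section

open Asymptotics Finset Topology UniqueFactorizationMonoid

/-! ### Sums over windows, and series dominated by a comparison function -/

theorem isLittleO_tsum_of_dominated {ι β 𝕜 : Type*} [NormedField 𝕜] [CompleteSpace 𝕜]
    {l : Filter ι} {F : ι → β → 𝕜} {H : ι → 𝕜} {b : β → ℝ} (hb : Summable b)
    (hF : ∀ s, (F · s) =o[l] H) (hFb : ∀ᶠ i in l, ∀ s, ‖F i s‖ ≤ b s * ‖H i‖) :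
    (fun i => ∑' s, F i s) =o[l] H := by
  have hzero : ∀ᶠ i in l, H i = 0 → ∑' s, F i s = 0 := hFb.mono fun i hi h0 => by
    have hF0 : ∀ s, F i s = 0 := fun s => norm_le_zero_iff.mp (by simpa [h0] using hi s)
    simp [hF0]
  rw [isLittleO_iff_tendsto' hzero]
  simp only [← tsum_div_const]
  rw [← tsum_zero (β := β)]
  refine tendsto_tsum_of_dominated_convergence hb.abs (fun s => (hF s).tendsto_div_nhds_zero)
    (hFb.mono fun i hi s => ?_)
  rw [norm_div]
  exact div_le_of_le_mul₀ (norm_nonneg _) (abs_nonneg _)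
    ((hi s).trans (by gcongr; exact le_abs_self _))

section Window

variable {f : ℕ → ℝ}

theorem isBigO_one_sum_filter_lt_mul (hf : f =O[atTop] fun n => (n : ℝ)⁻¹) (s : ℕ) :
    (fun N => ∑ n ∈ Icc 1 N with N < n * s, f n) =O[atTop] fun _ => (1 : ℝ) := by
  obtain ⟨C, hC, hfC⟩ := hf.exists_nonneg
  obtain ⟨n₀, hn₀⟩ := eventually_atTop.mp hfC.bound
  refine IsBigO.of_bound (C * s) ?_
  filter_upwards [eventually_ge_atTop (n₀ * s), eventually_gt_atTop 0] with N hN hN0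
  have hterm : ∀ n ∈ {n ∈ Icc 1 N | N < n * s}, ‖f n‖ ≤ C * (s / N) := by
    intro n hn
    obtain ⟨hn, hlt⟩ := mem_filter.mp hn
    have hn0 : (0 : ℝ) < n := by exact_mod_cast (mem_Icc.mp hn).1
    have hN0' : (0 : ℝ) < N := by exact_mod_cast hN0
    have hlt' : (N : ℝ) ≤ n * s := by exact_mod_cast hlt.le
    have hs0 : (0 : ℝ) < s := pos_of_mul_pos_right (hN0'.trans_le hlt') hn0.le
    have hn₀n : n₀ ≤ n := (lt_of_mul_lt_mul_right (hN.trans_lt hlt) s.zero_le).le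
    refine (hn₀ n hn₀n).trans (mul_le_mul_of_nonneg_left ?_ hC)
    rw [Real.norm_of_nonneg (by positivity), inv_le_comm₀ hn0 (by positivity), inv_div]
    exact (div_le_iff₀ hs0).mpr hlt'
  have hcard : #{n ∈ Icc 1 N | N < n * s} ≤ N := (card_filter_le _ _).trans (by simp)
  calc ‖∑ n ∈ Icc 1 N with N < n * s, f n‖
      ≤ ∑ n ∈ Icc 1 N with N < n * s, C * (s / N : ℝ) := norm_sum_le_of_le _ hterm
    _ = #{n ∈ Icc 1 N | N < n * s} * (C * (s / N)) := by rw [sum_const, nsmul_eq_mul]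
    _ ≤ N * (C * (s / N)) := by gcongr
    _ = C * s * ‖(1 : ℝ)‖ := by rw [norm_one]; field_simp

theorem sum_filter_lt_mul_eq_sub (f : ℕ → ℝ) (N : ℕ) {s : ℕ} (hs : s ≠ 0) :
    ∑ n ∈ Icc 1 N with N < n * s, f n = ∑ n ∈ Icc 1 N, f n - ∑ n ∈ Icc 1 (N / s), f n := by
  have hhead : {n ∈ Icc 1 N | ¬ N < n * s} = Icc 1 (N / s) := by
    ext n
    have := Nat.div_le_self N s
    simp only [mem_filter, mem_Icc, not_lt, ← Nat.le_div_iff_mul_le (Nat.pos_of_ne_zero hs)]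
    omega
  rw [eq_sub_iff_add_eq, ← hhead, sum_filter_add_sum_filter_not]

theorem tendsto_sum_filter_lt_mul {l : ℝ}
    (hl : Tendsto (fun N => ∑ n ∈ Icc 1 N, f n) atTop (𝓝 l)) (s : ℕ) :
    Tendsto (fun N => ∑ n ∈ Icc 1 N with N < n * s, f n) atTop (𝓝 0) := by
  rcases eq_or_ne s 0 with rfl | hs
  · simp
  · simpa only [sum_filter_lt_mul_eq_sub f _ hs, sub_self, Function.comp_def] using
      hl.sub (hl.comp (Nat.tendsto_div_const_atTop hs))

theorem isLittleO_sum_filter_lt_mul (hf0 : 0 ≤ f) (hf : f =O[atTop] fun n => (n : ℝ)⁻¹) (s : ℕ) :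
    (fun N => ∑ n ∈ Icc 1 N with N < n * s, f n) =o[atTop] fun N => ∑ n ∈ Icc 1 N, f n := by
  have hmono : Monotone fun N => ∑ n ∈ Icc 1 N, f n := fun M N hMN =>
    sum_le_sum_of_subset_of_nonneg (Icc_subset_Icc_right hMN) fun n _ _ => hf0 n
  rcases tendsto_atTop_of_monotone hmono with htop | ⟨l, hl⟩
  · exact (isBigO_one_sum_filter_lt_mul hf s).trans_isLittleO
      ((isLittleO_one_left_iff ℝ).mpr (tendsto_norm_atTop_atTop.comp htop))
  rcases eq_or_ne l 0 with rfl | hl0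
  · have hzero : ∀ N, ∑ n ∈ Icc 1 N with N < n * s, f n = 0 := fun N =>
      le_antisymm
        ((sum_le_sum_of_subset_of_nonneg (filter_subset _ _) fun n _ _ => hf0 n).trans
          (hmono.ge_of_tendsto hl N))
        (sum_nonneg fun n _ => hf0 n)
    simpa only [hzero] using isLittleO_zero _ _
  · exact ((isLittleO_one_iff ℝ).mpr (tendsto_sum_filter_lt_mul hl s)).trans_isBigO
      (((isBigO_const_const (1 : ℝ) hl0 _).trans
        (isEquivalent_const_iff_tendsto hl0 |>.mpr hl).isBigO_symm))

theorem sum_filter_dvd_le_div (hf0 : 0 ≤ f) {r : ℕ} (hr : r ≠ 0)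
    (hfr : ∀ n, f (r * n) ≤ f n / r) (N : ℕ) :
    ∑ n ∈ Icc 1 N with r ∣ n, f n ≤ (∑ n ∈ Icc 1 N, f n) / r := by
  have hsub : {n ∈ Icc 1 N | r ∣ n} ⊆ (Icc 1 N).image (r * ·) := by
    intro n hn
    obtain ⟨hn, u, rfl⟩ := mem_filter.mp hn
    obtain ⟨h1, hN⟩ := mem_Icc.mp hn
    exact mem_image_of_mem _ (mem_Icc.mpr ⟨Nat.pos_of_mul_pos_left h1,
      (Nat.le_mul_of_pos_left u (Nat.pos_of_ne_zero hr)).trans hN⟩)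
  calc ∑ n ∈ Icc 1 N with r ∣ n, f n
      ≤ ∑ n ∈ (Icc 1 N).image (r * ·), f n :=
        sum_le_sum_of_subset_of_nonneg hsub fun n _ _ => hf0 n
    _ = ∑ u ∈ Icc 1 N, f (r * u) := sum_image (mul_right_injective₀ hr).injOn
    _ ≤ ∑ u ∈ Icc 1 N, f u / r := sum_le_sum fun u _ => hfr u
    _ = (∑ n ∈ Icc 1 N, f n) / r := (sum_div _ _ _).symm

end Window

/-! ### Two series over the integers -/

theorem hasSum_inv_factoredNumbers_primeFactors {n : ℕ} (hn : n ≠ 0) :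
    HasSum ((Nat.factoredNumbers n.primeFactors).indicator fun s : ℕ => (s : ℝ)⁻¹)
      (n / n.totient) := by
  let inv : ℕ →* ℝ :=
    { toFun s := (s : ℝ)⁻¹
      map_one' := by simp
      map_mul' a b := by push_cast; exact mul_inv _ _ }
  have hinv : ∀ {p : ℕ}, p.Prime → ‖inv p‖ < 1 := fun {p} hp => by
    change ‖(p : ℝ)⁻¹‖ < 1
    rw [Real.norm_of_nonneg (inv_nonneg.mpr p.cast_nonneg)]
    exact inv_lt_one_of_one_lt₀ (by exact_mod_cast hp.one_lt)
  have hprod : (n / n.totient : ℝ) = ∏ p ∈ n.primeFactors with p.Prime, (1 - inv p)⁻¹ := by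
    have htot : (n.totient : ℝ) = n * ∏ p ∈ n.primeFactors, (1 - (p : ℝ)⁻¹) := by
      simpa using congrArg (Rat.cast : ℚ → ℝ) n.totient_eq_mul_prod_factors
    rw [htot, filter_true_of_mem fun p => Nat.prime_of_mem_primeFactors, prod_inv_distrib,
      div_mul_cancel_left₀ (by exact_mod_cast hn)]
    rfl
  rw [hprod]
  exact hasSum_subtype_iff_indicator.mp
    (EulerProduct.summable_and_hasSum_factoredNumbers_prod_filter_prime_geometric hinv _).2

/- Writing `s = b² a` with `a` squarefree, `a ∣ rad s`, so `s * rad s ≥ a² b²`. -/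
theorem summable_one_div_mul_radical :
    Summable fun s : ℕ => (1 : ℝ) / (s * radical s : ℕ) := by
  choose a b hab ha using Nat.sq_mul_squarefree
  have hinj : Function.Injective fun s => (a s, b s) := by
    intro s t hst
    obtain ⟨haa, hbb⟩ := Prod.mk.inj hst
    rw [← hab s, ← hab t, haa, hbb]
  have hsq : Summable fun n : ℕ => (1 : ℝ) / (n : ℝ) ^ 2 :=
    Real.summable_one_div_nat_pow.mpr one_lt_two
  refine Summable.of_nonneg_of_le (fun s => by positivity) (fun s => ?_)
    ((hsq.mul_of_nonneg hsq (fun n => by positivity) fun n => by positivity).comp_injective hinj)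
  rcases eq_or_ne s 0 with rfl | hs
  · simp only [zero_mul, Nat.cast_zero, div_zero, Function.comp_apply]
    positivity
  have hb : b s ≠ 0 := fun h => hs (by rw [← hab s, h]; simp)
  have ha_le : a s ≤ radical s := Nat.le_of_dvd (Nat.radical_pos s)
    ((dvd_radical_iff (ha s).isRadical hs).mpr (Dvd.intro_left _ (hab s)))
  have hle : a s ^ 2 * b s ^ 2 ≤ s * radical s :=
    calc a s ^ 2 * b s ^ 2 = b s ^ 2 * a s * a s := by ring
      _ ≤ s * radical s := by rw [hab s]; gcongr
  have hpos : 0 < a s ^ 2 * b s ^ 2 :=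
    Nat.pos_of_ne_zero (mul_ne_zero (pow_ne_zero _ (ha s).ne_zero) (pow_ne_zero _ hb))
  simp only [Function.comp_apply, div_mul_div_comm, one_mul]
  exact one_div_le_one_div_of_le (by exact_mod_cast hpos) (by exact_mod_cast hle)

/-! ### Truncation of exponents -/

/-- The largest divisor of `n` in which no prime has exponent above `m`: each prime `p` appearing
with exponent `e` in `n` contributes `p ^ min m e`. -/
def truncatedPart (m n : ℕ) : ℕ := n.factorization.prod fun p e => p ^ min m e

theorem factorization_prod_pow_comp {g : ℕ → ℕ} (hg : g 0 = 0) (n p : ℕ) :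
    (n.factorization.prod fun q e => q ^ g e).factorization p = g (n.factorization p) := by
  have hmap : (n.factorization.prod fun q e => q ^ g e) =
      (n.factorization.mapRange g hg).prod (· ^ ·) :=
    (Finsupp.prod_mapRange_index fun q => pow_zero q).symm
  rw [hmap, Nat.prod_pow_factorization_eq_self fun q hq =>
    Nat.prime_of_mem_primeFactors (Finsupp.support_mapRange hq), Finsupp.mapRange_apply]

theorem prod_pow_comp_factorization_ne_zero (g : ℕ → ℕ) (n : ℕ) :
    (n.factorization.prod fun q e => q ^ g e) ≠ 0 :=
  prod_ne_zero_iff.mpr fun _ hq => pow_ne_zero _ (Nat.prime_of_mem_primeFactors hq).ne_zero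

theorem mem_primeFactors_iff_factorization_ne_zero {n p : ℕ} :
    p ∈ n.primeFactors ↔ n.factorization p ≠ 0 := by
  rw [← Nat.support_factorization, Finsupp.mem_support_iff]

section Truncation

variable {m n s : ℕ}

theorem truncatedPart_ne_zero (m n : ℕ) : truncatedPart m n ≠ 0 :=
  prod_pow_comp_factorization_ne_zero _ n

theorem powerPart_ne_zero (m n : ℕ) : powerPart m n ≠ 0 :=
  prod_pow_comp_factorization_ne_zero (fun e => m * (e / m)) n

theorem factorization_truncatedPart (m n p : ℕ) :
    (truncatedPart m n).factorization p = min m (n.factorization p) :=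
  factorization_prod_pow_comp (min_zero m) n p

theorem factorization_powerPart (m n p : ℕ) :
    (powerPart m n).factorization p = m * (n.factorization p / m) :=
  factorization_prod_pow_comp (g := fun e => m * (e / m)) (by simp) n p

theorem freePart_mul_powerPart (m : ℕ) (hn : n ≠ 0) : freePart m n * powerPart m n = n := by
  rw [freePart, powerPart, ← Finsupp.prod_mul]
  simp only [← pow_add, Nat.mod_add_div]
  exact Nat.prod_factorization_pow_eq_self hn

theorem truncatedPart_dvd (m : ℕ) (hn : n ≠ 0) : truncatedPart m n ∣ n :=
  (Nat.factorization_le_iff_dvd (truncatedPart_ne_zero m n) hn).mp fun p => by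
    rw [factorization_truncatedPart]
    exact min_le_right _ _

theorem primeFactors_truncatedPart (hm : m ≠ 0) (n : ℕ) :
    (truncatedPart m n).primeFactors = n.primeFactors := by
  ext p
  rw [mem_primeFactors_iff_factorization_ne_zero, mem_primeFactors_iff_factorization_ne_zero,
    factorization_truncatedPart]
  omega

theorem mem_primeFactors_powerPart (hm : m ≠ 0) {p : ℕ} :
    p ∈ (powerPart m n).primeFactors ↔ m ≤ n.factorization p := by
  rw [mem_primeFactors_iff_factorization_ne_zero, factorization_powerPart, mul_ne_zero_iff,
    Nat.div_ne_zero_iff]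
  tauto

theorem kFree_succ_iff (hn : n ≠ 0) : KFree (m + 1) n ↔ ∀ p, n.factorization p ≤ m := by
  refine forall_congr' fun p => ?_
  by_cases hp : p.Prime
  · simp [hp, hp.pow_dvd_iff_le_factorization hn]
  · simp [hp, Nat.factorization_eq_zero_of_not_prime n hp]

theorem truncatedPart_mul_eq_left_iff (hm : m ≠ 0) (hn : n ≠ 0) (hs : s ≠ 0) :
    truncatedPart m (n * s) = n ↔
      KFree (m + 1) n ∧ s ∈ Nat.factoredNumbers (powerPart m n).primeFactors := by
  have hfac : truncatedPart m (n * s) = n ↔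
      ∀ p, min m (n.factorization p + s.factorization p) = n.factorization p := by
    rw [← Nat.factorization_inj.eq_iff (truncatedPart_ne_zero m _) hn, Finsupp.ext_iff]
    simp only [factorization_truncatedPart, Nat.factorization_mul hn hs, Finsupp.add_apply]
  have hmem : s ∈ Nat.factoredNumbers (powerPart m n).primeFactors ↔
      ∀ p, s.factorization p ≠ 0 → m ≤ n.factorization p := by
    simp only [Nat.mem_factoredNumbers_iff_primeFactors_subset, subset_iff,
      mem_primeFactors_powerPart hm, mem_primeFactors_iff_factorization_ne_zero]
    exact and_iff_right hs
  rw [hfac, hmem, kFree_succ_iff hn, ← forall_and]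
  exact forall_congr' fun p => by omega

theorem radical_dvd_of_truncatedPart_mul_eq_left (hm : m ≠ 0) (hn : n ≠ 0) (hs : s ≠ 0)
    (h : truncatedPart m (n * s) = n) : radical s ∣ n := by
  have hprimes : n.primeFactors = (n * s).primeFactors := by
    simpa only [h] using primeFactors_truncatedPart hm (n * s)
  rw [Nat.radical_dvd_iff hn, hprimes]
  exact Nat.primeFactors_mono (Dvd.intro_left n rfl) (mul_ne_zero hn hs)

end Truncation

/-! ### The weights -/

/-- All prime factors of `n` lie in `A`. -/
def PrimeSupported (A : Set ℕ) (n : ℕ) : Prop := ∀ p : ℕ, p.Prime → p ∣ n → p ∈ A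

/-- The term of `n` in the harmonic sum of the integers with all prime factors in `A`. -/
noncomputable def harmonicWeight (A : Set ℕ) (n : ℕ) : ℝ :=
  if PrimeSupported A n then (1 : ℝ) / n else 0

/-- The term of `n` in the totient sum of the `(m + 1)`-free integers with all prime factors in
`A`. -/
noncomputable def totientWeight (m : ℕ) (A : Set ℕ) (n : ℕ) : ℝ :=
  if PrimeSupported A n ∧ KFree (m + 1) n then
    (1 : ℝ) / ((freePart m n * (powerPart m n).totient : ℕ) : ℝ)
  else 0

/-- The harmonic weight of `n * s`, restricted to the pairs `(n, s)` for which `n * s` lies in the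
fibre of truncation over `n`. -/
noncomputable def fiberWeight (m : ℕ) (A : Set ℕ) (n s : ℕ) : ℝ :=
  if truncatedPart m (n * s) = n then harmonicWeight A (n * s) else 0

section Weights

variable {m n s : ℕ} (A : Set ℕ)

theorem harmonicWeight_zero : harmonicWeight A 0 = 0 := by simp [harmonicWeight]

theorem harmonicWeight_one : harmonicWeight A 1 = 1 := by
  have hA : PrimeSupported A 1 := fun p hp h1 => absurd h1 hp.not_dvd_one
  simp [harmonicWeight, hA]

theorem harmonicWeight_nonneg : 0 ≤ harmonicWeight A := fun n => by
  unfold harmonicWeight; split_ifs <;> simp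

theorem harmonicWeight_isBigO_inv : harmonicWeight A =O[atTop] fun n => (n : ℝ)⁻¹ :=
  .of_norm_le fun n => by unfold harmonicWeight; split_ifs <;> simp

theorem harmonicWeight_mul_le (n s : ℕ) : harmonicWeight A (n * s) ≤ harmonicWeight A n / s := by
  by_cases h : PrimeSupported A (n * s)
  · have hn : PrimeSupported A n := fun p hp hpn => h p hp (hpn.mul_right s)
    simp [harmonicWeight, h, hn, div_eq_mul_inv, mul_comm]
  · rw [harmonicWeight, if_neg h]
    exact div_nonneg (harmonicWeight_nonneg A n) s.cast_nonneg

theorem harmonicWeight_mul_of_primeFactors_subset (hs : s ≠ 0)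
    (hsub : s.primeFactors ⊆ n.primeFactors) :
    harmonicWeight A (n * s) = harmonicWeight A n / s := by
  have hiff : PrimeSupported A (n * s) ↔ PrimeSupported A n := by
    refine forall₂_congr fun p hp => ?_
    have : p ∣ s → p ∣ n := fun h => Nat.dvd_of_mem_primeFactors (hsub (hp.mem_primeFactors h hs))
    rw [hp.dvd_mul]
    tauto
  simp only [harmonicWeight, hiff]
  split_ifs <;> simp [div_eq_mul_inv, mul_comm]

theorem one_le_sum_harmonicWeight {N : ℕ} (hN : 1 ≤ N) :
    1 ≤ ∑ n ∈ Icc 1 N, harmonicWeight A n := by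
  rw [← harmonicWeight_one A]
  exact single_le_sum (fun n _ => harmonicWeight_nonneg A n) (mem_Icc.mpr ⟨le_rfl, hN⟩)

theorem fiberWeight_nonneg (m n s : ℕ) : 0 ≤ fiberWeight m A n s := by
  unfold fiberWeight
  split_ifs
  exacts [harmonicWeight_nonneg A _, le_rfl]

theorem fiberWeight_le (m n s : ℕ) : fiberWeight m A n s ≤ harmonicWeight A n / s := by
  unfold fiberWeight
  split_ifs
  exacts [harmonicWeight_mul_le A n s, div_nonneg (harmonicWeight_nonneg A n) s.cast_nonneg]

theorem fiberWeight_zero_right (m n : ℕ) : fiberWeight m A n 0 = 0 := by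
  simp [fiberWeight, harmonicWeight_zero]

theorem radical_dvd_of_fiberWeight_ne_zero (hm : m ≠ 0) (hn : n ≠ 0)
    (h : fiberWeight m A n s ≠ 0) : radical s ∣ n := by
  have hs : s ≠ 0 := by
    rintro rfl
    exact h (fiberWeight_zero_right A m n)
  refine radical_dvd_of_truncatedPart_mul_eq_left hm hn hs (by_contra fun hne => h ?_)
  exact if_neg hne

/-! ### The totient weight as a sum over a fibre -/

theorem fiberWeight_eq (hm : m ≠ 0) (hn : n ≠ 0) (s : ℕ) :
    fiberWeight m A n s = (if KFree (m + 1) n then harmonicWeight A n else 0) *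
      (Nat.factoredNumbers (powerPart m n).primeFactors).indicator (fun s : ℕ => (s : ℝ)⁻¹) s := by
  rcases eq_or_ne s 0 with rfl | hs
  · simp [fiberWeight_zero_right, Set.indicator_apply]
  rw [fiberWeight, if_congr (truncatedPart_mul_eq_left_iff hm hn hs) rfl rfl]
  by_cases hfree : KFree (m + 1) n
  swap
  · simp [hfree]
  by_cases hmem : s ∈ Nat.factoredNumbers (powerPart m n).primeFactors
  swap
  · simp [hmem]
  have hpow : powerPart m n ∣ n := Dvd.intro_left _ (freePart_mul_powerPart m hn)
  have hsub : s.primeFactors ⊆ n.primeFactors :=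
    (Nat.primeFactors_subset_of_mem_factoredNumbers hmem).trans (Nat.primeFactors_mono hpow hn)
  simp [hfree, hmem, harmonicWeight_mul_of_primeFactors_subset A hs hsub, div_eq_mul_inv]

theorem totientWeight_eq (m : ℕ) (hn : n ≠ 0) :
    totientWeight m A n = (if KFree (m + 1) n then harmonicWeight A n else 0) *
      (powerPart m n / (powerPart m n).totient) := by
  have hpow : (powerPart m n : ℝ) ≠ 0 := by exact_mod_cast powerPart_ne_zero m n
  have hmul : (n : ℝ) = freePart m n * powerPart m n := by
    exact_mod_cast (freePart_mul_powerPart m hn).symm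
  rw [totientWeight, harmonicWeight, hmul]
  by_cases h : PrimeSupported A n ∧ KFree (m + 1) n
  · rw [if_pos h, if_pos h.2, if_pos h.1, Nat.cast_mul]
    field_simp
  · rw [if_neg h, ← ite_and, if_neg (mt And.symm h), zero_mul]

theorem hasSum_fiberWeight (hm : m ≠ 0) (hn : n ≠ 0) :
    HasSum (fiberWeight m A n) (totientWeight m A n) := by
  rw [totientWeight_eq A m hn, funext (fiberWeight_eq A hm hn)]
  exact (hasSum_inv_factoredNumbers_primeFactors (powerPart_ne_zero m n)).mul_left _

theorem hasSum_fiberWeight_of_mul_le (m : ℕ) (hn : n ≠ 0) (N : ℕ) :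
    HasSum (fun s => if n * s ≤ N then fiberWeight m A n s else 0)
      (∑ v ∈ Icc 1 N with truncatedPart m v = n, harmonicWeight A v) := by
  let g (v : ℕ) : ℝ := if v ≤ N ∧ truncatedPart m v = n then harmonicWeight A v else 0
  have hg : HasSum g (∑ v ∈ Icc 1 N with truncatedPart m v = n, harmonicWeight A v) := by
    have hsum : ∑ v ∈ Icc 1 N with truncatedPart m v = n, harmonicWeight A v =
        ∑ v ∈ Icc 1 N, g v := by
      rw [sum_filter]
      exact sum_congr rfl fun v hv => by simp [g, (mem_Icc.mp hv).2]
    rw [hsum]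
    refine hasSum_sum_of_ne_finset_zero fun v hv => ?_
    rcases eq_or_ne v 0 with rfl | hv0
    · simp [g, harmonicWeight_zero]
    · exact if_neg fun h => hv (mem_Icc.mpr ⟨Nat.pos_of_ne_zero hv0, h.1⟩)
  have hrange : ∀ v ∉ Set.range (n * ·), g v = 0 := by
    intro v hv
    refine if_neg fun h => hv ?_
    rcases eq_or_ne v 0 with rfl | hv0
    · exact ⟨0, mul_zero n⟩
    · obtain ⟨s, hs⟩ := h.2 ▸ truncatedPart_dvd m hv0
      exact ⟨s, hs.symm⟩
  convert ((mul_right_injective₀ hn).hasSum_iff hrange).mpr hg using 2 with s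
  simp only [g, fiberWeight, Function.comp_apply, ite_and]

theorem sum_sum_filter_truncatedPart_eq (m : ℕ) (f : ℕ → ℝ) (N : ℕ) :
    ∑ n ∈ Icc 1 N, ∑ v ∈ Icc 1 N with truncatedPart m v = n, f v = ∑ v ∈ Icc 1 N, f v := by
  refine sum_fiberwise_of_maps_to (fun v hv => ?_) f
  obtain ⟨hv1, hvN⟩ := mem_Icc.mp hv
  exact mem_Icc.mpr ⟨Nat.pos_of_ne_zero (truncatedPart_ne_zero m v),
    (Nat.le_of_dvd hv1 (truncatedPart_dvd m (by omega))).trans hvN⟩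

theorem hasSum_sum_filter_lt_mul_fiberWeight (hm : m ≠ 0) (N : ℕ) :
    HasSum (fun s => ∑ n ∈ Icc 1 N with N < n * s, fiberWeight m A n s)
      (∑ n ∈ Icc 1 N, totientWeight m A n - ∑ n ∈ Icc 1 N, harmonicWeight A n) := by
  rw [← sum_sum_filter_truncatedPart_eq m (harmonicWeight A) N, ← sum_sub_distrib]
  have hsub := hasSum_sum fun n (hn : n ∈ Icc 1 N) =>
    have hn0 : n ≠ 0 := Nat.one_le_iff_ne_zero.mp (mem_Icc.mp hn).1
    (hasSum_fiberWeight A hm hn0).sub (hasSum_fiberWeight_of_mul_le A m hn0 N)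
  refine hsub.congr_fun fun s => ?_
  rw [sum_filter]
  refine sum_congr rfl fun n _ => ?_
  rcases lt_or_ge N (n * s) with h | h
  · simp [h, h.not_ge]
  · simp [h, h.not_gt]

/-! ### The excess of the totient sum over the harmonic sum -/

theorem isLittleO_sum_filter_lt_mul_fiberWeight (m s : ℕ) :
    (fun N => ∑ n ∈ Icc 1 N with N < n * s, fiberWeight m A n s) =o[atTop]
      fun N => ∑ n ∈ Icc 1 N, harmonicWeight A n := by
  refine (IsBigO.of_norm_le fun N => ?_).trans_isLittleO
    (isLittleO_sum_filter_lt_mul (harmonicWeight_nonneg A) (harmonicWeight_isBigO_inv A) s)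
  refine norm_sum_le_of_le _ fun n hn => ?_
  have hs : s ≠ 0 := by
    rintro rfl
    simp at hn
  rw [Real.norm_of_nonneg (fiberWeight_nonneg A m n s)]
  exact (fiberWeight_le A m n s).trans (div_le_self (harmonicWeight_nonneg A n)
    (by exact_mod_cast Nat.one_le_iff_ne_zero.mpr hs))

theorem sum_filter_lt_mul_fiberWeight_le (hm : m ≠ 0) (N s : ℕ) :
    ∑ n ∈ Icc 1 N with N < n * s, fiberWeight m A n s ≤
      1 / (s * radical s : ℕ) * ∑ n ∈ Icc 1 N, harmonicWeight A n := by
  calc ∑ n ∈ Icc 1 N with N < n * s, fiberWeight m A n s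
      ≤ ∑ n ∈ Icc 1 N, fiberWeight m A n s :=
        sum_le_sum_of_subset_of_nonneg (filter_subset _ _) fun n _ _ => fiberWeight_nonneg A m n s
    _ = ∑ n ∈ Icc 1 N with radical s ∣ n, fiberWeight m A n s :=
        (sum_filter_of_ne fun n hn => radical_dvd_of_fiberWeight_ne_zero A hm
          (Nat.one_le_iff_ne_zero.mp (mem_Icc.mp hn).1)).symm
    _ ≤ ∑ n ∈ Icc 1 N with radical s ∣ n, harmonicWeight A n / s :=
        sum_le_sum fun n _ => fiberWeight_le A m n s
    _ = (∑ n ∈ Icc 1 N with radical s ∣ n, harmonicWeight A n) / s := (sum_div _ _ _).symm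
    _ ≤ (∑ n ∈ Icc 1 N, harmonicWeight A n) / radical s / s := by
        gcongr
        exact sum_filter_dvd_le_div (harmonicWeight_nonneg A) radical_ne_zero
          (fun n => by rw [mul_comm]; exact harmonicWeight_mul_le A n _) N
    _ = 1 / (s * radical s : ℕ) * ∑ n ∈ Icc 1 N, harmonicWeight A n := by
        push_cast
        rw [div_div, one_div_mul_eq_div, mul_comm (s : ℝ)]

theorem sum_totientWeight_isEquivalent (hm : m ≠ 0) :
    (fun N => ∑ n ∈ Icc 1 N, totientWeight m A n) ~[atTop]
      fun N => ∑ n ∈ Icc 1 N, harmonicWeight A n := by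
  have hexcess : (fun N => ∑' s, ∑ n ∈ Icc 1 N with N < n * s, fiberWeight m A n s) =o[atTop]
      fun N => ∑ n ∈ Icc 1 N, harmonicWeight A n := by
    refine isLittleO_tsum_of_dominated summable_one_div_mul_radical
      (isLittleO_sum_filter_lt_mul_fiberWeight A m) (.of_forall fun N s => ?_)
    rw [Real.norm_of_nonneg (sum_nonneg fun n _ => fiberWeight_nonneg A m n s),
      Real.norm_of_nonneg (sum_nonneg fun n _ => harmonicWeight_nonneg A n)]
    exact sum_filter_lt_mul_fiberWeight_le A hm N s
  simp only [(hasSum_sum_filter_lt_mul_fiberWeight A hm _).tsum_eq] at hexcess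
  exact hexcess

end Weights

end

theorem totient_harmonic_asymp_general (k : ℕ) (hk : 2 ≤ k) (A : Set ℕ) :
    Tendsto
      (fun N : ℕ =>
        (∑ n ∈ Finset.Icc 1 N,
          if (∀ p : ℕ, p.Prime → p ∣ n → p ∈ A) ∧ KFree k n then
            (1 : ℝ) / ((freePart (k - 1) n * Nat.totient (powerPart (k - 1) n) : ℕ) : ℝ)
          else 0) /
        ∑ n ∈ Finset.Icc 1 N,
          if ∀ p : ℕ, p.Prime → p ∣ n → p ∈ A then (1 : ℝ) / (n : ℝ) else 0)
      atTop (nhds 1) := by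
  obtain ⟨m, rfl⟩ : ∃ m, k = m + 1 := ⟨k - 1, by omega⟩
  have hne : ∀ᶠ N in atTop, ∑ n ∈ Finset.Icc 1 N, harmonicWeight A n ≠ 0 :=
    (eventually_ge_atTop 1).mono fun N hN =>
      (zero_lt_one.trans_le (one_le_sum_harmonicWeight A hN)).ne'
  exact (Asymptotics.isEquivalent_iff_tendsto_one hne).mp
    (sum_totientWeight_isEquivalent A (by omega : m ≠ 0))

/-- **Corollary 2.** For `k ≥ 2` and a set `A` of primes with natural density `θ ∈ (0,1]` within
the primes, the sum over `k`-free `n ≤ N` with prime factors in `A` of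
`1 / (n_{(k-1)-free} · φ(n_{(k-1)-power}))` is asymptotic, as `N → ∞`, to the sum of `1/n`
over `n ≤ N` with prime factors in `A`. -/
theorem totient_harmonic_asymp
    (k : ℕ) (hk : 2 ≤ k)
    (A : Set ℕ) (hA : ∀ p ∈ A, Nat.Prime p)
    (θ : ℝ) (hθ : θ ∈ Set.Ioc (0 : ℝ) 1)
    (hdens : Tendsto
      (fun N : ℕ => ((A ∩ Set.Icc 1 N).ncard : ℝ) / (({p : ℕ | Nat.Prime p} ∩ Set.Icc 1 N).ncard : ℝ))
      atTop (nhds θ)) :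
    Tendsto
      (fun N : ℕ =>
        (∑ n ∈ Finset.Icc 1 N,
          if (∀ p : ℕ, p.Prime → p ∣ n → p ∈ A) ∧ KFree k n then
            (1 : ℝ) / ((freePart (k - 1) n * Nat.totient (powerPart (k - 1) n) : ℕ) : ℝ)
          else 0) /
        ∑ n ∈ Finset.Icc 1 N,
          if ∀ p : ℕ, p.Prime → p ∣ n → p ∈ A then (1 : ℝ) / (n : ℝ) else 0)
      atTop (nhds 1) := by
  exact totient_harmonic_asymp_general k hk A
end

section
/- Let A be an infinite subset of the prime numbers whose natural density in the primes exists and equals θ ∈ (0,1], and let p_{1;A} < p_{2;A} < ⋯ be the enumeration of A in increasing order. Then p_{j;A} ∼ (j · log j)/θ as j → ∞, i.e. θ · p_{j;A} / (j · log j) tends to 1. -/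
open Filter

/-!
The Wiener–Ikehara theorem gives the prime number theorem, and hence
`#(A ∩ [1, N]) · log N / N → θ`. At `N = p j` the count is `j`, so `j · log (p j) / p j → θ`; taking
logarithms shows `log j ∼ log (p j)`, which turns this into `θ · p j ∼ j · log j`.

For Wiener–Ikehara, substitute `x = eᵘ` and let `f u = a(eᵘ) e⁻ᵘ - c`, which is bounded and whose
slope is bounded below. If `K` is a probability density which is the Fourier transform of a
compactly supported function `φ`, then the average `∫ f(y + v) K(v) dv` is a Fourier transform of
`φ` times the boundary values of the Laplace transform of `f`, and tends to `0` by the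
Riemann–Lebesgue lemma. The lower bound on the slope compares `f y` with such averages centred at
`y + η` and `y - η`, up to an error that is small once `K` is concentrated enough.
-/

section

open MeasureTheory Set Topology FourierTransform

/-- The one-sided Laplace transform `s ↦ ∫₀^∞ f(u) e^{-su} du` on the real line. -/
noncomputable def laplaceTransform (f : ℝ → ℂ) (s : ℂ) : ℂ :=
  ∫ u in Ioi (0 : ℝ), f u * Complex.exp (-s * u)

theorem integral_mul_fourier_sub {h φ : ℝ → ℂ} (hh : Integrable h) (hφ : Integrable φ) (y : ℝ) :
    ∫ u, h u * 𝓕 φ (u - y) = 𝓕⁻ (fun t ↦ φ t * 𝓕 h t) y := by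
  have hφy : Integrable fun t ↦ Real.fourierChar (t * y) • φ t := by
    simpa [mul_comm] using (Real.fourierIntegral_convergent_iff (-y)).2 hφ
  have fourier_modulation (u : ℝ) :
      𝓕 (fun t ↦ Real.fourierChar (t * y) • φ t) u = 𝓕 φ (u - y) := by
    simp only [Real.fourier_real_eq, smul_smul, ← AddChar.map_add_eq_mul]
    congr! 4
    ring
  calc ∫ u, h u * 𝓕 φ (u - y)
      = ∫ u, 𝓕 (fun t ↦ Real.fourierChar (t * y) • φ t) u • h u := by
        simp only [fourier_modulation, smul_eq_mul, mul_comm (h _)]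
    _ = ∫ t, (Real.fourierChar (t * y) • φ t) • 𝓕 h t := by
        simpa [flip_innerₗ] using! VectorFourier.integral_fourierIntegral_smul_eq_flip
          (L := innerₗ ℝ) Real.continuous_fourierChar continuous_inner hφy hh
    _ = 𝓕⁻ (fun t ↦ φ t * 𝓕 h t) y := by
        simp only [Real.fourierInv_eq, smul_mul_assoc, smul_eq_mul, RCLike.inner_apply,
          conj_trivial, mul_comm y]

section Laplace

variable {f : ℝ → ℂ} {M : ℝ}

theorem integrableOn_mul_cexp_neg (hf : AEStronglyMeasurable f (volume.restrict (Ioi 0)))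
    (hM : ∀ u > 0, ‖f u‖ ≤ M) {s : ℂ} (hs : 0 < s.re) :
    IntegrableOn (fun u : ℝ ↦ f u * Complex.exp (-s * u)) (Ioi 0) :=
  (integrableOn_exp_mul_complex_Ioi (by simpa using hs) 0).bdd_mul hf
    (ae_restrict_of_forall_mem measurableSet_Ioi hM)

theorem fourier_indicator_mul_cexp_neg (ε t : ℝ) :
    𝓕 ((Ioi 0).indicator fun u : ℝ ↦ f u * Complex.exp (-ε * u)) t =
      laplaceTransform f (ε + 2 * Real.pi * t * Complex.I) := by
  rw [Real.fourier_real_eq_integral_exp_smul, laplaceTransform,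
    ← integral_indicator measurableSet_Ioi]
  congr! 2 with u
  by_cases hu : u ∈ Ioi 0
  · simp only [indicator_of_mem hu, smul_eq_mul]
    rw [mul_left_comm, ← Complex.exp_add]
    push_cast
    ring_nf
  · simp [indicator_of_notMem hu]

theorem setIntegral_mul_cexp_neg_mul_fourier_sub
    (hf : AEStronglyMeasurable f (volume.restrict (Ioi 0))) (hM : ∀ u > 0, ‖f u‖ ≤ M)
    {φ : ℝ → ℂ} (hφ : Integrable φ) {ε : ℝ} (hε : 0 < ε) (y : ℝ) :
    ∫ u in Ioi (0 : ℝ), f u * Complex.exp (-ε * u) * 𝓕 φ (u - y) =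
      𝓕⁻ (fun t ↦ φ t * laplaceTransform f (ε + 2 * Real.pi * t * Complex.I)) y := by
  have hint := (integrable_indicator_iff measurableSet_Ioi).2
    (integrableOn_mul_cexp_neg hf hM (s := ε) (by simpa using hε))
  simp_rw [← fourier_indicator_mul_cexp_neg, ← integral_mul_fourier_sub hint hφ,
    ← integral_indicator measurableSet_Ioi, indicator_mul_left]

theorem tendsto_setIntegral_mul_cexp_neg (hf : AEStronglyMeasurable f (volume.restrict (Ioi 0)))
    (hM : ∀ u > 0, ‖f u‖ ≤ M) {k : ℝ → ℂ} (hk : Integrable k) :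
    Tendsto (fun ε : ℝ ↦ ∫ u in Ioi (0 : ℝ), f u * Complex.exp (-ε * u) * k u) (𝓝[>] 0)
      (𝓝 (∫ u in Ioi (0 : ℝ), f u * k u)) := by
  refine tendsto_integral_filter_of_dominated_convergence (fun u ↦ M * ‖k u‖)
    (Eventually.of_forall fun ε ↦ (hf.mul (by fun_prop)).mul hk.aestronglyMeasurable.restrict) ?_
    (hk.norm.const_mul M).integrableOn (Eventually.of_forall fun u ↦ ?_)
  · filter_upwards [self_mem_nhdsWithin] with ε (hε : 0 < ε)
    filter_upwards [ae_restrict_mem measurableSet_Ioi] with u (hu : 0 < u)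
    have norm_exp_le : ‖Complex.exp (-ε * u)‖ ≤ 1 := by
      rw [Complex.norm_exp]
      simpa using (mul_pos hε hu).le
    calc ‖f u * Complex.exp (-ε * u) * k u‖ = ‖f u‖ * ‖Complex.exp (-ε * u)‖ * ‖k u‖ := by
          rw [norm_mul, norm_mul]
      _ ≤ ‖f u‖ * 1 * ‖k u‖ := by gcongr
      _ ≤ M * ‖k u‖ := by rw [mul_one]; gcongr; exact hM u hu
  · have : Continuous fun ε : ℝ ↦ f u * Complex.exp (-ε * u) * k u := by fun_prop
    exact (this.tendsto' 0 _ (by simp)).mono_left nhdsWithin_le_nhds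

theorem tendsto_fourierInv_mul_boundary {φ : ℝ → ℂ} (hφ : Continuous φ)
    (hφc : HasCompactSupport φ) {G : ℂ → ℂ} (hG : ContinuousOn G {s | 0 ≤ s.re}) (y : ℝ) :
    Tendsto (fun ε : ℝ ↦ 𝓕⁻ (fun t ↦ φ t * G (ε + 2 * Real.pi * t * Complex.I)) y) (𝓝[>] 0)
      (𝓝 (𝓕⁻ (fun t ↦ φ t * G (2 * Real.pi * t * Complex.I)) y)) := by
  have hGcomp : ContinuousOn
      (fun p : ℝ × ℝ ↦ G (p.1 + 2 * Real.pi * p.2 * Complex.I)) (Ici 0 ×ˢ univ) :=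
    hG.comp (by fun_prop) fun p hp ↦ by simpa using hp.1
  have hcont : ContinuousOn (fun ε : ℝ ↦
      𝓕⁻ (fun t ↦ φ t * G (ε + 2 * Real.pi * t * Complex.I)) y) (Ici 0) := by
    simp only [Real.fourierInv_eq']
    refine continuousOn_integral_of_compact_support hφc.isCompact ?_ fun ε t _ ht ↦ ?_
    · simp only [Function.uncurry_def]
      refine ContinuousOn.fun_smul ?_ (ContinuousOn.fun_mul ?_ hGcomp) <;> fun_prop
    · simp [image_eq_zero_of_notMem_tsupport ht]
  simpa using (hcont 0 self_mem_Ici).tendsto.mono_left (nhdsWithin_mono _ Ioi_subset_Ici_self)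

theorem setIntegral_mul_fourier_sub_eq_fourierInv_boundary
    (hf : AEStronglyMeasurable f (volume.restrict (Ioi 0))) (hM : ∀ u > 0, ‖f u‖ ≤ M)
    {G : ℂ → ℂ} (hGc : ContinuousOn G {s | 0 ≤ s.re})
    (hG : EqOn (laplaceTransform f) G {s | 0 < s.re})
    {φ : ℝ → ℂ} (hφ : Continuous φ) (hφc : HasCompactSupport φ) (hK : Integrable (𝓕 φ)) (y : ℝ) :
    ∫ u in Ioi (0 : ℝ), f u * 𝓕 φ (u - y) =
      𝓕⁻ (fun t ↦ φ t * G (2 * Real.pi * t * Complex.I)) y := by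
  refine tendsto_nhds_unique (tendsto_setIntegral_mul_cexp_neg hf hM (hK.comp_sub_right y))
    ((tendsto_fourierInv_mul_boundary hφ hφc hGc y).congr' ?_)
  filter_upwards [self_mem_nhdsWithin] with ε (hε : 0 < ε)
  rw [setIntegral_mul_cexp_neg_mul_fourier_sub hf hM (hφ.integrable_of_hasCompactSupport hφc) hε]
  congr! 3 with t
  exact (hG (by simpa using hε)).symm

theorem tendsto_setIntegral_mul_fourier_sub
    (hf : AEStronglyMeasurable f (volume.restrict (Ioi 0))) (hM : ∀ u > 0, ‖f u‖ ≤ M)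
    {G : ℂ → ℂ} (hGc : ContinuousOn G {s | 0 ≤ s.re})
    (hG : EqOn (laplaceTransform f) G {s | 0 < s.re})
    {φ : ℝ → ℂ} (hφ : Continuous φ) (hφc : HasCompactSupport φ) (hK : Integrable (𝓕 φ)) :
    Tendsto (fun y ↦ ∫ u in Ioi (0 : ℝ), f u * 𝓕 φ (u - y)) atTop (𝓝 0) := by
  simp_rw [setIntegral_mul_fourier_sub_eq_fourierInv_boundary hf hM hGc hG hφ hφc hK,
    Real.fourierInv_eq_fourier_neg]
  exact (Real.zero_at_infty_fourier _).comp
    (tendsto_neg_atTop_atBot.mono_right atBot_le_cocompact)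

end Laplace

/-- A band-limited probability density on `ℝ` with finite first absolute moment: it is the Fourier
transform of a continuous function `φ` of compact support. Convolution with such a kernel only sees
the values of a Fourier transform on the support of `φ`. -/
structure IsBandlimitedDensity (K : ℝ → ℝ) : Prop where
  nonneg : ∀ v, 0 ≤ K v
  integrable : Integrable K
  integral_eq_one : ∫ v, K v = 1
  integrable_abs_mul : Integrable fun v ↦ |v| * K v
  exists_fourier_eq : ∃ φ : ℝ → ℂ, Continuous φ ∧ HasCompactSupport φ ∧ 𝓕 φ = fun v ↦ (K v : ℂ)

theorem conj_fourier_of_even {g : ℝ → ℝ} (hg : ∀ t, g (-t) = g t) (v : ℝ) :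
    starRingEnd ℂ (𝓕 (fun t ↦ (g t : ℂ)) v) = 𝓕 (fun t ↦ (g t : ℂ)) v := by
  calc starRingEnd ℂ (𝓕 (fun t ↦ (g t : ℂ)) v) = 𝓕⁻ (fun t ↦ (g t : ℂ)) v := by
        rw [Real.fourier_real_eq_integral_exp_smul, Real.fourierInv_eq', ← integral_conj]
        congr! 2
        rw [smul_eq_mul, smul_eq_mul, map_mul, ← Complex.exp_conj, map_mul, Complex.conj_ofReal,
          Complex.conj_ofReal, Complex.conj_I, RCLike.inner_apply, conj_trivial]
        push_cast
        ring_nf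
    _ = 𝓕 (fun t ↦ (g t : ℂ)) v := by simp [Real.fourierInv_eq_fourier_comp_neg, hg]

open scoped Convolution in
theorem fourier_convolution_self_of_even {g : ℝ → ℝ} (hgi : Integrable g)
    (hg : ∀ t, g (-t) = g t) (v : ℝ) :
    𝓕 ((fun t ↦ (g t : ℂ)) ⋆[ContinuousLinearMap.mul ℂ ℂ] fun t ↦ (g t : ℂ)) v =
      (‖𝓕 (fun t ↦ (g t : ℂ)) v‖ ^ 2 : ℝ) := by
  have hgCi : Integrable fun t ↦ (g t : ℂ) := hgi.ofReal
  rw [Real.fourier_mul_convolution_eq hgCi hgCi, Complex.ofReal_pow, ← Complex.mul_conj',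
    conj_fourier_of_even hg]

theorem integrable_abs_pow_mul_norm_sq (F : SchwartzMap ℝ ℂ) (k : ℕ) :
    Integrable fun v : ℝ ↦ |v| ^ k * ‖F v‖ ^ 2 := by
  refine ((F.integrable_pow_mul volume k).mul_bdd (c := SchwartzMap.seminorm ℝ 0 0 F)
    F.continuous.norm.aestronglyMeasurable (Eventually.of_forall fun v ↦ ?_)).congr ?_
  · simpa using F.norm_le_seminorm ℝ v
  · refine .of_forall fun v ↦ ?_
    simp only [Real.norm_eq_abs]
    ring

theorem IsBandlimitedDensity.normalize {K : ℝ → ℝ} (hK : ∀ v, 0 ≤ K v) (hKi : Integrable K)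
    (hpos : 0 < ∫ v, K v) (hmoment : Integrable fun v ↦ |v| * K v) {φ : ℝ → ℂ}
    (hφ : Continuous φ) (hφc : HasCompactSupport φ) (hφK : 𝓕 φ = fun v ↦ (K v : ℂ)) :
    IsBandlimitedDensity fun v ↦ (∫ v, K v)⁻¹ * K v where
  nonneg v := mul_nonneg (inv_nonneg.2 hpos.le) (hK v)
  integrable := hKi.const_mul _
  integral_eq_one := by rw [integral_const_mul, inv_mul_cancel₀ hpos.ne']
  integrable_abs_mul := by
    simpa only [mul_left_comm] using hmoment.const_mul (∫ v, K v)⁻¹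
  exists_fourier_eq := by
    refine ⟨fun t ↦ ((∫ v, K v)⁻¹ : ℝ) * φ t, by fun_prop, hφc.mul_left, funext fun v ↦ ?_⟩
    rw [Complex.ofReal_mul, ← congrFun hφK v, Real.fourier_real_eq_integral_exp_smul,
      Real.fourier_real_eq_integral_exp_smul, ← integral_const_mul]
    simp only [smul_eq_mul, mul_left_comm]

open scoped Convolution in
theorem exists_isBandlimitedDensity : ∃ K : ℝ → ℝ, IsBandlimitedDensity K := by
  let g : ContDiffBump (0 : ℝ) := default
  let gC : ℝ → ℂ := fun t ↦ (g t : ℂ)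
  have hgc : HasCompactSupport gC := g.hasCompactSupport.comp_left Complex.ofReal_zero
  have hgd : ContDiff ℝ (⊤ : ℕ∞) gC := Complex.ofRealCLM.contDiff.comp g.contDiff
  let F : SchwartzMap ℝ ℂ := 𝓕 (hgc.toSchwartzMap hgd)
  have hF : ⇑F = 𝓕 gC := SchwartzMap.fourier_coe _
  have F_zero_ne : F 0 ≠ 0 := by
    have : 𝓕 gC 0 = (∫ t, g t : ℝ) := by
      simp [Real.fourier_real_eq_integral_exp_smul, gC, integral_complex_ofReal]
    rw [hF, this]
    exact_mod_cast g.integral_pos.ne'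
  refine ⟨_, .normalize (K := fun v ↦ ‖F v‖ ^ 2) (φ := gC ⋆[ContinuousLinearMap.mul ℂ ℂ] gC)
    (fun v ↦ by positivity) (by simpa using integrable_abs_pow_mul_norm_sq F 0) ?_
    (by simpa using integrable_abs_pow_mul_norm_sq F 1)
    (hgc.continuous_convolution_right _ hgd.continuous.locallyIntegrable hgd.continuous)
    (hgc.convolution _ hgc) (funext fun v ↦ ?_)⟩
  · exact integral_pos_of_integrable_nonneg_nonzero (x := 0) (by fun_prop)
      (by simpa using integrable_abs_pow_mul_norm_sq F 0) (fun v ↦ by positivity) (by simpa)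
  · rw [hF]
    exact fourier_convolution_self_of_even g.integrable (fun t ↦ g.neg t) v

theorem fourier_comp_inv_mul_left {φ : ℝ → ℂ} {r : ℝ} (hr : 0 < r) (v : ℝ) :
    𝓕 (fun t ↦ φ (r⁻¹ * t)) v = r * 𝓕 φ (r * v) := by
  have h := Measure.integral_comp_inv_mul_left
    (fun t ↦ Complex.exp (((-2 * Real.pi * t * (r * v) : ℝ) : ℂ) * Complex.I) • φ t) r
  rw [abs_of_pos hr, Complex.real_smul] at h
  rw [Real.fourier_real_eq_integral_exp_smul, Real.fourier_real_eq_integral_exp_smul, ← h]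
  congr! 6 with t
  field_simp

theorem IsBandlimitedDensity.rescale {K : ℝ → ℝ} (hK : IsBandlimitedDensity K) {r : ℝ}
    (hr : 0 < r) : IsBandlimitedDensity fun v ↦ r * K (r * v) where
  nonneg v := mul_nonneg hr.le (hK.nonneg _)
  integrable := (hK.integrable.comp_mul_left' hr.ne').const_mul r
  integral_eq_one := by
    rw [integral_const_mul, Measure.integral_comp_mul_left, hK.integral_eq_one, abs_inv,
      abs_of_pos hr, smul_eq_mul, mul_one, mul_inv_cancel₀ hr.ne']
  integrable_abs_mul := by
    refine (hK.integrable_abs_mul.comp_mul_left' hr.ne').congr (.of_forall fun v ↦ ?_)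
    simp only [abs_mul, abs_of_pos hr]
    ring
  exists_fourier_eq := by
    obtain ⟨φ, hφ, hφc, hφK⟩ := hK.exists_fourier_eq
    refine ⟨fun t ↦ φ (r⁻¹ * t), by fun_prop,
      hφc.comp_homeomorph (Homeomorph.mulLeft₀ r⁻¹ (inv_ne_zero hr.ne')), funext fun v ↦ ?_⟩
    rw [fourier_comp_inv_mul_left hr, hφK, Complex.ofReal_mul]

theorem integral_abs_mul_rescale (K : ℝ → ℝ) {r : ℝ} (hr : 0 < r) :
    ∫ v, |v| * (r * K (r * v)) = r⁻¹ * ∫ v, |v| * K v := by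
  have h := Measure.integral_comp_mul_left (fun v ↦ |v| * K v) r
  rw [abs_inv, abs_of_pos hr, smul_eq_mul] at h
  rw [← h]
  congr! 2 with v
  rw [abs_mul, abs_of_pos hr]
  ring

theorem exists_isBandlimitedDensity_moment_lt {δ : ℝ} (hδ : 0 < δ) :
    ∃ K : ℝ → ℝ, IsBandlimitedDensity K ∧ ∫ v, |v| * K v < δ := by
  obtain ⟨K, hK⟩ := exists_isBandlimitedDensity
  obtain ⟨r, hr⟩ := exists_gt ((∫ v, |v| * K v) / δ)
  have moment_nonneg : 0 ≤ ∫ v, |v| * K v :=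
    integral_nonneg fun v ↦ mul_nonneg (abs_nonneg v) (hK.nonneg v)
  have hr0 : 0 < r := (div_nonneg moment_nonneg hδ.le).trans_lt hr
  refine ⟨_, hK.rescale hr0, ?_⟩
  rw [integral_abs_mul_rescale K hr0]
  rwa [inv_mul_lt_iff₀ hr0, ← div_lt_iff₀ hδ]

section Averaging

variable {f K : ℝ → ℝ} {L M η : ℝ}

theorem le_add_of_monotoneOn_add_mul (hL : 0 ≤ L) (hη : 0 < η) (hM : ∀ u, |f u| ≤ M)
    (hmono : MonotoneOn (fun u ↦ f u + L * u) (Ioi 0)) {u v : ℝ} (hu : |v| ≤ η → 0 < u) :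
    f u ≤ f (u + η + v) + (2 * L * η + 2 * M / η * |v|) := by
  have hM0 : 0 ≤ M := (abs_nonneg _).trans (hM u)
  have far_nonneg : 0 ≤ 2 * M / η * |v| := by positivity
  rcases le_or_gt |v| η with near | far
  · obtain ⟨hv₁, hv₂⟩ := abs_le.1 near
    have hu' : u ≤ u + η + v := by linarith
    have mono := hmono (hu near) ((hu near).trans_le hu') hu'
    have : L * v ≤ L * η := by gcongr
    simp only at mono
    linarith
  · have : 2 * M ≤ 2 * M / η * |v| := by
      rw [div_mul_eq_mul_div, le_div_iff₀ hη]
      gcongr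
    have : 0 ≤ 2 * L * η := by positivity
    linarith [le_of_abs_le (hM u), neg_le_of_abs_le (hM (u + η + v))]

theorem IsBandlimitedDensity.integrable_comp_add_mul (hK : IsBandlimitedDensity K)
    (hf : AEStronglyMeasurable f) (hM : ∀ u, |f u| ≤ M) (y : ℝ) :
    Integrable fun v ↦ f (y + v) * K v :=
  hK.integrable.bdd_mul
    (hf.comp_quasiMeasurePreserving (measurePreserving_add_left volume y).quasiMeasurePreserving)
    (.of_forall fun v ↦ hM (y + v))

theorem IsBandlimitedDensity.integrable_affine_abs_mul (hK : IsBandlimitedDensity K) (a b : ℝ) :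
    Integrable fun v ↦ (a + b * |v|) * K v := by
  simpa only [add_mul, mul_assoc] using!
    (hK.integrable.const_mul a).add (hK.integrable_abs_mul.const_mul b)

theorem IsBandlimitedDensity.integral_affine_abs_mul (hK : IsBandlimitedDensity K) (a b : ℝ) :
    ∫ v, (a + b * |v|) * K v = a + b * ∫ v, |v| * K v := by
  simp only [add_mul, mul_assoc]
  rw [integral_add (hK.integrable.const_mul a) (hK.integrable_abs_mul.const_mul b),
    integral_const_mul, integral_const_mul, hK.integral_eq_one, mul_one]

theorem IsBandlimitedDensity.le_integral_comp_add_mul (hK : IsBandlimitedDensity K) (hL : 0 ≤ L)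
    (hη : 0 < η) (hf : AEStronglyMeasurable f) (hM : ∀ u, |f u| ≤ M)
    (hmono : MonotoneOn (fun u ↦ f u + L * u) (Ioi 0)) {y : ℝ} (hy : 0 < y) :
    f y ≤ (∫ v, f (y + η + v) * K v) + (2 * L * η + 2 * M / η * ∫ v, |v| * K v) := by
  have hf_int := hK.integrable_comp_add_mul hf hM (y + η)
  have herr_int := hK.integrable_affine_abs_mul (2 * L * η) (2 * M / η)
  calc f y = ∫ v, f y * K v := by rw [integral_const_mul, hK.integral_eq_one, mul_one]
    _ ≤ ∫ v, (f (y + η + v) * K v + (2 * L * η + 2 * M / η * |v|) * K v) := by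
        refine integral_mono (hK.integrable.const_mul _) (hf_int.add herr_int) fun v ↦ ?_
        simp only [← add_mul]
        gcongr
        · exact hK.nonneg v
        · exact le_add_of_monotoneOn_add_mul hL hη hM hmono fun _ ↦ hy
    _ = _ := by rw [integral_add hf_int herr_int, hK.integral_affine_abs_mul]

theorem IsBandlimitedDensity.integral_comp_sub_mul_le (hK : IsBandlimitedDensity K) (hL : 0 ≤ L)
    (hη : 0 < η) (hf : AEStronglyMeasurable f) (hM : ∀ u, |f u| ≤ M)
    (hmono : MonotoneOn (fun u ↦ f u + L * u) (Ioi 0)) {y : ℝ} (hy : 2 * η < y) :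
    ∫ v, f (y - η + v) * K v ≤ f y + (2 * L * η + 2 * M / η * ∫ v, |v| * K v) := by
  calc ∫ v, f (y - η + v) * K v
      ≤ ∫ v, (f y + 2 * L * η + 2 * M / η * |v|) * K v := by
        refine integral_mono (hK.integrable_comp_add_mul hf hM _)
          (hK.integrable_affine_abs_mul _ _) fun v ↦ ?_
        have h := le_add_of_monotoneOn_add_mul (u := y - η + v) (v := -v) hL hη hM hmono
          fun hv ↦ by linarith [neg_le_of_abs_le (abs_neg v ▸ hv)]
        rw [abs_neg, show y - η + v + η + -v = y by ring, ← add_assoc] at h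
        exact mul_le_mul_of_nonneg_right h (hK.nonneg v)
    _ = _ := by rw [hK.integral_affine_abs_mul, add_assoc]

end Averaging

theorem aestronglyMeasurable_of_monotoneOn_add_mul {f : ℝ → ℝ} {L : ℝ}
    (hmono : MonotoneOn (fun u ↦ f u + L * u) (Ioi 0)) :
    AEStronglyMeasurable f (volume.restrict (Ioi 0)) :=
  ((aemeasurable_restrict_of_monotoneOn measurableSet_Ioi hmono).sub
    (measurable_const_mul L).aemeasurable).aestronglyMeasurable.congr
    (.of_forall fun u ↦ add_sub_cancel_right (f u) (L * u))

theorem exists_isBandlimitedDensity_error_lt (L : ℝ) {M ε : ℝ} (hM : 0 ≤ M) (hε : 0 < ε) :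
    ∃ η > 0, ∃ K, IsBandlimitedDensity K ∧ 2 * L * η + 2 * M / η * ∫ v, |v| * K v < ε := by
  obtain ⟨η, hη, hLη⟩ := exists_pos_mul_lt (half_pos hε) (2 * L)
  obtain ⟨δ, hδ, hMδ⟩ := exists_pos_mul_lt (half_pos hε) (2 * M / η)
  obtain ⟨K, hK, hKδ⟩ := exists_isBandlimitedDensity_moment_lt hδ
  have : 2 * M / η * ∫ v, |v| * K v ≤ 2 * M / η * δ := by gcongr
  exact ⟨η, hη, K, hK, by linarith⟩

theorem IsBandlimitedDensity.tendsto_integral_indicator_comp_add_mul {f K : ℝ → ℝ} {M : ℝ}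
    (hK : IsBandlimitedDensity K) (hf : AEStronglyMeasurable f (volume.restrict (Ioi 0)))
    (hM : ∀ u > 0, |f u| ≤ M) {G : ℂ → ℂ} (hGc : ContinuousOn G {s | 0 ≤ s.re})
    (hG : EqOn (laplaceTransform fun u ↦ (f u : ℂ)) G {s | 0 < s.re}) :
    Tendsto (fun y ↦ ∫ v, (Ioi 0).indicator f (y + v) * K v) atTop (𝓝 0) := by
  obtain ⟨φ, hφ, hφc, hφK⟩ := hK.exists_fourier_eq
  have complex_form (y : ℝ) : ∫ u in Ioi 0, (f u : ℂ) * 𝓕 φ (u - y) =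
      (∫ v, (Ioi 0).indicator f (y + v) * K v : ℝ) := by
    rw [hφK, ← integral_indicator measurableSet_Ioi, ← integral_add_left_eq_self _ y,
      ← integral_complex_ofReal]
    refine integral_congr_ae (.of_forall fun v ↦ ?_)
    by_cases hv : y + v ∈ Ioi 0
    · simp [indicator_of_mem hv]
    · simp [indicator_of_notMem hv]
  have h := tendsto_setIntegral_mul_fourier_sub (f := fun u ↦ (f u : ℂ))
    (Complex.continuous_ofReal.comp_aestronglyMeasurable hf) (by simpa using hM) hGc hG hφ hφc
    (hφK ▸ hK.integrable.ofReal)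
  simp_rw [complex_form] at h
  exact (Complex.continuous_re.tendsto 0).comp h

theorem tendsto_zero_of_continuousOn_laplaceTransform {f : ℝ → ℝ} {L M : ℝ} (hL : 0 ≤ L)
    (hM : ∀ u > 0, |f u| ≤ M) (hmono : MonotoneOn (fun u ↦ f u + L * u) (Ioi 0)) {G : ℂ → ℂ}
    (hGc : ContinuousOn G {s | 0 ≤ s.re})
    (hG : EqOn (laplaceTransform fun u ↦ (f u : ℂ)) G {s | 0 < s.re}) :
    Tendsto f atTop (𝓝 0) := by
  have hM0 : 0 ≤ M := (abs_nonneg _).trans (hM 1 one_pos)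
  have hf := aestronglyMeasurable_of_monotoneOn_add_mul hmono
  let g := (Ioi 0).indicator f
  have hg : AEStronglyMeasurable g := (aestronglyMeasurable_indicator_iff measurableSet_Ioi).2 hf
  have hgM (u : ℝ) : |g u| ≤ M := by
    by_cases hu : u ∈ Ioi 0
    · simpa [g, hu] using hM u hu
    · simpa [g, hu] using hM0
  have hgmono : MonotoneOn (fun u ↦ g u + L * u) (Ioi 0) :=
    hmono.congr fun u hu ↦ by simp [g, hu]
  refine Metric.tendsto_nhds.2 fun ε hε ↦ ?_
  obtain ⟨η, hη, K, hK, herr⟩ := exists_isBandlimitedDensity_error_lt L hM0 (half_pos hε)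
  have average := hK.tendsto_integral_indicator_comp_add_mul hf hM hGc hG
  have upper := (tendsto_atTop_add_const_right _ η tendsto_id).eventually
    (average.eventually_lt_const (half_pos hε))
  have lower := (tendsto_atTop_add_const_right _ (-η) tendsto_id).eventually
    (average.eventually_const_lt (neg_neg_of_pos (half_pos hε)))
  filter_upwards [upper, lower, eventually_gt_atTop (2 * η)] with y hup hlo hy
  have hy0 : 0 < y := by linarith
  have hfg : g y = f y := indicator_of_mem (mem_Ioi.2 hy0) f
  have h₁ := hK.le_integral_comp_add_mul hL hη hg hgM hgmono hy0
  have h₂ := hK.integral_comp_sub_mul_le hL hη hg hgM hgmono hy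
  rw [dist_zero_right, Real.norm_eq_abs, abs_lt, ← hfg]
  simp only [id, ← sub_eq_add_neg] at hup hlo
  constructor <;> linarith

theorem laplaceTransform_const (c : ℂ) {s : ℂ} (hs : 0 < s.re) :
    laplaceTransform (fun _ ↦ c) s = c / s := by
  rw [laplaceTransform, integral_const_mul, integral_exp_mul_complex_Ioi (by simpa using hs)]
  simp [div_eq_mul_inv]

theorem laplaceTransform_sub_const {f : ℝ → ℂ} {M : ℝ}
    (hf : AEStronglyMeasurable f (volume.restrict (Ioi 0))) (hM : ∀ u > 0, ‖f u‖ ≤ M) (c : ℂ)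
    {s : ℂ} (hs : 0 < s.re) :
    laplaceTransform (fun u ↦ f u - c) s = laplaceTransform f s - c / s := by
  rw [← laplaceTransform_const c hs]
  simp only [laplaceTransform, sub_mul]
  exact integral_sub (integrableOn_mul_cexp_neg hf hM hs)
    ((integrableOn_exp_mul_complex_Ioi (by simpa using hs) 0).const_mul c)

theorem laplaceTransform_comp_exp_mul_exp_neg (a : ℝ → ℝ) (s : ℂ) :
    laplaceTransform (fun u ↦ (a (Real.exp u) * Real.exp (-u) : ℝ)) s =
      ∫ x in Ioi (1 : ℝ), (a x : ℂ) * (x : ℂ) ^ (-(s + 1 + 1)) := by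
  rw [laplaceTransform, ← Real.exp_zero, ← integral_comp_exp_Ioi]
  congr! 2 with u
  rw [Complex.cpow_def_of_ne_zero (by exact_mod_cast (Real.exp_pos u).ne'),
    ← Complex.ofReal_log (Real.exp_pos u).le, Real.log_exp, Complex.real_smul]
  push_cast
  rw [mul_left_comm, ← Complex.exp_add, mul_assoc, ← Complex.exp_add]
  ring_nf

theorem comp_exp_mul_exp_neg_mem_Icc {a : ℝ → ℝ} {M : ℝ} (hnonneg : ∀ x > 1, 0 ≤ a x)
    (hM : ∀ x > 1, a x ≤ M * x) {u : ℝ} (hu : 0 < u) :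
    a (Real.exp u) * Real.exp (-u) ∈ Icc 0 M := by
  have hu1 : 1 < Real.exp u := Real.one_lt_exp_iff.2 hu
  refine ⟨mul_nonneg (hnonneg _ hu1) (Real.exp_pos _).le, ?_⟩
  rw [Real.exp_neg, ← div_eq_mul_inv, div_le_iff₀ (Real.exp_pos u)]
  exact hM _ hu1

theorem monotoneOn_comp_exp_mul_exp_neg_add_mul {a : ℝ → ℝ} {M : ℝ}
    (hmono : MonotoneOn a (Ioi 1)) (hnonneg : ∀ x > 1, 0 ≤ a x) (hM : ∀ x > 1, a x ≤ M * x) :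
    MonotoneOn (fun u ↦ a (Real.exp u) * Real.exp (-u) + M * u) (Ioi 0) := by
  intro u hu v hv huv
  set b := a (Real.exp u) * Real.exp (-u) with hb
  obtain ⟨b_nonneg, b_le⟩ : b ∈ Icc 0 M := comp_exp_mul_exp_neg_mem_Icc hnonneg hM hu
  have decay : b * Real.exp (-(v - u)) ≤ a (Real.exp v) * Real.exp (-v) := by
    rw [hb, mul_assoc, ← Real.exp_add, show -u + -(v - u) = -v by ring]
    gcongr
    exact hmono (Real.one_lt_exp_iff.2 hu) (Real.one_lt_exp_iff.2 hv) (Real.exp_le_exp.2 huv)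
  have tangent : b * (-(v - u) + 1) ≤ b * Real.exp (-(v - u)) := by
    gcongr
    exact Real.add_one_le_exp _
  have slope : b * (v - u) ≤ M * (v - u) := by
    gcongr
  linarith

theorem laplaceTransform_comp_exp_mul_exp_neg_sub_const {a : ℝ → ℝ} {M : ℝ}
    (hmono : MonotoneOn a (Ioi 1)) (hnonneg : ∀ x > 1, 0 ≤ a x) (hM : ∀ x > 1, a x ≤ M * x)
    (c : ℝ) {s : ℂ} (hs : 0 < s.re) :
    laplaceTransform (fun u ↦ (a (Real.exp u) * Real.exp (-u) - c : ℝ)) s =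
      (∫ x in Ioi (1 : ℝ), (a x : ℂ) * (x : ℂ) ^ (-(s + 1 + 1))) - c / s := by
  rw [← laplaceTransform_comp_exp_mul_exp_neg, ← laplaceTransform_sub_const (M := M) _ _ _ hs]
  · simp only [Complex.ofReal_sub]
  · exact Complex.continuous_ofReal.comp_aestronglyMeasurable
      (aestronglyMeasurable_of_monotoneOn_add_mul
        (monotoneOn_comp_exp_mul_exp_neg_add_mul hmono hnonneg hM))
  · intro u hu
    obtain ⟨h₁, h₂⟩ := comp_exp_mul_exp_neg_mem_Icc hnonneg hM hu
    rwa [Complex.norm_real, Real.norm_of_nonneg h₁]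

/-- The **Wiener–Ikehara theorem**. -/
theorem tendsto_div_of_continuousOn_mellin {a : ℝ → ℝ} {c M : ℝ} (hmono : MonotoneOn a (Ioi 1))
    (hnonneg : ∀ x > 1, 0 ≤ a x) (hM : ∀ x > 1, a x ≤ M * x) {G : ℂ → ℂ}
    (hGc : ContinuousOn G {s | 1 ≤ s.re})
    (hG : ∀ s : ℂ, 1 < s.re →
      s * ∫ x in Ioi (1 : ℝ), (a x : ℂ) * (x : ℂ) ^ (-(s + 1)) = c / (s - 1) + G s) :
    Tendsto (fun x ↦ a x / x) atTop (𝓝 c) := by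
  let f (u : ℝ) : ℝ := a (Real.exp u) * Real.exp (-u) - c
  have hM0 : 0 ≤ M := by linarith [hnonneg 2 one_lt_two, hM 2 one_lt_two]
  have hfM (u : ℝ) (hu : 0 < u) : |f u| ≤ M + |c| := by
    obtain ⟨h₁, h₂⟩ := comp_exp_mul_exp_neg_mem_Icc hnonneg hM hu
    exact (abs_sub _ _).trans (by rw [abs_of_nonneg h₁]; gcongr)
  have hfmono : MonotoneOn (fun u ↦ f u + M * u) (Ioi 0) := by
    simpa only [f, sub_add_eq_add_sub] using!
      (monotoneOn_comp_exp_mul_exp_neg_add_mul hmono hnonneg hM).add_const (-c)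
  have add_one_ne_zero {s : ℂ} (hs : 0 ≤ s.re) : s + 1 ≠ 0 := fun h ↦ by
    have : s.re + 1 = 0 := by simpa using congrArg Complex.re h
    linarith
  have hfG : EqOn (laplaceTransform fun u ↦ (f u : ℂ))
      (fun s ↦ (G (s + 1) - c) / (s + 1)) {s | 0 < s.re} := by
    intro s (hs : 0 < s.re)
    have hs0 : s ≠ 0 := fun h ↦ by simp [h] at hs
    have hs1 := add_one_ne_zero hs.le
    have hI := hG (s + 1) (by simpa using hs)
    rw [add_sub_cancel_right] at hI
    rw [laplaceTransform_comp_exp_mul_exp_neg_sub_const hmono hnonneg hM c hs,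
      eq_div_of_mul_eq hs1 ((mul_comm _ _).trans hI)]
    field_simp
    ring
  have hGc' : ContinuousOn (fun s ↦ (G (s + 1) - c) / (s + 1)) {s | 0 ≤ s.re} := by
    refine .div (.sub (hGc.comp (by fun_prop) fun s hs ↦ ?_) (by fun_prop)) (by fun_prop)
      fun s hs ↦ add_one_ne_zero hs
    simpa using hs
  have hf := tendsto_zero_of_continuousOn_laplaceTransform hM0 hfM hfmono hGc' hfG
  have := (hf.add_const c).comp Real.tendsto_log_atTop
  rw [zero_add] at this
  refine this.congr' ?_
  filter_upwards [eventually_gt_atTop 0] with x hx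
  simp only [f, Function.comp_apply, sub_add_cancel]
  rw [Real.exp_neg, Real.exp_log hx, div_eq_mul_inv]

theorem riemannZeta₁_ne_zero_of_one_le_re {s : ℂ} (hs : 1 ≤ s.re) : riemannZeta₁ s ≠ 0 := by
  rcases eq_or_ne s 1 with rfl | hs1
  · simp
  · have h := riemannZeta_ne_zero_of_one_le_re hs
    rw [riemannZeta_eq_inv_sub_mul hs1] at h
    exact right_ne_zero_of_mul h

theorem continuousOn_logDeriv_riemannZeta₁ :
    ContinuousOn (logDeriv riemannZeta₁) {s | 1 ≤ s.re} :=
  .div (differentiable_riemannZeta₁.contDiff.continuous_deriv le_top).continuousOn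
    differentiable_riemannZeta₁.continuous.continuousOn
    fun _ ↦ riemannZeta₁_ne_zero_of_one_le_re

theorem LSeries_vonMangoldt_eq_inv_sub_logDeriv {s : ℂ} (hs : 1 < s.re) :
    LSeries (fun n ↦ (ArithmeticFunction.vonMangoldt n : ℂ)) s =
      1 / (s - 1) - logDeriv riemannZeta₁ s := by
  have hs1 : s ≠ 1 := by
    rintro rfl
    simp at hs
  have := sub_ne_zero.2 hs1
  have := riemannZeta₁_ne_zero_of_one_le_re hs.le
  rw [ArithmeticFunction.LSeries_vonMangoldt_eq_deriv_riemannZeta_div hs,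
    deriv_riemannZeta_eq_neg_inv_sub_sq_mul_add hs1, riemannZeta_eq_inv_sub_mul hs1,
    logDeriv_apply]
  field_simp
  ring

theorem LSeries_vonMangoldt_eq_mul_integral_psi {s : ℂ} (hs : 1 < s.re) :
    LSeries (fun n ↦ (ArithmeticFunction.vonMangoldt n : ℂ)) s =
      s * ∫ x in Ioi (1 : ℝ), (Chebyshev.psi x : ℂ) * (x : ℂ) ^ (-(s + 1)) := by
  have hpsi (n : ℕ) :
      ∑ k ∈ Finset.Icc 1 n, ArithmeticFunction.vonMangoldt k = Chebyshev.psi n := by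
    simp [Chebyshev.psi, ← Finset.Icc_add_one_left_eq_Ioc]
  rw [LSeries_eq_mul_integral_of_nonneg _ zero_le_one hs _
    fun _ ↦ ArithmeticFunction.vonMangoldt_nonneg]
  · congr! 4 with x
    rw [Chebyshev.psi_eq_psi_coe_floor, ← hpsi, Complex.ofReal_sum]
  · simp_rw [hpsi, Real.rpow_one]
    refine Asymptotics.IsBigO.of_bound (Real.log 4 + 4) (.of_forall fun n ↦ ?_)
    rw [Real.norm_of_nonneg (Chebyshev.psi_nonneg _), Real.norm_of_nonneg n.cast_nonneg]
    exact Chebyshev.psi_le_const_mul_self n.cast_nonneg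

theorem tendsto_psi_div : Tendsto (fun x ↦ Chebyshev.psi x / x) atTop (𝓝 1) := by
  refine tendsto_div_of_continuousOn_mellin (Chebyshev.psi_mono.monotoneOn _)
    (fun x _ ↦ Chebyshev.psi_nonneg x)
    (fun x hx ↦ Chebyshev.psi_le_const_mul_self (zero_le_one.trans hx.le))
    continuousOn_logDeriv_riemannZeta₁.neg fun s hs ↦ ?_
  rw [← LSeries_vonMangoldt_eq_mul_integral_psi hs, LSeries_vonMangoldt_eq_inv_sub_logDeriv hs,
    Complex.ofReal_one, Pi.neg_apply, sub_eq_add_neg]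

theorem tendsto_theta_div : Tendsto (fun x ↦ Chebyshev.theta x / x) atTop (𝓝 1) := by
  have h : Tendsto (fun x ↦ (Chebyshev.psi x - Chebyshev.theta x) / x) atTop (𝓝 0) := by
    refine (Chebyshev.isBigO_psi_sub_theta_sqrt.trans_isLittleO ?_).tendsto_div_nhds_zero
    refine (Asymptotics.isLittleO_iff_tendsto' ?_).2 ?_
    · filter_upwards [eventually_gt_atTop 0] with x hx h using absurd h hx.ne'
    · refine (tendsto_inv_atTop_zero.comp Real.tendsto_sqrt_atTop).congr fun x ↦ ?_
      rw [Real.sqrt_div_self, Function.comp_apply]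
  simpa [sub_div] using! tendsto_psi_div.sub h

/-- The **prime number theorem**. -/
theorem tendsto_primeCounting_mul_log_div :
    Tendsto (fun n : ℕ ↦ (Nat.primeCounting n : ℝ) * Real.log n / n) atTop (𝓝 1) := by
  have h := tendsto_theta_div.add
    Chebyshev.integral_theta_div_log_sq_isLittleO.tendsto_div_nhds_zero
  rw [add_zero] at h
  refine (h.comp tendsto_natCast_atTop_atTop).congr' ?_
  filter_upwards [eventually_ge_atTop 2] with n hn
  have hn2 : (2 : ℝ) ≤ n := by exact_mod_cast hn
  have hlog : 0 < Real.log n := Real.log_pos (by linarith)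
  have hpi := Chebyshev.primeCounting_eq_theta_div_log_add_integral hn2
  rw [Nat.floor_natCast] at hpi
  rw [hpi, Function.comp_apply]
  field_simp

theorem ncard_primes_inter_Icc (N : ℕ) :
    ({p : ℕ | Nat.Prime p} ∩ Icc 1 N).ncard = Nat.primeCounting N := by
  rw [← Nat.primesLE_card_eq_primeCounting, ← ncard_coe_finset]
  congr 1
  ext q
  simp only [mem_inter_iff, mem_ofPred_eq, mem_Icc, Finset.mem_coe, Nat.mem_primesLE]
  exact ⟨fun h ↦ ⟨h.2.2, h.1⟩, fun h ↦ ⟨h.2, h.2.one_le, h.1⟩⟩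

theorem tendsto_ncard_mul_log_div_of_density {A : Set ℕ} {θ : ℝ}
    (hdens : Tendsto (fun N : ℕ ↦
      ((A ∩ Icc 1 N).ncard : ℝ) / (({p : ℕ | Nat.Prime p} ∩ Icc 1 N).ncard : ℝ)) atTop (𝓝 θ)) :
    Tendsto (fun N : ℕ ↦ ((A ∩ Icc 1 N).ncard : ℝ) * Real.log N / N) atTop (𝓝 θ) := by
  have h := hdens.mul tendsto_primeCounting_mul_log_div
  rw [mul_one] at h
  refine h.congr' ?_
  filter_upwards [Nat.tendsto_primeCounting.eventually_gt_atTop 0] with N hN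
  have hpi : (Nat.primeCounting N : ℝ) ≠ 0 := by exact_mod_cast hN.ne'
  rw [ncard_primes_inter_Icc]
  field_simp

theorem ncard_inter_Icc_of_enumeration {A : Set ℕ} (hA : 0 ∉ A) {p : ℕ → ℕ}
    (hmono : StrictMonoOn p {j : ℕ | 1 ≤ j}) (hmem : ∀ j : ℕ, 1 ≤ j → p j ∈ A)
    (hsurj : ∀ q ∈ A, ∃ j : ℕ, 1 ≤ j ∧ p j = q) {j : ℕ} (hj : 1 ≤ j) :
    (A ∩ Icc 1 (p j)).ncard = j := by
  have himg : A ∩ Icc 1 (p j) = p '' Icc 1 j := by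
    ext q
    constructor
    · rintro ⟨hq, -, hqj⟩
      obtain ⟨i, hi, rfl⟩ := hsurj q hq
      exact ⟨i, ⟨hi, (hmono.le_iff_le hi hj).1 hqj⟩, rfl⟩
    · rintro ⟨i, ⟨hi, hij⟩, rfl⟩
      have hpi : p i ≠ 0 := fun h ↦ hA (h ▸ hmem i hi)
      exact ⟨hmem i hi, Nat.one_le_iff_ne_zero.2 hpi, (hmono.le_iff_le hi hj).2 hij⟩
  rw [himg, (hmono.injOn.mono fun i hi ↦ hi.1).ncard_image, ← Finset.coe_Icc,
    ncard_coe_finset, Nat.card_Icc, Nat.add_sub_cancel]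

theorem tendsto_atTop_of_strictMonoOn {p : ℕ → ℕ} (hmono : StrictMonoOn p {j : ℕ | 1 ≤ j}) :
    Tendsto p atTop atTop := by
  have : StrictMono fun j ↦ p (j + 1) := fun i j hij ↦
    hmono i.succ_pos j.succ_pos (Nat.add_lt_add_right hij 1)
  exact (tendsto_add_atTop_iff_nat 1).1 this.tendsto_atTop

theorem tendsto_log_div_log_of_tendsto_mul_log_div {p : ℕ → ℝ} (hp : Tendsto p atTop atTop)
    {θ : ℝ} (hθ : 0 < θ)
    (h : Tendsto (fun j : ℕ ↦ (j : ℝ) * Real.log (p j) / p j) atTop (𝓝 θ)) :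
    Tendsto (fun j : ℕ ↦ Real.log j / Real.log (p j)) atTop (𝓝 1) := by
  have hlogp : Tendsto (fun j ↦ Real.log (p j)) atTop atTop := Real.tendsto_log_atTop.comp hp
  have hloglog : Tendsto (fun j ↦ Real.log (Real.log (p j)) / Real.log (p j)) atTop (𝓝 0) :=
    Real.isLittleO_log_id_atTop.tendsto_div_nhds_zero.comp hlogp
  have hlim := (((h.log hθ.ne').div_atTop hlogp).sub hloglog).add_const 1
  rw [sub_zero, zero_add] at hlim
  refine hlim.congr' ?_
  filter_upwards [eventually_gt_atTop 0, hp.eventually_gt_atTop 0,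
    hlogp.eventually_gt_atTop 0] with j hj hpj hlj
  have hj' : (0 : ℝ) < j := by exact_mod_cast hj
  rw [Real.log_div (by positivity) hpj.ne', Real.log_mul hj'.ne' hlj.ne']
  field_simp
  ring

theorem tendsto_mul_div_mul_log_of_tendsto_mul_log_div {p : ℕ → ℝ} (hp : Tendsto p atTop atTop)
    {θ : ℝ} (hθ : 0 < θ)
    (h : Tendsto (fun j : ℕ ↦ (j : ℝ) * Real.log (p j) / p j) atTop (𝓝 θ)) :
    Tendsto (fun j : ℕ ↦ θ * p j / ((j : ℝ) * Real.log j)) atTop (𝓝 1) := by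
  have hlim := (tendsto_const_nhds (x := θ)).div
    (h.mul (tendsto_log_div_log_of_tendsto_mul_log_div hp hθ h)) (by simpa using hθ.ne')
  rw [mul_one, div_self hθ.ne'] at hlim
  refine hlim.congr' ?_
  filter_upwards [hp.eventually_gt_atTop 0,
    (Real.tendsto_log_atTop.comp hp).eventually_gt_atTop 0] with j hpj (hlj : 0 < Real.log (p j))
  simp only [Pi.div_apply]
  field_simp

theorem nth_prime_in_A_asymp_general {A : Set ℕ} (hA : 0 ∉ A) {θ : ℝ} (hθ : 0 < θ)
    (hdens : Tendsto (fun N : ℕ ↦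
      ((A ∩ Icc 1 N).ncard : ℝ) / (({p : ℕ | Nat.Prime p} ∩ Icc 1 N).ncard : ℝ)) atTop (𝓝 θ))
    {p : ℕ → ℕ} (hmono : StrictMonoOn p {j : ℕ | 1 ≤ j}) (hmem : ∀ j : ℕ, 1 ≤ j → p j ∈ A)
    (hsurj : ∀ q ∈ A, ∃ j : ℕ, 1 ≤ j ∧ p j = q) :
    Tendsto (fun j : ℕ ↦ θ * (p j : ℝ) / ((j : ℝ) * Real.log j)) atTop (𝓝 1) := by
  have hp := tendsto_atTop_of_strictMonoOn hmono
  refine tendsto_mul_div_mul_log_of_tendsto_mul_log_div (tendsto_natCast_atTop_atTop.comp hp) hθ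
    (((tendsto_ncard_mul_log_div_of_density hdens).comp hp).congr' ?_)
  filter_upwards [eventually_ge_atTop 1] with j hj
  simp only [Function.comp_apply, ncard_inter_Icc_of_enumeration hA hmono hmem hsurj hj]

end

/-- If `A` is an infinite set of primes with natural density `θ ∈ (0,1]` within the primes,
and `p 1 < p 2 < ⋯` enumerates `A` in increasing order, then `p j ∼ (j log j)/θ`
as `j → ∞`. -/
theorem nth_prime_in_A_asymp
    (A : Set ℕ) (hA : ∀ p ∈ A, Nat.Prime p) (hAinf : A.Infinite)
    (θ : ℝ) (hθ : θ ∈ Set.Ioc (0 : ℝ) 1)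
    (hdens : Tendsto
      (fun N : ℕ => ((A ∩ Set.Icc 1 N).ncard : ℝ) / (({p : ℕ | Nat.Prime p} ∩ Set.Icc 1 N).ncard : ℝ))
      atTop (nhds θ))
    (p : ℕ → ℕ)
    (hmono : StrictMonoOn p {j : ℕ | 1 ≤ j})
    (hmem : ∀ j : ℕ, 1 ≤ j → p j ∈ A)
    (hsurj : ∀ q ∈ A, ∃ j : ℕ, 1 ≤ j ∧ p j = q) :
    Tendsto (fun j : ℕ => θ * (p j : ℝ) / ((j : ℝ) * Real.log j)) atTop (nhds 1) := by
  exact nth_prime_in_A_asymp_general (fun h ↦ Nat.not_prime_zero (hA 0 h)) hθ.1 hdens hmono hmem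
    hsurj
end

section
/- Let A be an infinite subset of the prime numbers whose natural density in the primes exists and equals θ ∈ (0,1], and let p_{1;A} < p_{2;A} < ⋯ be the enumeration of A in increasing order. Then ∑_{j=1}^{N} (log p_{j;A})/(p_{j;A} − 1) ∼ θ · log N as N → ∞, and likewise ∑_{j=1}^{N} (log p_{j;A})/p_{j;A} ∼ θ · log N as N → ∞. -/
open Filter

/-!
By Legendre's formula, comparing `log n!` with `n log n` gives Mertens' first theorem
`∑_{q ≤ n} (log q) / q = log n + O(1)` over the primes `q`. Since `log k / k` is eventually
antitone, summation by parts lets `A` inherit its share `θ` of this sum from its natural density: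
`∑_{a ∈ A, a ≤ n} (log a) / a ∼ θ log n`. Replacing `a` by `a - 1` in the denominator changes the
sum by `O(1)` only. Finally `A` has `∼ θ π(n)` elements up to `n` and `π(n) = n ^ (1 + o(1))` by
Chebyshev, so `log p_N ∼ log N`, and one may put `n = p_N`.
-/

open Asymptotics Finset
open Real (log)
open scoped Topology

/-- The partial sum `∑ f a` over the `a ∈ A` with `1 ≤ a ≤ n`. The indicator function stands in for
a filtered sum, so that `A` needs no decidable membership. -/
noncomputable def sumUpTo (A : Set ℕ) (f : ℕ → ℝ) (n : ℕ) : ℝ :=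
  ∑ k ∈ Icc 1 n, A.indicator f k

/-- `A` has natural density `θ` relative to `B`: the number of elements of `A` in `[1, n]`, divided
by that of `B`, tends to `θ`. It is not required that `A ⊆ B`. -/
def HasRelDensity (A B : Set ℕ) (θ : ℝ) : Prop :=
  Tendsto (fun n : ℕ ↦ ((A ∩ Set.Icc 1 n).ncard : ℝ) / ((B ∩ Set.Icc 1 n).ncard : ℝ)) atTop (𝓝 θ)

/-! ### Summation by parts against an eventually antitone weight -/

theorem sum_Icc_mul_sub_le_of_antitoneOn {R : Type*} [CommRing R] [LinearOrder R]
    [IsStrictOrderedRing R] {f d : ℕ → R} {l m n : ℕ} (hl : l ≤ m + 1)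
    (hf : AntitoneOn f (Set.Ici m)) (hf_nonneg : ∀ k, m ≤ k → 0 ≤ f k)
    (hd : ∀ k, m ≤ k → 0 ≤ ∑ i ∈ Icc l k, d i) (hmn : m ≤ n) :
    ∑ k ∈ Icc l m, d k * f k - (∑ k ∈ Icc l m, d k) * f m ≤ ∑ k ∈ Icc l n, d k * f k := by
  suffices h : ∑ k ∈ Icc l m, d k * f k - (∑ k ∈ Icc l m, d k) * f m + (∑ k ∈ Icc l n, d k) * f n ≤
      ∑ k ∈ Icc l n, d k * f k from
    (le_add_of_nonneg_right (mul_nonneg (hd n hmn) (hf_nonneg n hmn))).trans h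
  induction n, hmn using Nat.le_induction with
  | base => simp
  | succ n hmn ih =>
    have hstep := mul_le_mul_of_nonneg_left
      (hf hmn (Set.mem_Ici.2 (by omega : m ≤ n + 1)) n.le_succ) (hd n hmn)
    rw [sum_Icc_succ_top (by omega) (fun k ↦ d k * f k), sum_Icc_succ_top (by omega) d, add_mul]
    linarith

section WeightedSums

variable {f a b : ℕ → ℝ} {l m : ℕ}

theorem eventually_sum_Icc_mul_le_of_antitoneOn (hf : AntitoneOn f (Set.Ici m))
    (hf_nonneg : ∀ k, m ≤ k → 0 ≤ f k)
    (hbf : Tendsto (fun n ↦ ∑ k ∈ Icc l n, b k * f k) atTop atTop) {c c' : ℝ} (hc : c < c')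
    (hab : ∀ᶠ n in atTop, ∑ k ∈ Icc l n, a k ≤ c * ∑ k ∈ Icc l n, b k) :
    ∀ᶠ n in atTop, ∑ k ∈ Icc l n, a k * f k ≤ c' * ∑ k ∈ Icc l n, b k * f k := by
  obtain ⟨M, hlM, hmM, hM⟩ := ((eventually_ge_atTop l).and
    ((eventually_ge_atTop m).and (eventually_forall_ge_atTop.2 hab))).exists
  have hbound {n : ℕ} (hn : M ≤ n) := sum_Icc_mul_sub_le_of_antitoneOn (l := l) (n := n)
    (d := fun k ↦ c * b k - a k) (by omega)
    (hf.mono (Set.Ici_subset_Ici.2 hmM)) (fun k hk ↦ hf_nonneg k (hmM.trans hk))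
    (fun k hk ↦ by
      rw [sum_sub_distrib, ← mul_sum]
      linarith [hM k hk]) hn
  have hlarge := (hbf.const_mul_atTop (sub_pos.2 hc)).eventually_ge_atTop
    (-(∑ k ∈ Icc l M, (c * b k - a k) * f k - (∑ k ∈ Icc l M, (c * b k - a k)) * f M))
  filter_upwards [eventually_ge_atTop M, hlarge] with n hn hlarge
  have h := hbound hn
  simp only [sub_mul _ _ (f _), mul_assoc c, sum_sub_distrib, ← mul_sum] at h hlarge
  linarith

theorem isLittleO_sum_Icc_mul_of_antitoneOn (hf : AntitoneOn f (Set.Ici m))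
    (hf_nonneg : ∀ k, m ≤ k → 0 ≤ f k) (hb : ∀ᶠ n in atTop, 0 ≤ ∑ k ∈ Icc l n, b k)
    (hbf : Tendsto (fun n ↦ ∑ k ∈ Icc l n, b k * f k) atTop atTop)
    (hab : (fun n ↦ ∑ k ∈ Icc l n, a k) =o[atTop] fun n ↦ ∑ k ∈ Icc l n, b k) :
    (fun n ↦ ∑ k ∈ Icc l n, a k * f k) =o[atTop] fun n ↦ ∑ k ∈ Icc l n, b k * f k := by
  refine isLittleO_iff.2 fun ε hε ↦ ?_
  have habs : ∀ᶠ n in atTop, |∑ k ∈ Icc l n, a k| ≤ ε / 2 * ∑ k ∈ Icc l n, b k := by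
    filter_upwards [hb, hab.bound (half_pos hε)] with n hn h
    rwa [Real.norm_eq_abs, Real.norm_of_nonneg hn] at h
  have hupper := eventually_sum_Icc_mul_le_of_antitoneOn hf hf_nonneg hbf (half_lt_self hε)
    (habs.mono fun n ↦ (le_abs_self _).trans)
  have hlower := eventually_sum_Icc_mul_le_of_antitoneOn (a := fun k ↦ -a k) hf hf_nonneg hbf
    (half_lt_self hε) (habs.mono fun n h ↦ by
      rw [sum_neg_distrib]
      exact (neg_le_abs _).trans h)
  filter_upwards [hupper, hlower, hbf.eventually_ge_atTop 0] with n hupper hlower hn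
  simp only [neg_mul, sum_neg_distrib] at hlower
  rw [Real.norm_eq_abs, Real.norm_of_nonneg hn]
  exact abs_le.2 ⟨by linarith, hupper⟩

end WeightedSums

/-! ### Partial sums over a set and relative density -/

theorem ncard_inter_Icc_eq_sumUpTo (A : Set ℕ) (n : ℕ) :
    ((A ∩ Set.Icc 1 n).ncard : ℝ) = sumUpTo A 1 n := by
  classical
  have hcoe : A ∩ Set.Icc 1 n = ({k ∈ Icc 1 n | k ∈ A} : Finset ℕ) := by
    ext k
    simp only [Set.mem_inter_iff, Set.mem_Icc, coe_filter, mem_Icc, Set.mem_ofPred_eq, and_comm]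
  rw [hcoe, Set.ncard_coe_finset, card_filter, sumUpTo]
  push_cast
  exact sum_congr rfl fun k _ ↦ by simp [Set.indicator_apply]

theorem sumUpTo_eq_sum_indicator_one_mul (A : Set ℕ) (f : ℕ → ℝ) (n : ℕ) :
    sumUpTo A f n = ∑ k ∈ Icc 1 n, A.indicator 1 k * f k :=
  sum_congr rfl fun k _ ↦ by by_cases hk : k ∈ A <;> simp [hk]

theorem sumUpTo_eq_zero_of_inter_Icc_eq_empty {A : Set ℕ} {n : ℕ} (hA : A ∩ Set.Icc 1 n = ∅)
    (f : ℕ → ℝ) : sumUpTo A f n = 0 :=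
  sum_eq_zero fun k hk ↦ Set.indicator_of_notMem
    (fun hkA ↦ (Set.ext_iff.1 hA k).1 ⟨hkA, mem_Icc.1 hk⟩) f

theorem isBigO_sumUpTo_sub_sumUpTo_of_summable (A : Set ℕ) {f g : ℕ → ℝ}
    (hfg : Summable fun k ↦ f k - g k) :
    (fun n ↦ sumUpTo A f n - sumUpTo A g n) =O[atTop] fun _ ↦ (1 : ℝ) := by
  refine IsBigO.of_bound (∑' k, |f k - g k|) (Eventually.of_forall fun n ↦ ?_)
  rw [norm_one, mul_one, Real.norm_eq_abs]
  calc |sumUpTo A f n - sumUpTo A g n|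
    _ = |∑ k ∈ Icc 1 n, A.indicator (fun k ↦ f k - g k) k| := by
        simp only [sumUpTo, ← sum_sub_distrib, Set.indicator_sub]
    _ ≤ ∑ k ∈ Icc 1 n, |A.indicator (fun k ↦ f k - g k) k| := abs_sum_le_sum_abs _ _
    _ ≤ ∑ k ∈ Icc 1 n, |f k - g k| :=
        sum_le_sum fun k _ ↦ norm_indicator_le_norm_self (fun k ↦ f k - g k) k
    _ ≤ ∑' k, |f k - g k| := hfg.abs.sum_le_tsum _ fun _ _ ↦ abs_nonneg _

namespace HasRelDensity

variable {A B : Set ℕ} {θ : ℝ}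

theorem isLittleO_sumUpTo_sub {f : ℕ → ℝ} {m : ℕ} (hAB : HasRelDensity A B θ)
    (hf : AntitoneOn f (Set.Ici m)) (hf_nonneg : ∀ k, m ≤ k → 0 ≤ f k)
    (hBf : Tendsto (sumUpTo B f) atTop atTop) :
    (fun n ↦ sumUpTo A f n - θ * sumUpTo B f n) =o[atTop] sumUpTo B f := by
  have hcount : (fun n ↦ sumUpTo A 1 n - θ * sumUpTo B 1 n) =o[atTop] sumUpTo B 1 := by
    have hne : ∀ᶠ n in atTop, sumUpTo B 1 n ≠ 0 := by
      filter_upwards [hBf.eventually_ne_atTop 0] with n hn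
      contrapose! hn
      rw [← ncard_inter_Icc_eq_sumUpTo, Nat.cast_eq_zero,
        Set.ncard_eq_zero ((Set.finite_Icc 1 n).inter_of_right B)] at hn
      exact sumUpTo_eq_zero_of_inter_Icc_eq_empty hn f
    rw [isLittleO_iff_tendsto' (hne.mono fun n hn h ↦ absurd h hn)]
    have hlim := Tendsto.sub_const hAB θ
    rw [sub_self] at hlim
    refine hlim.congr' (hne.mono fun n hn ↦ ?_)
    beta_reduce
    rw [ncard_inter_Icc_eq_sumUpTo, ncard_inter_Icc_eq_sumUpTo, sub_div, mul_div_cancel_right₀ _ hn]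
  have hsub (f : ℕ → ℝ) (n : ℕ) : sumUpTo A f n - θ * sumUpTo B f n =
      ∑ k ∈ Icc 1 n, (A.indicator 1 k - θ * B.indicator 1 k) * f k := by
    simp only [sumUpTo_eq_sum_indicator_one_mul, mul_sum, ← sum_sub_distrib, sub_mul, mul_assoc]
  simp only [hsub, Pi.one_apply, mul_one] at hcount ⊢
  simp only [funext (sumUpTo_eq_sum_indicator_one_mul B f)] at hBf ⊢
  refine isLittleO_sum_Icc_mul_of_antitoneOn hf hf_nonneg (Eventually.of_forall fun n ↦ ?_) hBf
    hcount
  exact sum_nonneg fun k _ ↦ Set.indicator_nonneg (fun _ _ ↦ zero_le_one) k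

theorem isEquivalent_log_ncard (hAB : HasRelDensity A B θ) (hθ : θ ≠ 0)
    (hB : Tendsto (fun n : ℕ ↦ ((B ∩ Set.Icc 1 n).ncard : ℝ)) atTop atTop) :
    (fun n : ℕ ↦ log (A ∩ Set.Icc 1 n).ncard) ~[atTop]
      fun n : ℕ ↦ log (B ∩ Set.Icc 1 n).ncard := by
  have hbounded : (fun n : ℕ ↦ log (A ∩ Set.Icc 1 n).ncard - log (B ∩ Set.Icc 1 n).ncard)
      =O[atTop] fun _ ↦ (1 : ℝ) := by
    refine ((Tendsto.log hAB hθ).congr' ?_).isBigO_one ℝ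
    filter_upwards [hAB.eventually_ne hθ] with n hn
    exact Real.log_div (div_ne_zero_iff.1 hn).1 (div_ne_zero_iff.1 hn).2
  exact hbounded.trans_isLittleO (Real.isLittleO_const_log_atTop.comp_tendsto hB)

end HasRelDensity

/-! ### Mertens' first theorem -/

theorem tendsto_log_natCast_atTop : Tendsto (fun n : ℕ ↦ log n) atTop atTop :=
  Real.tendsto_log_atTop.comp tendsto_natCast_atTop_atTop

theorem isLittleO_one_log_natCast : (fun _ ↦ (1 : ℝ)) =o[atTop] fun n : ℕ ↦ log n :=
  Real.isLittleO_const_log_atTop.comp_tendsto tendsto_natCast_atTop_atTop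

-- For `k = 0` and `k = 1` both sides are `0`, because `log 0 = 0` and `log 1 = 0`.
theorem log_div_self_le_log_div_sub_one (k : ℕ) : log k / k ≤ log k / ((k : ℝ) - 1) := by
  rcases Nat.lt_or_ge k 2 with hk | hk
  · interval_cases k <;> simp
  · have hk' : (2 : ℝ) ≤ k := by exact_mod_cast hk
    exact div_le_div_of_nonneg_left (Real.log_natCast_nonneg k) (by linarith) (by linarith)

theorem log_div_sub_one_sub_log_div_self_le {x : ℝ} (hx : 2 ≤ x) :
    log x / (x - 1) - log x / x ≤ 4 * (1 / x ^ (3 / 2 : ℝ)) := by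
  have hx₀ : 0 < x := by linarith
  have hx₁ : x - 1 ≠ 0 := by linarith
  have hpow : x ^ (1 / 2 : ℝ) * x ^ (3 / 2 : ℝ) = x * x := by
    rw [← Real.rpow_add hx₀, ← sq, ← Real.rpow_two]
    norm_num
  calc log x / (x - 1) - log x / x
    _ = log x / ((x - 1) * x) := by
        field_simp
        ring
    _ ≤ x ^ (1 / 2 : ℝ) / (1 / 2) / (x / 2 * x) := by
        gcongr
        · exact Real.log_le_rpow_div hx₀.le (by norm_num)
        · linarith
    _ = 4 * (1 / x ^ (3 / 2 : ℝ)) := by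
        field_simp
        linear_combination 4 * hpow

theorem summable_log_div_sub_one_sub_log_div_self :
    Summable fun k : ℕ ↦ log k / ((k : ℝ) - 1) - log k / k := by
  refine Summable.of_norm_bounded_eventually_nat
    ((Real.summable_one_div_nat_rpow.2 (by norm_num : (1 : ℝ) < 3 / 2)).mul_left 4) ?_
  filter_upwards [eventually_ge_atTop 2] with k hk
  rw [Real.norm_of_nonneg (sub_nonneg.2 (log_div_self_le_log_div_sub_one k))]
  exact log_div_sub_one_sub_log_div_self_le (by exact_mod_cast hk)

theorem log_factorial_eq_sum_primesLE (n : ℕ) :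
    log n.factorial = ∑ q ∈ n.primesLE, (n.factorial.factorization q : ℝ) * log q := by
  rw [Real.log_nat_eq_sum_factorization]
  refine Finsupp.sum_of_support_subset _ (fun q hq ↦ ?_) _ (by simp)
  rw [Nat.support_factorization, Nat.mem_primeFactors] at hq
  exact Nat.mem_primesLE.2 ⟨hq.1.dvd_factorial.1 hq.2.1, hq.1⟩

theorem mul_log_sub_self_le_log_factorial (n : ℕ) : n * log n - n ≤ log n.factorial := by
  rcases eq_or_ne n 0 with rfl | hn
  · simp
  have hexp : (n : ℝ) ^ n / n.factorial ≤ Real.exp n :=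
    Real.pow_div_factorial_le_exp _ n.cast_nonneg n
  have hlog := Real.log_le_log (by positivity) hexp
  rw [Real.log_exp, Real.log_div (by positivity) (by positivity), Real.log_pow] at hlog
  linarith

theorem log_factorial_le_mul_log (n : ℕ) : log n.factorial ≤ n * log n := by
  rw [← Real.log_pow]
  exact Real.log_le_log (by positivity) (by exact_mod_cast n.factorial_le_pow)

theorem div_le_factorization_factorial {q : ℕ} (hq : q.Prime) (n : ℕ) :
    n / q ≤ n.factorial.factorization q :=
  calc n / q
    _ ≤ (n / q).factorial.factorization q + n / q := Nat.le_add_left _ _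
    _ = (q * (n / q)).factorial.factorization q := (Nat.factorization_factorial_mul hq).symm
    _ ≤ n.factorial.factorization q :=
        (Nat.factorization_le_iff_dvd (Nat.factorial_ne_zero _) (Nat.factorial_ne_zero _)).2
          (Nat.factorial_dvd_factorial (Nat.mul_div_le n q)) q

theorem sum_primesLE_log_div_self_le {n : ℕ} (hn : n ≠ 0) :
    ∑ q ∈ n.primesLE, log q / q ≤ log n + log 4 := by
  have hn₀ : (0 : ℝ) < n := by positivity
  have hlegendre : ∑ q ∈ n.primesLE, ((n : ℝ) / q - 1) * log q ≤ log n.factorial := by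
    rw [log_factorial_eq_sum_primesLE]
    refine sum_le_sum fun q hq ↦
      mul_le_mul_of_nonneg_right ?_ (Real.log_natCast_nonneg q)
    have hfloor : (n : ℝ) / q < (n / q : ℕ) + 1 := by
      simpa only [Nat.floor_div_eq_div] using Nat.lt_floor_add_one ((n : ℝ) / q)
    have hval : ((n / q : ℕ) : ℝ) ≤ n.factorial.factorization q := by
      exact_mod_cast div_le_factorization_factorial (Nat.prime_of_mem_primesLE hq) n
    linarith
  have hsplit : ∑ q ∈ n.primesLE, ((n : ℝ) / q - 1) * log q =
      n * ∑ q ∈ n.primesLE, log q / q - Chebyshev.theta n := by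
    rw [Chebyshev.theta_eq_sum_primesLE_log, mul_sum, ← sum_sub_distrib]
    exact sum_congr rfl fun _ _ ↦ by ring
  refine le_of_mul_le_mul_left ?_ hn₀
  linarith [Chebyshev.theta_le_log4_mul_x hn₀.le, log_factorial_le_mul_log n]

theorem log_sub_one_le_sum_primesLE_log_div_sub_one {n : ℕ} (hn : n ≠ 0) :
    log n - 1 ≤ ∑ q ∈ n.primesLE, log q / ((q : ℝ) - 1) := by
  have hlegendre : log n.factorial ≤ n * ∑ q ∈ n.primesLE, log q / ((q : ℝ) - 1) := by
    rw [log_factorial_eq_sum_primesLE, mul_sum]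
    refine sum_le_sum fun q hq ↦ ?_
    have hq := Nat.prime_of_mem_primesLE hq
    have hval : (n.factorial.factorization q : ℝ) ≤ n / ((q : ℝ) - 1) :=
      calc (n.factorial.factorization q : ℝ)
        _ ≤ (n / (q - 1) : ℕ) := by exact_mod_cast Nat.factorization_factorial_le_div_pred hq n
        _ ≤ n / ((q : ℝ) - 1) := by
            simpa only [Nat.cast_pred hq.pos] using Nat.cast_div_le (α := ℝ) (m := n) (n := q - 1)
    calc (n.factorial.factorization q : ℝ) * log q
      _ ≤ n / ((q : ℝ) - 1) * log q := by gcongr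
      _ = n * (log q / ((q : ℝ) - 1)) := by ring
  refine le_of_mul_le_mul_left ?_ (by positivity : (0 : ℝ) < n)
  linarith [mul_log_sub_self_le_log_factorial n]

theorem isBigO_sum_primesLE_log_div_self_sub_log :
    (fun n : ℕ ↦ ∑ q ∈ n.primesLE, log q / q - log n) =O[atTop] fun _ ↦ (1 : ℝ) := by
  set C := ∑' k : ℕ, (log k / ((k : ℝ) - 1) - log k / k)
  have hC (n : ℕ) : ∑ q ∈ n.primesLE, (log q / ((q : ℝ) - 1) - log q / q) ≤ C :=
    summable_log_div_sub_one_sub_log_div_self.sum_le_tsum _ fun k _ ↦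
      sub_nonneg.2 (log_div_self_le_log_div_sub_one k)
  refine IsBigO.of_bound (max (log 4) (1 + C)) ?_
  filter_upwards [eventually_ne_atTop 0] with n hn
  have hlower := hC n
  rw [sum_sub_distrib] at hlower
  rw [norm_one, mul_one, Real.norm_eq_abs, abs_le]
  constructor
  · linarith [le_max_right (log 4) (1 + C), log_sub_one_le_sum_primesLE_log_div_sub_one hn]
  · linarith [le_max_left (log 4) (1 + C), sum_primesLE_log_div_self_le hn]

/-! ### Sets of given density relative to the primes -/

theorem sumUpTo_setOf_prime (f : ℕ → ℝ) (n : ℕ) :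
    sumUpTo {q | q.Prime} f n = ∑ q ∈ n.primesLE, f q := by
  rw [Nat.primesLE_eq_filter_Icc_one, sum_filter]
  exact sum_congr rfl fun k _ ↦ by simp [Set.indicator_apply]

theorem ncard_setOf_prime_inter_Icc (n : ℕ) :
    (({q | q.Prime} ∩ Set.Icc 1 n).ncard : ℝ) = n.primeCounting := by
  simp [ncard_inter_Icc_eq_sumUpTo, sumUpTo_setOf_prime, Nat.primesLE_card_eq_primeCounting]

theorem isEquivalent_sumUpTo_prime_log_div_self :
    sumUpTo {q | q.Prime} (fun k ↦ log k / k) ~[atTop] fun n : ℕ ↦ log n := by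
  rw [funext (sumUpTo_setOf_prime _)]
  exact isBigO_sum_primesLE_log_div_self_sub_log.trans_isLittleO isLittleO_one_log_natCast

theorem antitoneOn_log_div_self_natCast : AntitoneOn (fun k : ℕ ↦ log k / k) (Set.Ici 3) := by
  have hexp {k : ℕ} (hk : 3 ≤ k) : Real.exp 1 ≤ k :=
    Real.exp_one_lt_three.le.trans (by exact_mod_cast hk)
  exact fun i hi j hj hij ↦
    Real.log_div_self_antitoneOn (hexp hi) (hexp hj) (by exact_mod_cast hij)

namespace HasRelDensity

variable {A : Set ℕ} {θ : ℝ}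

theorem isEquivalent_sumUpTo_log_div_self (hA : HasRelDensity A {q | q.Prime} θ) (hθ : θ ≠ 0) :
    sumUpTo A (fun k ↦ log k / k) ~[atTop] fun n : ℕ ↦ θ * log n := by
  have hprimes := isEquivalent_sumUpTo_prime_log_div_self
  have hshare := hA.isLittleO_sumUpTo_sub antitoneOn_log_div_self_natCast
    (fun k _ ↦ div_nonneg (Real.log_natCast_nonneg k) k.cast_nonneg)
    (hprimes.symm.tendsto_atTop tendsto_log_natCast_atTop)
  refine IsLittleO.isEquivalent ((isLittleO_const_mul_right_iff hθ).2 ?_)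
  refine ((hshare.trans_isEquivalent hprimes).add (hprimes.isLittleO.const_mul_left θ)).congr_left
    fun n ↦ ?_
  simp only [Pi.sub_apply]
  ring

theorem isEquivalent_sumUpTo_log_div_sub_one (hA : HasRelDensity A {q | q.Prime} θ) (hθ : θ ≠ 0) :
    sumUpTo A (fun k ↦ log k / ((k : ℝ) - 1)) ~[atTop] fun n : ℕ ↦ θ * log n := by
  have hdiff := isBigO_sumUpTo_sub_sumUpTo_of_summable A summable_log_div_sub_one_sub_log_div_self
  have hsmall := (isLittleO_const_mul_right_iff hθ).2
    (hdiff.trans_isLittleO isLittleO_one_log_natCast)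
  exact (hsmall.add_isEquivalent (hA.isEquivalent_sumUpTo_log_div_self hθ)).congr_left
    (Eventually.of_forall fun n ↦ sub_add_cancel _ _)

end HasRelDensity

theorem div_log_div_four_le_primeCounting {n : ℕ} (hn : 4 ≤ n) :
    n / log n / 4 ≤ n.primeCounting := by
  have hn' : (4 : ℝ) ≤ n := by exact_mod_cast hn
  have hlog_succ : log (n + 1) ≤ (n + 1) / 4 - 1 + 2 * log 2 := by
    have h := Real.log_le_sub_one_of_pos (by positivity : 0 < ((n : ℝ) + 1) / 4)
    rw [Real.log_div (by positivity) (by norm_num),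
      (by norm_num : (4 : ℝ) = 2 ^ 2), Real.log_pow] at h
    push_cast at h
    linarith
  calc n / log n / 4
    _ = n / 4 / log n := div_right_comm _ _ _
    _ ≤ (n * log 2 - log (n + 1)) / log n := by
        gcongr
        nlinarith [Real.log_two_gt_d9, Real.log_two_lt_d9]
    _ ≤ n.primeCounting := Chebyshev.pi_ge n

theorem primeCounting_le_self (n : ℕ) : n.primeCounting ≤ n := by
  rw [← Nat.primesLE_card_eq_primeCounting, Nat.primesLE_eq_filter_Icc_one]
  exact (card_filter_le _ _).trans_eq (by simp)

theorem isEquivalent_log_primeCounting :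
    (fun n : ℕ ↦ log n.primeCounting) ~[atTop] fun n : ℕ ↦ log n := by
  have hloglog : (fun n : ℕ ↦ log (log n) + log 4) =o[atTop] fun n : ℕ ↦ log n :=
    (Real.isLittleO_log_id_atTop.comp_tendsto tendsto_log_natCast_atTop).add
      (Real.isLittleO_const_log_atTop.comp_tendsto tendsto_natCast_atTop_atTop)
  refine IsBigO.trans_isLittleO (IsBigO.of_bound' ?_) hloglog
  filter_upwards [eventually_ge_atTop 4, tendsto_log_natCast_atTop.eventually_gt_atTop 0]
    with n hn hlog
  have hlower := Real.log_le_log (by positivity) (div_log_div_four_le_primeCounting hn)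
  rw [Real.log_div (by positivity) (by norm_num), Real.log_div (by positivity) hlog.ne'] at hlower
  have hupper : log n.primeCounting ≤ log n := by
    refine Real.log_le_log ?_ (by exact_mod_cast primeCounting_le_self n)
    exact (by positivity : 0 < n / log n / 4).trans_le (div_log_div_four_le_primeCounting hn)
  rw [Pi.sub_apply, Real.norm_of_nonpos (by linarith)]
  exact le_trans (by linarith) (le_abs_self _)

/-! ### Passing to the enumeration -/

section Enumeration

variable {p : ℕ → ℕ}

theorem tendsto_atTop_of_strictMonoOn_Ici (hp : StrictMonoOn p (Set.Ici 1)) :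
    Tendsto p atTop atTop := by
  refine (tendsto_add_atTop_iff_nat 1).1 (StrictMono.tendsto_atTop fun i j hij ↦ ?_)
  exact hp (Nat.le_add_left 1 i) (Nat.le_add_left 1 j) (by omega)

theorem sum_Icc_comp_eq_sumUpTo (hp : StrictMonoOn p (Set.Ici 1)) (h0 : 0 ∉ p '' Set.Ici 1)
    (f : ℕ → ℝ) {N : ℕ} (hN : 1 ≤ N) :
    ∑ j ∈ Icc 1 N, f (p j) = sumUpTo (p '' Set.Ici 1) f (p N) := by
  classical
  have himage : (Icc 1 N).image p = {k ∈ Icc 1 (p N) | k ∈ p '' Set.Ici 1} := by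
    ext k
    simp only [mem_image, mem_filter, mem_Icc, Set.mem_image, Set.mem_Ici]
    constructor
    · rintro ⟨j, ⟨hj, hjN⟩, rfl⟩
      have hpj : p j ≠ 0 := fun h ↦ h0 ⟨j, hj, h⟩
      exact ⟨⟨Nat.one_le_iff_ne_zero.2 hpj, (hp.le_iff_le hj hN).2 hjN⟩, j, hj, rfl⟩
    · rintro ⟨⟨-, hk⟩, j, hj, rfl⟩
      exact ⟨j, ⟨hj, (hp.le_iff_le hj hN).1 hk⟩, rfl⟩
  have hinj : Set.InjOn p (Icc 1 N : Finset ℕ) := hp.injOn.mono fun j hj ↦ (mem_Icc.1 hj).1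
  rw [← sum_image (f := f) hinj, himage, sum_filter, sumUpTo]
  exact sum_congr rfl fun k _ ↦ (Set.indicator_apply _ _ _).symm

theorem isEquivalent_log_enumeration {θ : ℝ} (hp : StrictMonoOn p (Set.Ici 1))
    (h0 : 0 ∉ p '' Set.Ici 1) (hθ : θ ≠ 0)
    (hdens : HasRelDensity (p '' Set.Ici 1) {q | q.Prime} θ) :
    (fun N ↦ log (p N)) ~[atTop] fun N : ℕ ↦ log N := by
  have hcount := hdens.isEquivalent_log_ncard hθ (by
    simpa only [ncard_setOf_prime_inter_Icc, Function.comp_def] using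
      tendsto_natCast_atTop_atTop.comp Nat.tendsto_primeCounting)
  simp only [ncard_setOf_prime_inter_Icc] at hcount
  refine ((hcount.trans isEquivalent_log_primeCounting).comp_tendsto
    (tendsto_atTop_of_strictMonoOn_Ici hp)).symm.congr_right ?_
  filter_upwards [eventually_ge_atTop 1] with N hN
  rw [Function.comp_apply, ncard_inter_Icc_eq_sumUpTo, ← sum_Icc_comp_eq_sumUpTo hp h0 1 hN]
  simp

theorem tendsto_sum_Icc_comp_div_of_isEquivalent {θ : ℝ} {f : ℕ → ℝ}
    (hp : StrictMonoOn p (Set.Ici 1)) (h0 : 0 ∉ p '' Set.Ici 1) (hθ : θ ≠ 0)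
    (hdens : HasRelDensity (p '' Set.Ici 1) {q | q.Prime} θ)
    (hf : sumUpTo (p '' Set.Ici 1) f ~[atTop] fun n : ℕ ↦ θ * log n) :
    Tendsto (fun N : ℕ ↦ (∑ j ∈ Icc 1 N, f (p j)) / (θ * log N)) atTop (𝓝 1) := by
  have hsum : (fun N ↦ ∑ j ∈ Icc 1 N, f (p j)) ~[atTop] fun N : ℕ ↦ θ * log N := by
    refine ((hf.comp_tendsto (tendsto_atTop_of_strictMonoOn_Ici hp)).congr_left ?_).trans
      (IsEquivalent.refl.mul (isEquivalent_log_enumeration hp h0 hθ hdens))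
    filter_upwards [eventually_ge_atTop 1] with N hN
    exact (sum_Icc_comp_eq_sumUpTo hp h0 f hN).symm
  refine (isEquivalent_iff_tendsto_one ?_).1 hsum
  filter_upwards [tendsto_log_natCast_atTop.eventually_ne_atTop 0] with N hN
  exact mul_ne_zero hθ hN

end Enumeration

theorem log_prime_sums_asymp_general {A : Set ℕ} (hA : ∀ a ∈ A, 1 < a) {θ : ℝ} (hθ : θ ≠ 0)
    (hdens : HasRelDensity A {q | q.Prime} θ) {p : ℕ → ℕ} (hp : StrictMonoOn p (Set.Ici 1))
    (himage : p '' Set.Ici 1 = A) :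
    Tendsto (fun N : ℕ ↦ (∑ j ∈ Icc 1 N, log (p j) / ((p j : ℝ) - 1)) / (θ * log N)) atTop (𝓝 1) ∧
      Tendsto (fun N : ℕ ↦ (∑ j ∈ Icc 1 N, log (p j) / p j) / (θ * log N)) atTop (𝓝 1) := by
  subst himage
  have h0 : 0 ∉ p '' Set.Ici 1 := fun h ↦ absurd (hA 0 h) (by norm_num)
  exact ⟨tendsto_sum_Icc_comp_div_of_isEquivalent
      (f := fun k ↦ log k / ((k : ℝ) - 1)) hp h0 hθ hdens
      (hdens.isEquivalent_sumUpTo_log_div_sub_one hθ),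
    tendsto_sum_Icc_comp_div_of_isEquivalent
      (f := fun k ↦ log k / k) hp h0 hθ hdens
      (hdens.isEquivalent_sumUpTo_log_div_self hθ)⟩

/-- If `A` is an infinite set of primes with natural density `θ ∈ (0,1]` within the primes,
enumerated in increasing order as `p 1 < p 2 < ⋯`, then
`∑_{j=1}^N (log p j)/(p j - 1) ∼ θ log N` and `∑_{j=1}^N (log p j)/(p j) ∼ θ log N`
as `N → ∞`. -/
theorem log_prime_sums_asymp
    (A : Set ℕ) (hA : ∀ p ∈ A, Nat.Prime p) (hAinf : A.Infinite)
    (θ : ℝ) (hθ : θ ∈ Set.Ioc (0 : ℝ) 1)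
    (hdens : Tendsto
      (fun N : ℕ => ((A ∩ Set.Icc 1 N).ncard : ℝ) / (({p : ℕ | Nat.Prime p} ∩ Set.Icc 1 N).ncard : ℝ))
      atTop (nhds θ))
    (p : ℕ → ℕ)
    (hmono : StrictMonoOn p {j : ℕ | 1 ≤ j})
    (hmem : ∀ j : ℕ, 1 ≤ j → p j ∈ A)
    (hsurj : ∀ q ∈ A, ∃ j : ℕ, 1 ≤ j ∧ p j = q) :
    Tendsto
      (fun N : ℕ =>
        (∑ j ∈ Finset.Icc 1 N, Real.log (p j) / ((p j : ℝ) - 1)) / (θ * Real.log N))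
      atTop (nhds 1)
    ∧ Tendsto
      (fun N : ℕ =>
        (∑ j ∈ Finset.Icc 1 N, Real.log (p j) / (p j : ℝ)) / (θ * Real.log N))
      atTop (nhds 1) := by
  have himage : p '' Set.Ici 1 = A := (Set.image_subset_iff.2 hmem).antisymm hsurj
  exact log_prime_sums_asymp_general (fun a ha ↦ (hA a ha).one_lt) hθ.1.ne' hdens hmono himage
end
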